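/- Let f(n) = (1/2)·#{(x,y) ∈ ℤ² : x² + 2y² = n} for positive integers n and f(0) = 1. Then, as x → ∞, max_{n ≤ x} log f(f(n)) = (√(log x)/log₂ x)·( c/√2 + O(log₃ x / log₂ x) ), where c = (8·∑_{l=1}^∞ (log(1 + 1/l))²)^{1/2}. -/

import Mathlib

open Filter

/-- The normalized representation-counting function of the binary quadratic form `x² + 2y²`,
with the convention `f(0) = 1`. -/
noncomputable def fForm (n : ℕ) : ℕ :=
  if n = 0 then 1 else Nat.card {p : ℤ × ℤ // p.1 ^ 2 + 2 * p.2 ^ 2 = (n : ℤ)} / 2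

/-- The constant `c = (8·∑_{l=1}^∞ (log(1 + 1/l))²)^{1/2}`. -/
noncomputable def cBEFS : ℝ :=
  Real.sqrt (8 * ∑' l : ℕ, (Real.log (1 + 1 / ((l : ℝ) + 1))) ^ 2)

/-!
The value `f n` is the number of ideals of norm `n` in `ℤ[√-2]`: it is multiplicative, and the exact
power `p ^ k` of a prime contributes `k + 1` when `p` splits (`p ≡ 1, 3 mod 8`), and `0` or `1`
otherwise. Hence `log f(f(n)) = ∑ log (e q + 1)` over split primes `q`, where `e q` is the exponent
of `q` in `f n`. A factor `q` of `f n` forces a prime `p` to occur in `n` with exponent at least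
about `q - 1`; as the primes `p` are distinct, almost all of them have logarithm `(1 + o(1)) log y`,
where `y` is about `√(log n)`. So one maximises `∑ log (e q + 1)` subject to
`∑ e q * q ≤ log n / log y`. With the multiplier `1 / y`, the exponent of `q` is raised from `l - 1`
to `l` as long as `q ≤ y log (1 + 1 / l)`, and summing over split primes produces the constant
`∑ log (1 + 1 / l) ^ 2`.

The error term requires the count of split primes up to `z` to be known up to `O(z / log² z)`. The
`3-4-1` inequality bounds `ζ` and `L(·, ψ)` from below near the line `Re s = 1`, so that all
derivatives of the logarithmic derivative of `ζ(s) L(s, ψ)` are `O((|t| + 2) ^ ε)` there. Its second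
derivative has coefficients weighted by `log² n`, so that, once the pole is subtracted, the trivial
bound for the Riesz means of that series saves two logarithms; a Tauberian argument removes the
averaging.
-/

namespace IteratedForm

section MeanValue

open Complex MeasureTheory Topology

variable {a : ℕ → ℂ} {κ : ℂ} {M : ℝ} {K : ℕ} {s : ℂ}

/-- The error made in replacing `∑_{1 ≤ k ≤ u} a k` by `κ * u`, that is, in treating the
coefficients `a` as if they had the constant value `κ`. -/
noncomputable def meanError (a : ℕ → ℂ) (κ : ℂ) (u : ℝ) : ℂ :=
  (∑ k ∈ Finset.Icc 1 ⌊u⌋₊, a k) - κ * u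

/-- The integral `∫_K^∞ E(t) t^(-s-1) dt` of the error term `E = meanError a κ`, written as a
Mellin transform so that its holomorphy in `s` is a library fact. -/
noncomputable def errorTail (a : ℕ → ℂ) (κ : ℂ) (K : ℕ) (s : ℂ) : ℂ :=
  mellin ((Set.Ioi (K : ℝ)).indicator (meanError a κ)) (-s)

lemma norm_meanError_le (hM : ∀ n : ℕ, ‖meanError a κ n‖ ≤ M) {u : ℝ} (hu : 0 ≤ u) :
    ‖meanError a κ u‖ ≤ M + ‖κ‖ := by
  have hfloor : meanError a κ u = meanError a κ ⌊u⌋₊ - κ * ((u - ⌊u⌋₊ : ℝ) : ℂ) := by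
    simp only [meanError, Nat.floor_natCast]
    push_cast
    ring
  have hfract : ‖((u - ⌊u⌋₊ : ℝ) : ℂ)‖ ≤ 1 := by
    rw [Complex.norm_real, Real.norm_of_nonneg (sub_nonneg.2 (Nat.floor_le hu))]
    linarith [Nat.lt_floor_add_one u]
  calc ‖meanError a κ u‖ ≤ ‖meanError a κ ⌊u⌋₊‖ + ‖κ‖ * ‖((u - ⌊u⌋₊ : ℝ) : ℂ)‖ := by
        rw [hfloor, ← norm_mul]
        exact norm_sub_le _ _
    _ ≤ M + ‖κ‖ := add_le_add (hM _) (mul_le_of_le_one_right (norm_nonneg κ) hfract)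

lemma measurable_meanError : Measurable (meanError a κ) := by
  have hsum : Measurable fun u : ℝ ↦ ∑ k ∈ Finset.Icc 1 ⌊u⌋₊, a k :=
    (measurable_from_top (f := fun n : ℕ ↦ ∑ k ∈ Finset.Icc 1 n, a k)).comp Nat.measurable_floor
  unfold meanError
  fun_prop

lemma errorTail_eq_integral :
    errorTail a κ K s = ∫ t : ℝ in Set.Ioi (K : ℝ), (t : ℂ) ^ (-s - 1) * meanError a κ t := by
  have hIoi : Set.Ioi (0 : ℝ) ∩ Set.Ioi (K : ℝ) = Set.Ioi (K : ℝ) := by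
    rw [Set.Ioi_inter_Ioi, max_eq_right (Nat.cast_nonneg K)]
  rw [errorTail, mellin, ← hIoi, ← setIntegral_indicator measurableSet_Ioi, hIoi]
  congr! 2 with t
  by_cases ht : t ∈ Set.Ioi (K : ℝ) <;> simp [ht]

lemma norm_indicator_meanError_le (hM : ∀ n : ℕ, ‖meanError a κ n‖ ≤ M) (u : ℝ) :
    ‖(Set.Ioi (K : ℝ)).indicator (meanError a κ) u‖ ≤ M + ‖κ‖ := by
  by_cases hu : u ∈ Set.Ioi (K : ℝ)
  · rw [Set.indicator_of_mem hu]
    exact norm_meanError_le hM ((Nat.cast_nonneg K).trans (le_of_lt hu))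
  · rw [Set.indicator_of_notMem hu, norm_zero]
    linarith [norm_nonneg κ, (norm_nonneg _).trans (hM 0)]

lemma differentiableAt_errorTail (hK : 1 ≤ K) (hM : ∀ n : ℕ, ‖meanError a κ n‖ ≤ M)
    (hs : 0 < s.re) : DifferentiableAt ℂ (errorTail a κ K) s := by
  have hbound := norm_indicator_meanError_le (K := K) hM
  suffices DifferentiableAt ℂ (mellin ((Set.Ioi (K : ℝ)).indicator (meanError a κ))) (-s) from
    this.comp s differentiableAt_id.neg
  refine mellin_differentiableAt_of_isBigO_rpow (a := 0) (b := -s.re - 1) ?_ ?_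
    (by simpa using hs) ?_ (by simp)
  · refine (LocallyIntegrable.mono (locallyIntegrable_const (M + ‖κ‖))
      (measurable_meanError.indicator measurableSet_Ioi).aestronglyMeasurable
      (.of_forall fun u ↦ ?_)).locallyIntegrableOn _
    exact (hbound u).trans (le_abs_self _)
  · refine Asymptotics.IsBigO.of_bound (M + ‖κ‖) (.of_forall fun u ↦ ?_)
    simpa using hbound u
  · refine Asymptotics.IsBigO.of_bound 1 ?_
    filter_upwards [mem_nhdsWithin_of_mem_nhds (Iio_mem_nhds one_pos)] with u hu
    have hKu : u ∉ Set.Ioi (K : ℝ) :=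
      fun h ↦ absurd (lt_trans (Set.mem_Ioi.1 h) hu) (by simpa using Nat.one_le_iff_ne_zero.1 hK)
    rw [Set.indicator_of_notMem hKu, norm_zero]
    positivity

lemma norm_errorTail_le (hK : 1 ≤ K) (hM : ∀ n : ℕ, ‖meanError a κ n‖ ≤ M) (hs : 0 < s.re) :
    ‖errorTail a κ K s‖ ≤ (M + ‖κ‖) * ((K : ℝ) ^ (-s.re) / s.re) := by
  have hK0 : (0 : ℝ) < K := by exact_mod_cast hK
  have hintegral : ∫ t : ℝ in Set.Ioi (K : ℝ), (M + ‖κ‖) * t ^ (-s.re - 1) =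
      (M + ‖κ‖) * ((K : ℝ) ^ (-s.re) / s.re) := by
    rw [integral_const_mul, integral_Ioi_rpow_of_lt (by linarith) hK0, sub_add_cancel,
      neg_div_neg_eq]
  rw [errorTail_eq_integral, ← hintegral]
  refine norm_integral_le_of_norm_le
    ((integrableOn_Ioi_rpow_of_lt (by linarith) hK0).const_mul _)
    ((ae_restrict_mem measurableSet_Ioi).mono fun t ht ↦ ?_)
  have ht0 : 0 < t := hK0.trans ht
  rw [norm_mul, norm_cpow_eq_rpow_re_of_pos ht0, mul_comm, sub_re, neg_re, one_re]
  gcongr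
  exact norm_meanError_le hM ht0.le

lemma sum_mul_cpow_neg_eq_add_integral (a : ℕ → ℂ) (K : ℕ) (s : ℂ) :
    ∑ k ∈ Finset.Icc 1 K, a k * (k : ℂ) ^ (-s) = (∑ k ∈ Finset.Icc 1 K, a k) * (K : ℂ) ^ (-s) +
      s * ∫ t in Set.Ioc (1 : ℝ) K,
        (∑ k ∈ Finset.Icc 1 ⌊t⌋₊, a k) * (t : ℂ) ^ (-(s + 1)) := by
  rcases eq_or_ne s 0 with rfl | hs
  · simp
  set c : ℕ → ℂ := Function.update a 0 0 with hc
  have hc0 : c 0 = 0 := Function.update_self ..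
  have hsum (n : ℕ) (f : ℕ → ℂ) :
      ∑ k ∈ Finset.Icc 0 n, f k * c k = ∑ k ∈ Finset.Icc 1 n, f k * a k := by
    rw [Finset.Icc_eq_cons_Ioc n.zero_le, Finset.sum_cons, hc0, mul_zero, zero_add,
      ← Finset.Icc_add_one_left_eq_Ioc]
    refine Finset.sum_congr rfl fun k hk ↦ ?_
    rw [hc, Function.update_of_ne (by rw [Finset.mem_Icc] at hk; lia)]
  have hsum_one (n : ℕ) : ∑ k ∈ Finset.Icc 0 n, c k = ∑ k ∈ Finset.Icc 1 n, a k := by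
    simpa using hsum n 1
  have hderiv (t : ℝ) (ht : t ∈ Set.Icc (1 : ℝ) K) :
      HasDerivAt (fun u : ℝ ↦ (u : ℂ) ^ (-s)) (-s * (t : ℂ) ^ (-(s + 1))) t := by
    rw [neg_add]
    exact hasDerivAt_ofReal_cpow_const (by linarith [ht.1]) (neg_ne_zero.2 hs)
  have hcont : ContinuousOn (fun t : ℝ ↦ -s * (t : ℂ) ^ (-(s + 1))) (Set.Icc (1 : ℝ) K) := by
    refine continuousOn_const.mul fun t ht ↦ ?_
    exact ((continuousAt_ofReal_cpow_const t _ (.inr (by linarith [ht.1])))).continuousWithinAt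
  have habel := sum_mul_eq_sub_integral_mul₀' c hc0 K (f := fun u : ℝ ↦ (u : ℂ) ^ (-s))
    (fun t ht ↦ (hderiv t ht).differentiableAt)
    (hcont.integrableOn_Icc.congr_fun (fun t ht ↦ (hderiv t ht).deriv.symm) measurableSet_Icc)
  have hintegral : ∫ t in Set.Ioc (1 : ℝ) K,
        deriv (fun u : ℝ ↦ (u : ℂ) ^ (-s)) t * ∑ k ∈ Finset.Icc 0 ⌊t⌋₊, c k =
      -s * ∫ t in Set.Ioc (1 : ℝ) K,
        (∑ k ∈ Finset.Icc 1 ⌊t⌋₊, a k) * (t : ℂ) ^ (-(s + 1)) := by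
    rw [← integral_const_mul]
    refine setIntegral_congr_fun measurableSet_Ioc fun t ht ↦ ?_
    simp only [(hderiv t ⟨ht.1.le, ht.2⟩).deriv, hsum_one]
    ring
  rw [hintegral, hsum K fun k ↦ ((k : ℝ) : ℂ) ^ (-s), hsum_one] at habel
  simp only [ofReal_natCast] at habel
  simp only [mul_comm (a _), habel]
  ring

lemma integral_Ioi_sum_mul_cpow (hK : 1 ≤ K) (hM : ∀ n : ℕ, ‖meanError a κ n‖ ≤ M)
    (hs : 1 < s.re) :
    IntegrableOn (fun t : ℝ ↦ (∑ k ∈ Finset.Icc 1 ⌊t⌋₊, a k) * (t : ℂ) ^ (-(s + 1)))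
      (Set.Ioi (K : ℝ)) ∧
    ∫ t in Set.Ioi (K : ℝ), (∑ k ∈ Finset.Icc 1 ⌊t⌋₊, a k) * (t : ℂ) ^ (-(s + 1)) =
      κ * ((K : ℂ) ^ (1 - s) / (s - 1)) + errorTail a κ K s := by
  have hK0 : (0 : ℝ) < K := by exact_mod_cast hK
  have hcongr : Set.EqOn (fun t : ℝ ↦ (∑ k ∈ Finset.Icc 1 ⌊t⌋₊, a k) * (t : ℂ) ^ (-(s + 1)))
      (fun t : ℝ ↦ κ * (t : ℂ) ^ (-s) + (t : ℂ) ^ (-s - 1) * meanError a κ t)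
      (Set.Ioi (K : ℝ)) := fun t ht ↦ by
    have ht0 : (t : ℂ) ≠ 0 := ofReal_ne_zero.2 (hK0.trans ht).ne'
    have hpow : (t : ℂ) ^ (-s) = (t : ℂ) ^ (-s - 1) * t := by
      rw [cpow_sub _ _ ht0, cpow_one, div_mul_cancel₀ _ ht0]
    simp only [meanError, hpow, neg_add']
    ring
  have hmain : IntegrableOn (fun t : ℝ ↦ κ * (t : ℂ) ^ (-s)) (Set.Ioi (K : ℝ)) :=
    (integrableOn_Ioi_cpow_of_lt (by simpa using hs) hK0).const_mul κ
  have herror : IntegrableOn (fun t : ℝ ↦ (t : ℂ) ^ (-s - 1) * meanError a κ t)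
      (Set.Ioi (K : ℝ)) := by
    refine Integrable.mul_bdd (c := M + ‖κ‖)
      (integrableOn_Ioi_cpow_of_lt (by rw [sub_re, neg_re, one_re]; linarith) hK0)
      measurable_meanError.aestronglyMeasurable
      ((ae_restrict_mem measurableSet_Ioi).mono fun t ht ↦ ?_)
    exact norm_meanError_le hM (hK0.trans ht).le
  refine ⟨(integrableOn_congr_fun hcongr measurableSet_Ioi).2 (hmain.add herror), ?_⟩
  rw [setIntegral_congr_fun measurableSet_Ioi hcongr, integral_add hmain herror,
    ← errorTail_eq_integral, integral_const_mul,
    integral_Ioi_cpow_of_lt (by simpa using hs) hK0, ofReal_natCast, neg_div,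
    show -s + 1 = 1 - s by ring, ← neg_sub s 1, div_neg, neg_neg]

lemma LSeries_eq_sum_add_errorTail (hK : 1 ≤ K) (hM : ∀ n : ℕ, ‖meanError a κ n‖ ≤ M)
    (hs : 1 < s.re) (ha : LSeriesSummable a s) :
    LSeries a s = (∑ k ∈ Finset.Icc 1 K, a k * (k : ℂ) ^ (-s)) +
      κ * (K : ℂ) ^ (1 - s) / (s - 1) - meanError a κ K * (K : ℂ) ^ (-s) +
      s * errorTail a κ K s := by
  have hK1 : (1 : ℝ) ≤ K := by exact_mod_cast hK
  have hO : (fun n ↦ ∑ k ∈ Finset.Icc 1 n, a k) =O[atTop] fun n : ℕ ↦ (n : ℝ) ^ (1 : ℝ) := by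
    refine Asymptotics.IsBigO.of_bound (M + ‖κ‖) (eventually_ge_atTop 1 |>.mono fun n hn ↦ ?_)
    have hn1 : (1 : ℝ) ≤ n := by exact_mod_cast hn
    have hM0 : 0 ≤ M := (norm_nonneg _).trans (hM 0)
    have hsplit : ∑ k ∈ Finset.Icc 1 n, a k = meanError a κ n + κ * n := by simp [meanError]
    rw [hsplit, Real.rpow_one, Real.norm_of_nonneg (Nat.cast_nonneg n), add_mul]
    refine (norm_add_le _ _).trans (add_le_add ((hM n).trans (le_mul_of_one_le_right hM0 hn1)) ?_)
    simp
  have h1 := (integral_Ioi_sum_mul_cpow le_rfl hM hs).1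
  rw [Nat.cast_one] at h1
  have hsplit := setIntegral_union (Set.Ioc_disjoint_Ioi (le_refl (K : ℝ))) measurableSet_Ioi
    (h1.mono_set Set.Ioc_subset_Ioi_self) (h1.mono_set (Set.Ioi_subset_Ioi hK1))
  rw [Set.Ioc_union_Ioi_eq_Ioi hK1] at hsplit
  rw [LSeries_eq_mul_integral a zero_le_one hs ha hO, hsplit,
    (integral_Ioi_sum_mul_cpow hK hM hs).2, sum_mul_cpow_neg_eq_add_integral]
  have hK0 : (K : ℂ) ≠ 0 := by exact_mod_cast (zero_lt_one.trans_le hK1).ne'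
  have hs1 : s - 1 ≠ 0 := sub_ne_zero.2 (by rintro rfl; simp at hs)
  rw [sub_eq_add_neg 1 s, cpow_add _ _ hK0, cpow_one, meanError, Nat.floor_natCast,
    ofReal_natCast]
  field_simp
  ring

end MeanValue

section Growth

open Complex Topology Metric

variable {N : ℕ} [NeZero N] (χ : DirichletCharacter ℂ N) {κ s z : ℂ} {M δ : ℝ} {K : ℕ}

lemma exists_norm_meanError_le_of_periodic {a : ℕ → ℂ} (ha : Function.Periodic a N) :
    ∃ (κ : ℂ) (M : ℝ), ∀ n : ℕ, ‖meanError a κ n‖ ≤ M := by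
  set κ : ℂ := (∑ k ∈ Finset.Icc 1 N, a k) / N with hκ
  have hN : (N : ℂ) ≠ 0 := by exact_mod_cast NeZero.ne N
  have hsucc (n : ℕ) : meanError a κ (n + 1 : ℕ) = meanError a κ n + a (n + 1) - κ := by
    simp only [meanError, Nat.floor_natCast, Finset.sum_Icc_succ_top (Nat.le_add_left 1 n)]
    push_cast
    ring
  have hperiodic : Function.Periodic (fun n : ℕ ↦ meanError a κ n) N := fun n ↦ by
    induction n with
    | zero => simp [meanError, hκ, hN]
    | succ n ih =>
      simp only at ih ⊢
      rw [add_right_comm, hsucc, hsucc, ih, add_right_comm n N 1, ha]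
  refine ⟨κ, ∑ j ∈ Finset.range N, ‖meanError a κ j‖, fun n ↦ ?_⟩
  rw [← hperiodic.map_mod_nat n]
  exact Finset.single_le_sum (f := fun j : ℕ ↦ ‖meanError a κ j‖) (fun _ _ ↦ norm_nonneg _)
    (Finset.mem_range.2 (Nat.mod_lt _ (NeZero.pos N)))

lemma exists_norm_meanError_character_le :
    ∃ (κ : ℂ) (M : ℝ), ∀ n : ℕ, ‖meanError (fun n ↦ χ n) κ n‖ ≤ M :=
  exists_norm_meanError_le_of_periodic (N := N) fun n ↦ by simp

lemma differentiableAt_sum_add_errorTail {a : ℕ → ℂ} (hK : 1 ≤ K)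
    (hM : ∀ n : ℕ, ‖meanError a κ n‖ ≤ M) (hs : 0 < s.re) (hs1 : s ≠ 1) :
    DifferentiableAt ℂ (fun s ↦ (∑ k ∈ Finset.Icc 1 K, a k * (k : ℂ) ^ (-s)) +
      κ * (K : ℂ) ^ (1 - s) / (s - 1) - meanError a κ K * (K : ℂ) ^ (-s) +
      s * errorTail a κ K s) s := by
  have hcpow {k : ℕ} (hk : 1 ≤ k) {g : ℂ → ℂ} (hg : DifferentiableAt ℂ g s) :
      DifferentiableAt ℂ (fun s ↦ (k : ℂ) ^ g s) s :=
    hg.const_cpow (.inl (Nat.cast_ne_zero.2 (Nat.one_le_iff_ne_zero.1 hk)))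
  refine .add (.sub (.add (.fun_sum fun k hk ↦ ?_) (.div ?_ (by fun_prop) (sub_ne_zero.2 hs1)))
    ?_) (differentiableAt_id.mul (differentiableAt_errorTail hK hM hs))
  · exact (hcpow (Finset.mem_Icc.1 hk).1 (by fun_prop)).const_mul _
  · exact (hcpow hK (by fun_prop)).const_mul _
  · exact (hcpow hK (by fun_prop)).const_mul _

lemma LFunction_eq_sum_add_errorTail (hK : 1 ≤ K)
    (hM : ∀ n : ℕ, ‖meanError (fun n ↦ χ n) κ n‖ ≤ M) (hs : 0 < s.re) (him : s.im ≠ 0) :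
    χ.LFunction s = (∑ k ∈ Finset.Icc 1 K, χ k * (k : ℂ) ^ (-s)) +
      κ * (K : ℂ) ^ (1 - s) / (s - 1) - meanError (fun n ↦ χ n) κ K * (K : ℂ) ^ (-s) +
      s * errorTail (fun n ↦ χ n) κ K s := by
  set U : Set ℂ := {z | 0 < z.re} ∩ {z | 0 < s.im * z.im}
  have hopen : IsOpen U := (isOpen_lt continuous_const continuous_re).inter
    (isOpen_lt continuous_const (continuous_const.mul continuous_im))
  have hconvex : Convex ℝ U := by
    refine (convex_halfSpace_re_gt 0).inter
      (convex_halfSpace_gt (f := fun z : ℂ ↦ s.im * z.im) ⟨fun x y ↦ ?_, fun c x ↦ ?_⟩ 0)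
    · rw [add_im, mul_add]
    · rw [real_smul, im_ofReal_mul, smul_eq_mul, mul_left_comm]
  have hne (z : ℂ) (hz : z ∈ U) : z ≠ 1 := by
    rintro rfl
    simpa using hz.2
  have hL : AnalyticOnNhd ℂ χ.LFunction U := DifferentiableOn.analyticOnNhd (fun z hz ↦
    (χ.differentiableAt_LFunction z (.inl (hne z hz))).differentiableWithinAt) hopen
  have hsum := DifferentiableOn.analyticOnNhd (fun z hz ↦
    (differentiableAt_sum_add_errorTail hK hM hz.1 (hne z hz)).differentiableWithinAt) hopen
  have hmem : (2 + s.im * I : ℂ) ∈ U := ⟨by simp, by simpa using mul_self_pos.2 him⟩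
  refine hL.eqOn_of_preconnected_of_eventuallyEq hsum hconvex.isPreconnected hmem ?_
    ⟨hs, mul_self_pos.2 him⟩
  filter_upwards [(isOpen_lt continuous_const continuous_re).mem_nhds
    (show 1 < (2 + s.im * I : ℂ).re by simp)] with z hz
  rw [χ.LFunction_eq_LSeries hz]
  exact LSeries_eq_sum_add_errorTail hK hM hz (χ.LSeriesSummable_of_one_lt_re hz)

lemma sum_Icc_rpow_sub_one_le (hδ : 0 < δ) (hδ1 : δ ≤ 1) (K : ℕ) :
    ∑ k ∈ Finset.Icc 1 K, (k : ℝ) ^ (δ - 1) ≤ (K : ℝ) ^ δ / δ := by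
  induction K with
  | zero => simp [hδ.ne']
  | succ n ih =>
    have hn : (0 : ℝ) < (n : ℝ) + 1 := by positivity
    have hbernoulli := rpow_one_add_le_one_add_mul_self (s := -(1 / ((n : ℝ) + 1)))
      (by rw [neg_le_neg_iff, div_le_one hn]; linarith [n.cast_nonneg (α := ℝ)]) hδ.le hδ1
    rw [show 1 + -(1 / ((n : ℝ) + 1)) = n / (n + 1) by field_simp; ring,
      Real.div_rpow (by positivity) hn.le, div_le_iff₀ (by positivity)] at hbernoulli
    have hstep : (n : ℝ) ^ δ ≤ ((n : ℝ) + 1) ^ δ - δ * ((n : ℝ) + 1) ^ (δ - 1) := by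
      refine hbernoulli.trans_eq ?_
      rw [Real.rpow_sub_one hn.ne']
      ring
    rw [Finset.sum_Icc_succ_top (by lia), Nat.cast_add_one, le_div_iff₀ hδ]
    rw [le_div_iff₀ hδ] at ih
    linarith

lemma rpow_le_two_mul_rpow (hδ : 0 ≤ δ) (hδ1 : δ ≤ 1) {V W : ℝ} (hW : 0 ≤ W) (hV : 0 ≤ V)
    (hWV : W ≤ 2 * V) : W ^ δ ≤ 2 * V ^ δ := by
  calc W ^ δ ≤ (2 * V) ^ δ := by gcongr
    _ = 2 ^ δ * V ^ δ := Real.mul_rpow zero_le_two hV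
    _ ≤ 2 ^ (1 : ℝ) * V ^ δ := by gcongr; exact one_le_two
    _ = 2 * V ^ δ := by rw [Real.rpow_one]

lemma norm_natCast_cpow_le_rpow {r : ℝ} (hz : z.re ≤ r) (hK : 1 ≤ K) :
    ‖(K : ℂ) ^ z‖ ≤ (K : ℝ) ^ r := by
  rw [norm_natCast_cpow_of_pos hK]
  exact Real.rpow_le_rpow_of_exponent_le (by exact_mod_cast hK) hz

lemma norm_mul_errorTail_le {a : ℕ → ℂ} (hδ2 : δ ≤ 1 / 2) (hM : ∀ n : ℕ, ‖meanError a κ n‖ ≤ M)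
    (hs : 1 - δ ≤ s.re) (hK : |s.im| + 2 ≤ K) :
    ‖s * errorTail a κ K s‖ ≤ 2 * (M + ‖κ‖) * (K : ℝ) ^ δ := by
  have hK1 : (1 : ℝ) ≤ K := by linarith [abs_nonneg s.im]
  have hM0 : 0 ≤ M := (norm_nonneg _).trans (hM 0)
  have hre : 0 < s.re := by linarith
  have hratio : ‖s‖ / s.re ≤ 2 * K := by
    rw [div_le_iff₀ hre]
    nlinarith [norm_le_abs_re_add_abs_im s, abs_of_pos hre, abs_nonneg s.im]
  rw [norm_mul]
  calc ‖s‖ * ‖errorTail a κ K s‖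
      ≤ ‖s‖ * ((M + ‖κ‖) * ((K : ℝ) ^ (-s.re) / s.re)) := by
        gcongr
        exact norm_errorTail_le (by exact_mod_cast hK1) hM hre
    _ = ‖s‖ / s.re * ((M + ‖κ‖) * (K : ℝ) ^ (-s.re)) := by ring
    _ ≤ 2 * K * ((M + ‖κ‖) * (K : ℝ) ^ (δ - 1)) := by gcongr; linarith
    _ = 2 * (M + ‖κ‖) * (K : ℝ) ^ δ := by
        rw [Real.rpow_sub_one (by linarith)]
        field_simp

lemma norm_LFunction_le_mul_rpow (hδ : 0 < δ) (hδ2 : δ ≤ 1 / 2)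
    (hM : ∀ n : ℕ, ‖meanError (fun n ↦ χ n) κ n‖ ≤ M) (hs : 1 - δ ≤ s.re)
    (him : 1 / 2 ≤ |s.im|) (hK : |s.im| + 2 ≤ K) :
    ‖χ.LFunction s‖ ≤ (1 / δ + ‖κ‖ * 2 + M + 2 * (M + ‖κ‖)) * (K : ℝ) ^ δ := by
  have hK1 : (1 : ℝ) ≤ K := by linarith [abs_nonneg s.im]
  have hK1' : 1 ≤ K := by exact_mod_cast hK1
  have hM0 : 0 ≤ M := (norm_nonneg _).trans (hM 0)
  have hsum : ‖∑ k ∈ Finset.Icc 1 K, χ k * (k : ℂ) ^ (-s)‖ ≤ 1 / δ * (K : ℝ) ^ δ := by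
    refine (norm_sum_le_of_le _ fun k hk ↦ ?_).trans
      ((sum_Icc_rpow_sub_one_le hδ (by linarith) K).trans_eq (by ring))
    rw [norm_mul]
    exact (mul_le_of_le_one_left (norm_nonneg _) (χ.norm_le_one k)).trans
      (norm_natCast_cpow_le_rpow (by rw [neg_re]; linarith) (Finset.mem_Icc.1 hk).1)
  have hpole : ‖κ * (K : ℂ) ^ (1 - s) / (s - 1)‖ ≤ ‖κ‖ * 2 * (K : ℝ) ^ δ := by
    have hnorm : 1 / 2 ≤ ‖s - 1‖ := him.trans (by simpa using abs_im_le_norm (s - 1))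
    rw [norm_div, norm_mul, div_le_iff₀ (by linarith)]
    calc ‖κ‖ * ‖(K : ℂ) ^ (1 - s)‖ ≤ ‖κ‖ * (K : ℝ) ^ δ := by
          gcongr
          exact norm_natCast_cpow_le_rpow (by rw [sub_re, one_re]; linarith) hK1'
      _ = ‖κ‖ * 2 * (K : ℝ) ^ δ * (1 / 2) := by ring
      _ ≤ ‖κ‖ * 2 * (K : ℝ) ^ δ * ‖s - 1‖ := by gcongr
  have herror : ‖meanError (fun n ↦ χ n) κ K * (K : ℂ) ^ (-s)‖ ≤ M * (K : ℝ) ^ δ := by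
    rw [norm_mul]
    gcongr
    exacts [hM K, norm_natCast_cpow_le_rpow (by rw [neg_re]; linarith) hK1']
  have htail := norm_mul_errorTail_le hδ2 hM hs hK
  rw [LFunction_eq_sum_add_errorTail χ hK1' hM (by linarith)
    (abs_pos.1 (by linarith))]
  refine (norm_add_le _ _).trans ?_
  linarith [norm_sub_le ((∑ k ∈ Finset.Icc 1 K, χ k * (k : ℂ) ^ (-s)) +
      κ * (K : ℂ) ^ (1 - s) / (s - 1)) (meanError (fun n ↦ χ n) κ K * (K : ℂ) ^ (-s)),
    norm_add_le (∑ k ∈ Finset.Icc 1 K, χ k * (k : ℂ) ^ (-s)) (κ * (K : ℂ) ^ (1 - s) / (s - 1))]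

lemma exists_norm_LFunction_le (hδ : 0 < δ) (hδ2 : δ ≤ 1 / 2) :
    ∃ C > 0, ∀ s : ℂ, 1 - δ ≤ s.re → 1 / 2 ≤ |s.im| →
      ‖χ.LFunction s‖ ≤ C * (|s.im| + 2) ^ δ := by
  obtain ⟨κ, M, hM⟩ := exists_norm_meanError_character_le χ
  have hM0 : 0 ≤ M := (norm_nonneg _).trans (hM 0)
  refine ⟨(1 / δ + ‖κ‖ * 2 + M + 2 * (M + ‖κ‖)) * 2, by positivity, fun s hs him ↦ ?_⟩
  have hV : 2 ≤ |s.im| + 2 := by linarith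
  refine (norm_LFunction_le_mul_rpow χ hδ hδ2 hM hs him (Nat.le_ceil _)).trans ?_
  rw [mul_assoc _ 2]
  gcongr
  exact rpow_le_two_mul_rpow hδ.le (by linarith) (Nat.cast_nonneg _) (by linarith)
    (by linarith [Nat.ceil_lt_add_one (zero_le_two.trans hV)])

lemma exists_norm_LFunctionTrivChar_le (N : ℕ) [NeZero N] :
    ∃ C > 0, ∀ x : ℝ, 0 < x → x ≤ 1 →
      ‖DirichletCharacter.LFunctionTrivChar N (1 + x)‖ ≤ C / x := by
  have hcont : Continuous fun x : ℝ ↦ DirichletCharacter.LFunctionTrivChar₁ N (1 + x) :=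
    (DirichletCharacter.differentiable_LFunctionTrivChar₁ N).continuous.comp (by fun_prop)
  obtain ⟨C, hC⟩ := isCompact_Icc.exists_bound_of_continuousOn (hcont.continuousOn (s := .Icc 0 1))
  refine ⟨max C 1, by positivity, fun x hx hx1 ↦ ?_⟩
  have hne : (1 : ℂ) + x ≠ 1 := by simpa using hx.ne'
  have hbound := hC x ⟨hx.le, hx1⟩
  rw [DirichletCharacter.LFunctionTrivChar₁, Function.update_of_ne hne, add_sub_cancel_left,
    norm_mul, norm_real, Real.norm_of_nonneg hx.le] at hbound
  rw [le_div_iff₀ hx, mul_comm]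
  exact hbound.trans (le_max_left C 1)

lemma exists_le_norm_LFunction_pow_four (hδ : 0 < δ) (hδ2 : δ ≤ 1 / 2) :
    ∃ c > 0, ∀ x t : ℝ, 0 < x → x ≤ 1 → 1 ≤ |t| →
      c * x ^ 3 / (|t| + 2) ^ δ ≤ ‖χ.LFunction (1 + x + I * t)‖ ^ 4 := by
  obtain ⟨C₀, hC₀, hone⟩ := exists_norm_LFunctionTrivChar_le N
  obtain ⟨C₂, hC₂, hsq⟩ := exists_norm_LFunction_le (χ ^ 2) hδ hδ2
  refine ⟨1 / (C₀ ^ 3 * (C₂ * 2)), by positivity, fun x t hx hx1 ht ↦ ?_⟩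
  have hthree_four_one := DirichletCharacter.norm_LFunction_product_ge_one χ hx t
  have hsq_le : ‖(χ ^ 2).LFunction (1 + x + 2 * I * t)‖ ≤ C₂ * (2 * (|t| + 2) ^ δ) := by
    have him : ((1 : ℂ) + x + 2 * I * t).im = 2 * t := by simp
    have habs : |2 * t| = 2 * |t| := by rw [abs_mul, abs_two]
    refine (hsq _ (by simpa using by linarith) (by rw [him]; linarith)).trans ?_
    rw [him]
    gcongr
    exact rpow_le_two_mul_rpow hδ.le (by linarith) (by positivity) (by positivity) (by linarith)
  set V := (|t| + 2) ^ δ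
  have hV : 0 < V := by positivity
  have hprod : 1 ≤ (C₀ / x) ^ 3 * ‖χ.LFunction (1 + x + I * t)‖ ^ 4 * (C₂ * (2 * V)) := by
    rw [norm_mul, norm_mul, norm_pow, norm_pow] at hthree_four_one
    refine hthree_four_one.le.trans ?_
    gcongr
    exact hone x hx hx1
  rw [div_pow, div_mul_eq_mul_div, div_mul_eq_mul_div, le_div_iff₀ (by positivity)] at hprod
  rw [div_le_iff₀ hV, div_mul_eq_mul_div, div_le_iff₀ (by positivity), one_mul]
  linarith

lemma re_im_bounds_of_mem_closedBall {w : ℂ} {r : ℝ} (hw : w ∈ closedBall z r) :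
    z.re - r ≤ w.re ∧ |z.im| - r ≤ |w.im| ∧ |w.im| ≤ |z.im| + r := by
  rw [mem_closedBall, dist_eq_norm] at hw
  have hre := abs_le.1 ((abs_re_le_norm (w - z)).trans hw)
  have him := ((abs_im_le_norm (w - z)).trans hw)
  rw [sub_re] at hre
  rw [sub_im] at him
  have hsub := abs_sub_abs_le_abs_sub w.im z.im
  have hsub' := abs_sub_abs_le_abs_sub z.im w.im
  rw [abs_sub_comm] at hsub'
  exact ⟨by linarith, by linarith, by linarith⟩

lemma analyticAt_LFunction (hz : z ≠ 1) : AnalyticAt ℂ χ.LFunction z :=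
  DifferentiableOn.analyticAt (s := {1}ᶜ)
    (fun w hw ↦ (χ.differentiableAt_LFunction w (.inl hw)).differentiableWithinAt)
    (isOpen_compl_singleton.mem_nhds hz)

lemma exists_norm_iteratedDeriv_LFunction_le (hδ : 0 < δ) (hδ2 : δ ≤ 1 / 2) (k : ℕ) :
    ∃ C > 0, ∀ s : ℂ, 1 - δ / 2 ≤ s.re → 3 / 4 ≤ |s.im| →
      ‖iteratedDeriv k χ.LFunction s‖ ≤ C * (|s.im| + 2) ^ δ := by
  obtain ⟨C, hC, hL⟩ := exists_norm_LFunction_le χ hδ hδ2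
  refine ⟨k.factorial * (C * 2) / (δ / 2) ^ k, by positivity, fun s hs him ↦ ?_⟩
  have hdiff : DiffContOnCl ℂ χ.LFunction (ball s (δ / 2)) := by
    refine DifferentiableOn.diffContOnCl fun w hw ↦ ?_
    have hw := re_im_bounds_of_mem_closedBall (closure_ball_subset_closedBall hw)
    refine (analyticAt_LFunction χ ?_).differentiableAt.differentiableWithinAt
    rintro rfl
    norm_num at hw
    linarith
  refine (norm_iteratedDeriv_le_of_forall_mem_sphere_norm_le (C := C * (2 * (|s.im| + 2) ^ δ)) k
    (by positivity) hdiff fun w hw ↦ ?_).trans_eq (by ring)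
  obtain ⟨hre, hlower, hupper⟩ := re_im_bounds_of_mem_closedBall (sphere_subset_closedBall hw)
  refine (hL w (by linarith) (by linarith)).trans ?_
  gcongr
  exact rpow_le_two_mul_rpow hδ.le (by linarith) (by positivity) (by positivity)
    (by linarith [abs_nonneg s.im])

lemma norm_iteratedDeriv_logDeriv_le {f : ℂ → ℂ} {c : ℂ} {η D : ℝ} (hη : 0 < η) (hD : 0 < D)
    (hf : ∀ w ∈ closedBall c (2 * η), AnalyticAt ℂ f w)
    (hderiv : ∀ w ∈ closedBall c (2 * η), ‖deriv f w‖ ≤ D)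
    (hc : 4 * D * η ≤ ‖f c‖) (hs : dist s c ≤ η) (k : ℕ) :
    ‖iteratedDeriv k (logDeriv f) s‖ ≤ k.factorial / 2 * η⁻¹ ^ (k + 1) := by
  have hsub : closedBall s η ⊆ closedBall c (2 * η) := closedBall_subset_closedBall' (by linarith)
  have hlower (w : ℂ) (hw : w ∈ closedBall c (2 * η)) : 2 * D * η ≤ ‖f w‖ := by
    have hmean := (convex_closedBall c (2 * η)).norm_image_sub_le_of_norm_deriv_le (𝕜 := ℂ)
      (fun w hw ↦ (hf w hw).differentiableAt) hderiv hw (mem_closedBall_self (by positivity))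
    have hdist : ‖c - w‖ ≤ 2 * η := by rwa [← dist_eq_norm, dist_comm]
    have hvar : ‖f c‖ - ‖f w‖ ≤ D * (2 * η) :=
      (norm_sub_norm_le _ _).trans (hmean.trans (by gcongr))
    linarith
  have hpos : 0 < 2 * D * η := by positivity
  have hdiff : DiffContOnCl ℂ (logDeriv f) (ball s η) := by
    refine DifferentiableOn.diffContOnCl fun w hw ↦ ?_
    have hw := hsub (closure_ball_subset_closedBall hw)
    refine ((hf w hw).deriv.differentiableAt.div (hf w hw).differentiableAt
      ?_).differentiableWithinAt
    exact norm_pos_iff.1 (hpos.trans_le (hlower w hw))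
  refine (norm_iteratedDeriv_le_of_forall_mem_sphere_norm_le (C := 1 / (2 * η)) k hη hdiff
    fun w hw ↦ ?_).trans_eq (by rw [inv_pow, pow_succ']; field_simp)
  have hw := hsub (sphere_subset_closedBall hw)
  rw [logDeriv_apply, norm_div]
  calc ‖deriv f w‖ / ‖f w‖ ≤ D / (2 * D * η) := by
        gcongr
        exacts [hderiv w hw, hlower w hw]
    _ = 1 / (2 * η) := by field_simp

lemma exists_dist_one_add_le {η : ℝ} (hη : 0 ≤ η) (hη1 : η ≤ 1) (hs : 1 < s.re) (hs2 : s.re ≤ 2) :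
    ∃ x : ℝ, η ≤ x ∧ x ≤ 1 ∧ dist s (1 + x + I * s.im) ≤ η := by
  refine ⟨max (s.re - 1) η, le_max_right _ _, max_le (by linarith) hη1, ?_⟩
  set x := max (s.re - 1) η
  have hge : s.re - 1 ≤ x := le_max_left _ _
  have hle : x ≤ s.re - 1 + η := max_le (by linarith) (by linarith)
  have hsub : s - (1 + x + I * s.im) = ((s.re - 1 - x : ℝ) : ℂ) := by
    apply Complex.ext <;> simp
    ring
  rw [dist_eq_norm, hsub, norm_real, Real.norm_eq_abs, abs_le]
  constructor <;> linarith

lemma exists_le_norm_LFunction (hδ : 0 < δ) (hδ2 : δ ≤ 1 / 2) {B : ℝ} (hB : 0 < B) :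
    ∃ ρ > 0, ρ ≤ δ / 4 ∧ ∀ x t : ℝ, ρ / ((|t| + 2) ^ δ) ^ 5 ≤ x → x ≤ 1 → 1 ≤ |t| →
      4 * (B * (|t| + 2) ^ δ) * (ρ / ((|t| + 2) ^ δ) ^ 5) ≤ ‖χ.LFunction (1 + x + I * t)‖ := by
  obtain ⟨c, hc, hlower⟩ := exists_le_norm_LFunction_pow_four χ hδ hδ2
  set ρ : ℝ := min (δ / 4) (c / (256 * B ^ 4))
  have hρ0 : 0 < ρ := by positivity
  have hρc : ρ * (256 * B ^ 4) ≤ c := (le_div_iff₀ (by positivity)).1 (min_le_right (δ / 4) _)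
  refine ⟨ρ, hρ0, min_le_left _ _, fun x t hx hx1 ht ↦ ?_⟩
  set E := (|t| + 2) ^ δ
  have hE : 0 < E := by positivity
  have hη : 0 < ρ / E ^ 5 := by positivity
  refine le_of_pow_le_pow_left₀ four_ne_zero (norm_nonneg _)
    (le_trans ?_ (hlower x t (hη.trans_le hx) hx1 ht))
  rw [le_div_iff₀ hE]
  calc (4 * (B * E) * (ρ / E ^ 5)) ^ 4 * E = ρ * (256 * B ^ 4) * (ρ / E ^ 5) ^ 3 := by
        field_simp
        ring
    _ ≤ c * x ^ 3 := by gcongr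

lemma exists_norm_iteratedDeriv_logDeriv_LFunction_le_pow (hδ : 0 < δ) (hδ2 : δ ≤ 1 / 2) (k : ℕ) :
    ∃ C > 0, ∀ s : ℂ, 1 < s.re → s.re ≤ 2 → 1 ≤ |s.im| →
      ‖iteratedDeriv k (logDeriv χ.LFunction) s‖ ≤ C * ((|s.im| + 2) ^ δ) ^ (5 * (k + 1)) := by
  obtain ⟨C, hC, hderiv⟩ := exists_norm_iteratedDeriv_LFunction_le χ hδ hδ2 1
  simp only [iteratedDeriv_one] at hderiv
  obtain ⟨ρ, hρ, hρδ, hlower⟩ := exists_le_norm_LFunction χ hδ hδ2 (B := C * 2) (by positivity)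
  refine ⟨k.factorial / 2 * ρ⁻¹ ^ (k + 1), by positivity, fun s hs hs2 him ↦ ?_⟩
  have hlower (x : ℝ) := hlower x s.im
  set E := (|s.im| + 2) ^ δ
  have hE : 1 ≤ E := Real.one_le_rpow (by linarith) hδ.le
  set η := ρ / E ^ 5 with hη
  have hηδ : η ≤ δ / 4 := (div_le_self hρ.le (one_le_pow₀ hE)).trans hρδ
  have hη0 : 0 < η := by positivity
  obtain ⟨x, hηx, hx1, hdist⟩ := exists_dist_one_add_le hη0.le (by linarith) hs hs2
  have hregion (w : ℂ) (hw : w ∈ closedBall (1 + x + I * s.im) (2 * η)) :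
      1 - δ / 2 ≤ w.re ∧ 3 / 4 ≤ |w.im| ∧ |w.im| ≤ |s.im| + 1 := by
    have hw := re_im_bounds_of_mem_closedBall hw
    simp only [add_re, add_im, one_re, one_im, ofReal_re, ofReal_im, I_mul_re, I_mul_im, neg_zero,
      add_zero, zero_add] at hw
    exact ⟨by linarith, by linarith, by linarith⟩
  have hbound := norm_iteratedDeriv_logDeriv_le (f := χ.LFunction) (D := C * 2 * E) hη0
    (by positivity) (fun w hw ↦ analyticAt_LFunction χ ?_) (fun w hw ↦ ?_) (hlower x hηx hx1 him)
    hdist k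
  · refine hbound.trans_eq ?_
    rw [hη, inv_div, div_pow, ← pow_mul, inv_pow]
    ring
  · rintro rfl
    have := (hregion 1 hw).2.1
    norm_num at this
  · obtain ⟨hre, hle, hge⟩ := hregion w hw
    refine (hderiv w hre hle).trans ?_
    rw [mul_assoc]
    gcongr
    exact rpow_le_two_mul_rpow hδ.le (by linarith) (by positivity) (by positivity) (by linarith)

theorem exists_norm_iteratedDeriv_logDeriv_LFunction_le (k : ℕ) {ε : ℝ} (hε : 0 < ε) :
    ∃ C > 0, ∀ s : ℂ, 1 < s.re → s.re ≤ 2 → 1 ≤ |s.im| →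
      ‖iteratedDeriv k (logDeriv χ.LFunction) s‖ ≤ C * (|s.im| + 2) ^ ε := by
  have hm : 0 < 5 * (k + 1 : ℝ) := by positivity
  obtain ⟨C, hC, hbound⟩ := exists_norm_iteratedDeriv_logDeriv_LFunction_le_pow χ
    (δ := min (1 / 2) (ε / (5 * (k + 1)))) (by positivity) (min_le_left _ _) k
  refine ⟨C, hC, fun s hs hs2 him ↦ (hbound s hs hs2 him).trans ?_⟩
  have hV : 1 ≤ |s.im| + 2 := by linarith
  rw [← Real.rpow_natCast, ← Real.rpow_mul (by linarith)]
  gcongr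
  · push_cast
    exact (le_div_iff₀ hm).1 (min_le_right _ _)

end Growth

section LogDerivative

open Complex Topology
open scoped LSeries.notation ArithmeticFunction.vonMangoldt

variable {N : ℕ} [NeZero N] (χ : DirichletCharacter ℂ N) {s : ℂ}

lemma LSeries_logMul_iterate {a : ℕ → ℂ} (ha : ∀ s : ℂ, 1 < s.re → LSeriesSummable a s) (k : ℕ)
    (hs : 1 < s.re) : LSeriesSummable (LSeries.logMul^[k] a) s ∧
      LSeries (LSeries.logMul^[k] a) s = (-1) ^ k * iteratedDeriv k (LSeries a) s := by
  have habscissa : LSeries.abscissaOfAbsConv a < s.re :=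
    (LSeries.abscissaOfAbsConv_le_of_forall_lt_LSeriesSummable (x := 1)
      fun y hy ↦ ha y (by simpa using hy)).trans_lt (by exact_mod_cast hs)
  refine ⟨LSeriesSummable_of_abscissaOfAbsConv_lt_re ?_, ?_⟩
  · rwa [LSeries.absicssaOfAbsConv_logPowMul]
  · rw [LSeries_iteratedDeriv k habscissa, ← mul_assoc, ← mul_pow, neg_one_mul, neg_neg, one_pow,
      one_mul]

lemma exists_norm_LSeries_logMul_le {a : ℕ → ℂ} {F : ℂ → ℂ} {k : ℕ} {C ε : ℝ}
    (ha : ∀ s : ℂ, 1 < s.re → LSeriesSummable a s)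
    (hF : ∀ s : ℂ, 1 < s.re → LSeries a s = F s)
    (hF' : ∀ s : ℂ, 1 ≤ s.re → AnalyticAt ℂ F s) (hε : 0 ≤ ε)
    (hlarge : ∀ s : ℂ, 1 < s.re → s.re ≤ 2 → 1 ≤ |s.im| →
      ‖iteratedDeriv k F s‖ ≤ C * (|s.im| + 2) ^ ε) :
    ∃ B > 0, ∀ s : ℂ, 1 < s.re → s.re ≤ 2 →
      ‖LSeries (LSeries.logMul^[k] a) s‖ ≤ B * (|s.im| + 2) ^ ε := by
  have hcompact : IsCompact (Set.Icc (1 : ℝ) 2 ×ℂ Set.Icc (-1 : ℝ) 1) :=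
    isCompact_Icc.reProdIm isCompact_Icc
  obtain ⟨D, hsmall⟩ := hcompact.exists_bound_of_continuousOn (f := deriv^[k] F) fun s hs ↦
    ((hF' s (mem_reProdIm.1 hs).1.1).iterated_deriv k).continuousAt.continuousWithinAt
  rw [← iteratedDeriv_eq_iterate] at hsmall
  refine ⟨max (max C D) 1, by positivity, fun s hs hs2 ↦ ?_⟩
  have hone : 1 ≤ (|s.im| + 2) ^ ε := Real.one_le_rpow (by linarith [abs_nonneg s.im]) hε
  have heq : iteratedDeriv k (LSeries a) s = iteratedDeriv k F s :=
    EventuallyEq.iteratedDeriv_eq k <| mem_of_superset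
      ((isOpen_lt continuous_const continuous_re).mem_nhds hs) hF
  rw [(LSeries_logMul_iterate ha k hs).2, heq, norm_mul, norm_pow, norm_neg, norm_one, one_pow,
    one_mul]
  rcases le_total 1 |s.im| with him | him
  · exact (hlarge s hs hs2 him).trans (by gcongr; exact le_max_of_le_left (le_max_left C D))
  · refine (hsmall s (mem_reProdIm.2 ⟨⟨hs.le, hs2⟩, abs_le.1 him⟩)).trans ?_
    exact (le_max_of_le_left (le_max_right C D)).trans (le_mul_of_one_le_right (by positivity) hone)

theorem exists_norm_LSeries_logMul_twist_vonMangoldt_le (hχ : χ ≠ 1) (k : ℕ) {ε : ℝ}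
    (hε : 0 < ε) : ∃ C > 0, ∀ s : ℂ, 1 < s.re → s.re ≤ 2 →
      ‖LSeries (LSeries.logMul^[k] (↗χ * ↗Λ)) s‖ ≤ C * (|s.im| + 2) ^ ε := by
  obtain ⟨C, -, hC⟩ := exists_norm_iteratedDeriv_logDeriv_LFunction_le χ k hε
  have hL (s : ℂ) : AnalyticAt ℂ χ.LFunction s :=
    (DirichletCharacter.differentiable_LFunction hχ).analyticAt s
  refine exists_norm_LSeries_logMul_le (F := -logDeriv χ.LFunction) (C := C)
    (fun s hs ↦ χ.LSeriesSummable_twist_vonMangoldt hs) (fun s hs ↦ ?_) (fun s hs ↦ ?_) hε.le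
    fun s hs hs2 him ↦ ?_
  · rw [χ.LSeries_twist_vonMangoldt_eq hs, ← χ.deriv_LFunction_eq_deriv_LSeries hs,
      ← χ.LFunction_eq_LSeries hs, Pi.neg_apply, logDeriv_apply, neg_div]
  · exact ((hL s).deriv.div (hL s) (χ.LFunction_ne_zero_of_one_le_re (.inl hχ) hs)).neg
  · rw [iteratedDeriv_neg, norm_neg]
    exact hC s hs hs2 him

/-- The entire function `(s - 1) ζ(s)`, with value `1` at `s = 1`. -/
noncomputable def zetaPoleRemoved : ℂ → ℂ := DirichletCharacter.LFunctionTrivChar₁ 1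

lemma analyticAt_zetaPoleRemoved : AnalyticAt ℂ zetaPoleRemoved s :=
  (DirichletCharacter.differentiable_LFunctionTrivChar₁ 1).analyticAt s

lemma zetaPoleRemoved_one : zetaPoleRemoved 1 = 1 := by
  simp [zetaPoleRemoved]

lemma zetaPoleRemoved_of_ne_one (hs : s ≠ 1) : zetaPoleRemoved s = (s - 1) * riemannZeta s := by
  rw [zetaPoleRemoved, DirichletCharacter.LFunctionTrivChar₁, Function.update_of_ne hs,
    DirichletCharacter.LFunctionTrivChar, DirichletCharacter.LFunction_modOne_eq]

lemma zetaPoleRemoved_ne_zero (hs : 1 ≤ s.re) : zetaPoleRemoved s ≠ 0 := by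
  rcases eq_or_ne s 1 with rfl | hs1
  · simp [zetaPoleRemoved_one]
  · rw [zetaPoleRemoved_of_ne_one hs1]
    exact mul_ne_zero (sub_ne_zero.2 hs1) (riemannZeta_ne_zero_of_one_le_re hs)

lemma neg_logDeriv_zeta_sub_zeta_eq (hs : 1 ≤ s.re) (hs1 : s ≠ 1) :
    -logDeriv riemannZeta s - riemannZeta s =
      -logDeriv zetaPoleRemoved s - dslope zetaPoleRemoved 1 s := by
  have hsub := sub_ne_zero.2 hs1
  have hζ := riemannZeta_ne_zero_of_one_le_re hs
  have hderiv : deriv zetaPoleRemoved s = (s - 1) * deriv riemannZeta s + riemannZeta s := by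
    rw [zetaPoleRemoved, DirichletCharacter.deriv_LFunctionTrivChar₁_apply_of_ne_one 1 hs1,
      DirichletCharacter.LFunctionTrivChar, DirichletCharacter.LFunction_modOne_eq]
  rw [logDeriv_apply, logDeriv_apply, hderiv, dslope_of_ne _ hs1, slope_def_field,
    zetaPoleRemoved_one, zetaPoleRemoved_of_ne_one hs1]
  field_simp
  ring

lemma analyticAt_neg_logDeriv_sub_dslope (hs : 1 ≤ s.re) :
    AnalyticAt ℂ (-logDeriv zetaPoleRemoved - dslope zetaPoleRemoved 1) s := by
  have hslope : Differentiable ℂ (dslope zetaPoleRemoved 1) := fun s ↦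
    ((Complex.differentiableOn_dslope univ_mem).2 fun z _ ↦
      analyticAt_zetaPoleRemoved.differentiableAt.differentiableWithinAt).differentiableAt univ_mem
  exact (analyticAt_zetaPoleRemoved.deriv.div analyticAt_zetaPoleRemoved
    (zetaPoleRemoved_ne_zero hs)).neg.sub (hslope.analyticAt s)

lemma exists_norm_iteratedDeriv_logDeriv_zeta_add_zeta_le (k : ℕ) {ε : ℝ} (hε : 0 < ε) :
    ∃ C > 0, ∀ s : ℂ, 1 < s.re → s.re ≤ 2 → 1 ≤ |s.im| →
      ‖iteratedDeriv k (-logDeriv riemannZeta - riemannZeta) s‖ ≤ C * (|s.im| + 2) ^ ε := by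
  obtain ⟨C, hC, hlog⟩ := exists_norm_iteratedDeriv_logDeriv_LFunction_le
    (1 : DirichletCharacter ℂ 1) k hε
  have hmin : 0 < min (1 / 2) ε := by positivity
  obtain ⟨D, hD, hζ⟩ := exists_norm_iteratedDeriv_LFunction_le (1 : DirichletCharacter ℂ 1) hmin
    (min_le_left _ _) k
  rw [DirichletCharacter.LFunction_modOne_eq] at hlog hζ
  refine ⟨C + D, by positivity, fun s hs hs2 him ↦ ?_⟩
  have hs1 : s ≠ 1 := by
    rintro rfl
    simp at hs
  have hana : AnalyticAt ℂ riemannZeta s := by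
    simpa only [DirichletCharacter.LFunction_modOne_eq] using
      analyticAt_LFunction (1 : DirichletCharacter ℂ 1) hs1
  have hlogana : AnalyticAt ℂ (logDeriv riemannZeta) s :=
    hana.deriv.div hana (riemannZeta_ne_zero_of_one_le_re hs.le)
  rw [iteratedDeriv_sub hlogana.neg.contDiffAt hana.contDiffAt, iteratedDeriv_neg, add_mul]
  refine (norm_sub_le _ _).trans (add_le_add ?_ ?_)
  · rw [norm_neg]
    exact hlog s hs hs2 him
  · refine (hζ s (by linarith) (by linarith)).trans ?_
    gcongr
    · linarith
    · exact min_le_right _ _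

theorem exists_norm_LSeries_logMul_vonMangoldt_sub_one_le (k : ℕ) {ε : ℝ} (hε : 0 < ε) :
    ∃ C > 0, ∀ s : ℂ, 1 < s.re → s.re ≤ 2 →
      ‖LSeries (LSeries.logMul^[k] (↗Λ - 1)) s‖ ≤ C * (|s.im| + 2) ^ ε := by
  obtain ⟨C, -, hC⟩ := exists_norm_iteratedDeriv_logDeriv_zeta_add_zeta_le k hε
  have hne {s : ℂ} (hs : 1 < s.re) : s ≠ 1 := by
    rintro rfl
    simp at hs
  have hone {s : ℂ} (hs : 1 < s.re) : LSeriesSummable 1 s := LSeriesSummable_one_iff.2 hs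
  have heq {s : ℂ} (hs : 1 < s.re) := neg_logDeriv_zeta_sub_zeta_eq hs.le (hne hs)
  refine exists_norm_LSeries_logMul_le
    (F := -logDeriv zetaPoleRemoved - dslope zetaPoleRemoved 1) (C := C)
    (fun s hs ↦ (ArithmeticFunction.LSeriesSummable_vonMangoldt hs).sub (hone hs))
    (fun s hs ↦ ?_) (fun s hs ↦ analyticAt_neg_logDeriv_sub_dslope hs) hε.le
    fun s hs hs2 him ↦ ?_
  · rw [LSeries_sub (ArithmeticFunction.LSeriesSummable_vonMangoldt hs) (hone hs),
      ArithmeticFunction.LSeries_vonMangoldt_eq_deriv_riemannZeta_div hs,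
      LSeries_one_eq_riemannZeta hs, neg_div, ← logDeriv_apply]
    exact heq hs
  · have hcongr := EventuallyEq.iteratedDeriv_eq k
      (mem_of_superset ((isOpen_lt continuous_const continuous_re).mem_nhds hs) fun z hz ↦ heq hz)
    exact hcongr ▸ hC s hs hs2 him

end LogDerivative

section RieszMean

open Complex MeasureTheory

/-- The Mellin transform `1 / (s (s + 1))` of the weight `u ↦ max (1 - u) 0`, as a function of `t`
on the vertical line `s = σ + i t`. -/
noncomputable def rieszKernel (σ t : ℝ) : ℂ := 1 / ((σ + t * I) * ((σ + t * I) + 1))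

variable {σ t x r : ℝ} {b : ℕ → ℂ}

lemma hasMellin_max_one_sub {s : ℂ} (hs : 0 < s.re) :
    HasMellin (fun u : ℝ ↦ ((max (1 - u) 0 : ℝ) : ℂ)) s (1 / (s * (s + 1))) := by
  have hone := hasMellin_one_Ioc hs
  have hid := hasMellin_cpow_Ioc (1 : ℂ) (s := s) (by rw [one_re]; linarith)
  have hsub := hasMellin_sub hone.1 hid.1
  have hs0 : s ≠ 0 := by
    rintro rfl
    simp at hs
  have hs1 : s + 1 ≠ 0 := fun h ↦ by
    have := congrArg re h
    rw [add_re, one_re, zero_re] at this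
    linarith
  have hEqOn : Set.EqOn (fun u : ℝ ↦ (Set.Ioc 0 1).indicator (fun _ ↦ (1 : ℂ)) u -
      (Set.Ioc 0 1).indicator (fun u : ℝ ↦ (u : ℂ) ^ (1 : ℂ)) u)
      (fun u : ℝ ↦ ((max (1 - u) 0 : ℝ) : ℂ)) (Set.Ioi 0) := fun u hu ↦ by
    by_cases hu1 : u ≤ 1
    · simp [Set.indicator_of_mem (show u ∈ Set.Ioc (0 : ℝ) 1 from ⟨hu, hu1⟩), hu1]
    · simp [hu1, (not_le.1 hu1).le]
  rw [hone.2, hid.2, show 1 / s - 1 / (s + 1) = 1 / (s * (s + 1)) by field_simp; ring] at hsub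
  refine ⟨(integrableOn_congr_fun (fun u hu ↦ ?_) measurableSet_Ioi).1 hsub.1, ?_⟩
  · simp only [← hEqOn hu]
  · rw [← hsub.2]
    exact setIntegral_congr_fun measurableSet_Ioi fun u hu ↦ by simp only [← hEqOn hu]

lemma sqrt_one_add_sq_le_norm (hσ : 1 ≤ σ) : √(1 + t ^ 2) ≤ ‖(σ + t * I : ℂ)‖ := by
  rw [norm_add_mul_I]
  gcongr
  nlinarith

lemma one_add_sq_le_norm_mul (hσ : 1 ≤ σ) :
    1 + t ^ 2 ≤ ‖(σ + t * I : ℂ) * (σ + t * I + 1)‖ := by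
  have hsucc : (σ + t * I + 1 : ℂ) = ((σ + 1 : ℝ) : ℂ) + t * I := by
    push_cast
    ring
  rw [norm_mul, hsucc, ← Real.mul_self_sqrt (show 0 ≤ 1 + t ^ 2 by positivity)]
  gcongr <;> exact sqrt_one_add_sq_le_norm (by linarith)

lemma norm_rieszKernel_le (hσ : 1 ≤ σ) : ‖rieszKernel σ t‖ ≤ (1 + t ^ 2)⁻¹ := by
  rw [rieszKernel, norm_div, norm_one, one_div]
  exact inv_anti₀ (by positivity) (one_add_sq_le_norm_mul hσ)

lemma continuous_rieszKernel (hσ : 1 ≤ σ) : Continuous (rieszKernel σ) := by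
  refine continuous_const.div (by fun_prop) fun t ↦ norm_pos_iff.1 ?_
  exact (show (0 : ℝ) < 1 + t ^ 2 by positivity).trans_le (one_add_sq_le_norm_mul hσ)

lemma integrable_rieszKernel (hσ : 1 ≤ σ) : Integrable (rieszKernel σ) :=
  integrable_inv_one_add_sq.mono' (continuous_rieszKernel hσ).aestronglyMeasurable
    (ae_of_all _ fun _ ↦ norm_rieszKernel_le hσ)

lemma integral_cpow_mul_rieszKernel (hσ : 1 ≤ σ) {u : ℝ} (hu : 0 < u) :
    ∫ t : ℝ, (u : ℂ) ^ (-(σ + t * I) : ℂ) * rieszKernel σ t =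
      2 * Real.pi * ((max (1 - u) 0 : ℝ) : ℂ) := by
  have hre (t : ℝ) : 0 < (σ + t * I : ℂ).re := by simpa using zero_lt_one.trans_le hσ
  have hmellin (t : ℝ) := (hasMellin_max_one_sub (hre t)).2
  have hinv := mellinInv_mellin_eq σ _ hu
    (hasMellin_max_one_sub (by simpa using zero_lt_one.trans_le hσ)).1
    (by
      simp only [VerticalIntegrable, hmellin]
      exact integrable_rieszKernel hσ)
    (by fun_prop)
  have hpi : (2 * Real.pi : ℂ) ≠ 0 := mul_ne_zero two_ne_zero (ofReal_ne_zero.2 Real.pi_ne_zero)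
  simp only [mellinInv, hmellin, smul_eq_mul, real_smul, ofReal_div, ofReal_one, ofReal_mul,
    ofReal_ofNat] at hinv
  rw [← hinv, ← mul_assoc, mul_one_div_cancel hpi, one_mul]
  rfl

lemma cpow_mul_term_eq (hx : 0 < x) {n : ℕ} (hn : n ≠ 0) (s : ℂ) :
    (x : ℂ) ^ s * LSeries.term b s n = b n * ((n / x : ℝ) : ℂ) ^ (-s) := by
  rw [LSeries.term_of_ne_zero hn, div_eq_mul_inv (n : ℝ), ofReal_mul,
    mul_cpow_ofReal_nonneg (by positivity) (by positivity), ofReal_inv,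
    inv_cpow _ _ (by rw [arg_ofReal_of_nonneg hx.le]; exact Real.pi_ne_zero.symm),
    cpow_neg, cpow_neg, inv_inv, ofReal_natCast]
  ring

lemma hasSum_integral_cpow_mul_LSeries (hσ : 1 < σ) (hx : 0 < x) (hb : LSeriesSummable b σ) :
    HasSum (fun n : ℕ ↦ ∫ t : ℝ,
        (x : ℂ) ^ (σ + t * I : ℂ) * LSeries.term b (σ + t * I) n * rieszKernel σ t)
      (∫ t : ℝ, (x : ℂ) ^ (σ + t * I : ℂ) * LSeries b (σ + t * I) * rieszKernel σ t) := by
  have hnorm (n : ℕ) (t : ℝ) :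
      ‖(x : ℂ) ^ (σ + t * I : ℂ) * LSeries.term b (σ + t * I) n * rieszKernel σ t‖ =
        x ^ σ * ‖LSeries.term b σ n‖ * ‖rieszKernel σ t‖ := by
    rw [norm_mul, norm_mul, norm_cpow_eq_rpow_re_of_pos hx, LSeries.norm_term_eq,
      LSeries.norm_term_eq]
    simp
  have hcont (n : ℕ) : Continuous fun t : ℝ ↦
      (x : ℂ) ^ (σ + t * I : ℂ) * LSeries.term b (σ + t * I) n * rieszKernel σ t := by
    refine .mul (.mul ?_ ?_) (continuous_rieszKernel hσ.le)
    · exact .const_cpow (by fun_prop) (.inl (ofReal_ne_zero.2 hx.ne'))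
    · rcases eq_or_ne n 0 with rfl | hn
      · simpa using continuous_const
      · have hn0 : (n : ℂ) ≠ 0 := Nat.cast_ne_zero.2 hn
        simp only [LSeries.term_of_ne_zero hn]
        refine continuous_const.div (.const_cpow (by fun_prop) (.inl hn0)) fun t ↦ ?_
        simp [cpow_eq_zero_iff, hn0]
  have hsum := hasSum_integral_of_summable_integral_norm
    (fun n ↦ ((integrable_rieszKernel hσ.le).norm.const_mul (x ^ σ * ‖LSeries.term b σ n‖)).mono'
      (hcont n).aestronglyMeasurable (ae_of_all _ fun t ↦ (hnorm n t).le))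
    (by
      simp_rw [hnorm, integral_const_mul]
      exact (hb.norm.mul_left _).mul_right _)
  simpa only [tsum_mul_right, tsum_mul_left, ← LSeries.eq_1] using hsum

lemma integral_cpow_mul_LSeries_mul_rieszKernel (hσ : 1 < σ) (hx : 0 < x)
    (hb : LSeriesSummable b σ) :
    ∫ t : ℝ, (x : ℂ) ^ (σ + t * I : ℂ) * LSeries b (σ + t * I) * rieszKernel σ t =
      2 * Real.pi * ∑ n ∈ Finset.Icc 1 ⌊x⌋₊, b n * ((1 - n / x : ℝ) : ℂ) := by
  have hterm {n : ℕ} (hn : n ≠ 0) : ∫ t : ℝ,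
      (x : ℂ) ^ (σ + t * I : ℂ) * LSeries.term b (σ + t * I) n * rieszKernel σ t =
        2 * Real.pi * (b n * ((max (1 - n / x) 0 : ℝ) : ℂ)) := by
    simp only [cpow_mul_term_eq hx hn, mul_assoc]
    rw [integral_const_mul, integral_cpow_mul_rieszKernel hσ.le (by positivity)]
    ring
  refine (hasSum_integral_cpow_mul_LSeries hσ hx hb).unique ?_
  rw [Finset.mul_sum]
  convert hasSum_sum_of_ne_finset_zero (s := Finset.Icc 1 ⌊x⌋₊) fun n hn ↦ ?_ using 1
  · refine Finset.sum_congr rfl fun n hn ↦ ?_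
    obtain ⟨hn1, hnx⟩ := Finset.mem_Icc.1 hn
    have hle : n / x ≤ 1 := (div_le_one hx).2 ((Nat.le_floor_iff hx.le).1 hnx)
    rw [hterm (by omega), max_eq_left (by linarith)]
  · rcases eq_or_ne n 0 with rfl | hn0
    · simp
    · have hle : 1 ≤ n / x := by
        rw [one_le_div hx]
        exact ((Nat.floor_lt hx.le).1 (by grind)).le
      rw [hterm hn0, max_eq_right (by linarith), ofReal_zero, mul_zero, mul_zero]
  · infer_instance

lemma abs_add_two_le (t : ℝ) : |t| + 2 ≤ 4 * √(1 + t ^ 2) := by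
  have hone : 1 ≤ √(1 + t ^ 2) := Real.one_le_sqrt.2 (by nlinarith)
  have habs : |t| ≤ √(1 + t ^ 2) := Real.abs_le_sqrt (by linarith)
  linarith

lemma rpow_abs_add_two_mul_inv_le (hr : 0 ≤ r) :
    (|t| + 2) ^ r * (1 + t ^ 2)⁻¹ ≤ 4 ^ r * (1 + ‖t‖ ^ 2) ^ (-(2 - r) / 2) := by
  have hpos : 0 < 1 + t ^ 2 := by positivity
  calc (|t| + 2) ^ r * (1 + t ^ 2)⁻¹ ≤ (4 * √(1 + t ^ 2)) ^ r * (1 + t ^ 2)⁻¹ := by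
        gcongr
        exact abs_add_two_le t
    _ = 4 ^ r * ((1 + t ^ 2) ^ (r / 2) * (1 + t ^ 2) ^ (-1 : ℝ)) := by
        rw [Real.mul_rpow (by norm_num) (by positivity), Real.sqrt_eq_rpow, ← Real.rpow_mul hpos.le,
          Real.rpow_neg_one]
        ring_nf
    _ = 4 ^ r * (1 + ‖t‖ ^ 2) ^ (-(2 - r) / 2) := by
        rw [← Real.rpow_add hpos, Real.norm_eq_abs, sq_abs]
        ring_nf

theorem exists_norm_sum_mul_one_sub_div_le (hb : ∀ s : ℂ, 1 < s.re → LSeriesSummable b s)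
    (hr : 0 ≤ r) (hr1 : r < 1) {C : ℝ} (hC : 0 ≤ C)
    (hbound : ∀ s : ℂ, 1 < s.re → s.re ≤ 2 → ‖LSeries b s‖ ≤ C * (|s.im| + 2) ^ r) :
    ∃ B > 0, ∀ x : ℝ, 3 ≤ x →
      ‖∑ n ∈ Finset.Icc 1 ⌊x⌋₊, b n * ((1 - n / x : ℝ) : ℂ)‖ ≤ B * x := by
  have hintegrable : Integrable fun t : ℝ ↦ (1 + ‖t‖ ^ 2) ^ (-(2 - r) / 2) :=
    integrable_rpow_neg_one_add_norm_sq (by rw [Module.finrank_self, Nat.cast_one]; linarith)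
  set J : ℝ := ∫ t : ℝ, (1 + ‖t‖ ^ 2) ^ (-(2 - r) / 2)
  refine ⟨Real.exp 1 * C * 4 ^ r * J + 1, by positivity, fun x hx ↦ ?_⟩
  have hx0 : 0 < x := by linarith
  have hlog : 1 ≤ Real.log x := (Real.le_log_iff_exp_le hx0).2 (by linarith [Real.exp_one_lt_three])
  set σ := 1 + 1 / Real.log x with hσ
  have hσ1 : 1 < σ := lt_add_of_pos_right 1 (by positivity)
  have hσ2 : σ ≤ 2 := by linarith [(div_le_one (zero_lt_one.trans_le hlog)).2 hlog]
  have hpow : x ^ σ = Real.exp 1 * x := by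
    rw [hσ, Real.rpow_add hx0, Real.rpow_one, Real.rpow_def_of_pos hx0,
      mul_one_div_cancel (by linarith), mul_comm]
  have hnorm (t : ℝ) : ‖(x : ℂ) ^ (σ + t * I : ℂ) * LSeries b (σ + t * I) * rieszKernel σ t‖ ≤
      Real.exp 1 * x * C * 4 ^ r * (1 + ‖t‖ ^ 2) ^ (-(2 - r) / 2) := by
    have hL := hbound (σ + t * I) (by simpa using hσ1) (by simpa using hσ2)
    rw [norm_mul, norm_mul, norm_cpow_eq_rpow_re_of_pos hx0]
    simp only [add_re, add_im, ofReal_re, ofReal_im, re_ofReal_mul, im_ofReal_mul, I_re, I_im,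
      mul_zero, mul_one, add_zero, zero_add, hpow] at hL ⊢
    calc Real.exp 1 * x * ‖LSeries b (σ + t * I)‖ * ‖rieszKernel σ t‖
        ≤ Real.exp 1 * x * (C * (|t| + 2) ^ r) * (1 + t ^ 2)⁻¹ := by
          gcongr
          exact norm_rieszKernel_le hσ1.le
      _ = Real.exp 1 * x * C * ((|t| + 2) ^ r * (1 + t ^ 2)⁻¹) := by ring
      _ ≤ Real.exp 1 * x * C * (4 ^ r * (1 + ‖t‖ ^ 2) ^ (-(2 - r) / 2)) := by
          exact mul_le_mul_of_nonneg_left (rpow_abs_add_two_mul_inv_le hr) (by positivity)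
      _ = _ := by ring
  have hmain := norm_integral_le_of_norm_le (hintegrable.const_mul (Real.exp 1 * x * C * 4 ^ r))
    (ae_of_all _ hnorm)
  have hpi : 1 ≤ ‖(2 * Real.pi : ℂ)‖ := by
    simpa [abs_of_pos Real.pi_pos] using by linarith [Real.pi_gt_three]
  rw [integral_cpow_mul_LSeries_mul_rieszKernel hσ1 hx0 (hb σ (by simpa using hσ1)), norm_mul,
    integral_const_mul] at hmain
  refine (le_mul_of_one_le_left (norm_nonneg _) hpi).trans (hmain.trans ?_)
  linarith

end RieszMean

section Tauberian

/-- The summatory function `∑_{n ≤ z} w(n)`. -/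
noncomputable def partialSum (w : ℕ → ℝ) (z : ℝ) : ℝ := ∑ n ∈ Finset.Icc 1 ⌊z⌋₊, w n

/-- The integrated summatory function `∑_{n ≤ z} w(n) (z - n) = ∫₀ᶻ partialSum w`. -/
noncomputable def rieszSum (w : ℕ → ℝ) (z : ℝ) : ℝ := ∑ n ∈ Finset.Icc 1 ⌊z⌋₊, w n * (z - n)

variable {v w : ℕ → ℝ} {y z : ℝ}

lemma sum_mul_sub_eq (w : ℕ → ℝ) (y z : ℝ) (s : Finset ℕ) :
    ∑ n ∈ s, w n * (z - n) = ∑ n ∈ s, w n * (y - n) + (z - y) * ∑ n ∈ s, w n := by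
  rw [Finset.mul_sum, ← Finset.sum_add_distrib]
  exact Finset.sum_congr rfl fun n _ ↦ by ring

lemma mul_partialSum_le_rieszSum_sub (hw : ∀ n, 0 ≤ w n) (hy : 0 ≤ y) (hyz : y ≤ z) :
    (z - y) * partialSum w y ≤ rieszSum w z - rieszSum w y := by
  have hle : ∑ n ∈ Finset.Icc 1 ⌊y⌋₊, w n * (z - n) ≤ rieszSum w z := by
    refine Finset.sum_le_sum_of_subset_of_nonneg
      (Finset.Icc_subset_Icc_right (Nat.floor_mono hyz)) fun n hn _ ↦ mul_nonneg (hw n) ?_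
    exact sub_nonneg.2 ((Nat.le_floor_iff (hy.trans hyz)).1 (Finset.mem_Icc.1 hn).2)
  rw [sum_mul_sub_eq w y z] at hle
  simp only [rieszSum, partialSum] at hle ⊢
  linarith

lemma rieszSum_sub_le_mul_partialSum (hw : ∀ n, 0 ≤ w n) (hy : 0 ≤ y) (hyz : y ≤ z) :
    rieszSum w z - rieszSum w y ≤ (z - y) * partialSum w z := by
  have hsub : Finset.Icc 1 ⌊y⌋₊ ⊆ Finset.Icc 1 ⌊z⌋₊ :=
    Finset.Icc_subset_Icc_right (Nat.floor_mono hyz)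
  have hnonpos : ∑ n ∈ Finset.Icc 1 ⌊z⌋₊ \ Finset.Icc 1 ⌊y⌋₊, w n * (y - n) ≤ 0 := by
    refine Finset.sum_nonpos fun n hn ↦ mul_nonpos_of_nonneg_of_nonpos (hw n) ?_
    rw [Finset.mem_sdiff, Finset.mem_Icc, Finset.mem_Icc] at hn
    exact sub_nonpos.2 ((Nat.floor_lt hy).1 (by omega)).le
  have hsplit := Finset.sum_sdiff (f := fun n : ℕ ↦ w n * (y - n)) hsub
  simp only [rieszSum, partialSum]
  rw [sum_mul_sub_eq w y z]
  linarith

lemma partialSum_log_sq_sub_le (hy : 0 ≤ y) (hyz : y ≤ z) :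
    partialSum (fun n ↦ Real.log n ^ 2) z - partialSum (fun n ↦ Real.log n ^ 2) y ≤
      (z - y + 1) * Real.log z ^ 2 := by
  have hsub : Finset.Icc 1 ⌊y⌋₊ ⊆ Finset.Icc 1 ⌊z⌋₊ :=
    Finset.Icc_subset_Icc_right (Nat.floor_mono hyz)
  have hterm (n : ℕ) (hn : n ∈ Finset.Icc 1 ⌊z⌋₊ \ Finset.Icc 1 ⌊y⌋₊) :
      Real.log n ^ 2 ≤ Real.log z ^ 2 := by
    obtain ⟨hn1, hnz⟩ := Finset.mem_Icc.1 (Finset.mem_sdiff.1 hn).1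
    have hnz' := (Nat.le_floor_iff (hy.trans hyz)).1 hnz
    have hn1' : (1 : ℝ) ≤ n := by exact_mod_cast hn1
    exact pow_le_pow_left₀ (Real.log_nonneg hn1') (Real.log_le_log (by linarith) hnz') 2
  rw [partialSum, partialSum, ← Finset.sum_sdiff hsub, add_sub_cancel_right]
  refine (Finset.sum_le_card_nsmul _ _ _ hterm).trans ?_
  rw [Finset.card_sdiff_of_subset hsub, nsmul_eq_mul, Nat.cast_sub (Finset.card_le_card hsub)]
  simp only [Nat.card_Icc, add_tsub_cancel_right]
  gcongr
  linarith [Nat.floor_le (hy.trans hyz), Nat.lt_floor_add_one y]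

lemma mul_partialSum_sub_le (hv : ∀ n, 0 ≤ v n) (hw : ∀ n, 0 ≤ w n) (hy : 0 ≤ y) (hyz : y ≤ z) :
    (z - y) * (partialSum w y - partialSum v y) ≤
      (rieszSum w z - rieszSum v z) - (rieszSum w y - rieszSum v y) +
        (z - y) * (partialSum v z - partialSum v y) := by
  have := mul_partialSum_le_rieszSum_sub hw hy hyz
  have := rieszSum_sub_le_mul_partialSum hv hy hyz
  linarith

lemma le_mul_partialSum_sub (hv : ∀ n, 0 ≤ v n) (hw : ∀ n, 0 ≤ w n) (hy : 0 ≤ y) (hyz : y ≤ z) :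
    (rieszSum w z - rieszSum v z) - (rieszSum w y - rieszSum v y) -
        (z - y) * (partialSum v z - partialSum v y) ≤
      (z - y) * (partialSum w z - partialSum v z) := by
  have := rieszSum_sub_le_mul_partialSum hw hy hyz
  have := mul_partialSum_le_rieszSum_sub hv hy hyz
  linarith

lemma mul_abs_partialSum_sub_log_sq_le (hw : ∀ n, 0 ≤ w n) {C : ℝ} (hC : 0 ≤ C)
    (h : ∀ z : ℝ, 3 ≤ z → |rieszSum w z - rieszSum (fun n ↦ Real.log n ^ 2) z| ≤ C * z ^ 2)
    (hz : 6 ≤ z) {k : ℝ} (hk0 : 0 ≤ k) (hkz : k ≤ z / 2) :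
    k * |partialSum w z - partialSum (fun n ↦ Real.log n ^ 2) z| ≤
      5 * C * z ^ 2 + k * ((k + 1) * (2 * Real.log z) ^ 2) := by
  have hlog0 : 0 ≤ Real.log z := Real.log_nonneg (by linarith)
  have hlogk0 : 0 ≤ Real.log (z + k) := Real.log_nonneg (by linarith)
  have hlogk : Real.log (z + k) ≤ 2 * Real.log z := by
    rw [← Nat.cast_two, ← Real.log_pow]
    exact Real.log_le_log (by linarith) (by nlinarith)
  have hnn (n : ℕ) : 0 ≤ Real.log (n : ℝ) ^ 2 := sq_nonneg _
  have hup := mul_partialSum_sub_le hnn hw (y := z) (z := z + k) (by linarith) (by linarith)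
  have hlow := le_mul_partialSum_sub hnn hw (y := z - k) (z := z) (by linarith) (by linarith)
  have hvup := partialSum_log_sq_sub_le (y := z) (z := z + k) (by linarith) (by linarith)
  have hvlow := partialSum_log_sq_sub_le (y := z - k) (z := z) (by linarith) (by linarith)
  rw [add_sub_cancel_left] at hup hvup
  rw [sub_sub_cancel] at hlow hvlow
  replace hvup : k * _ ≤ k * ((k + 1) * (2 * Real.log z) ^ 2) :=
    mul_le_mul_of_nonneg_left (hvup.trans (by gcongr)) hk0
  replace hvlow : k * _ ≤ k * ((k + 1) * (2 * Real.log z) ^ 2) :=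
    mul_le_mul_of_nonneg_left (hvlow.trans (by gcongr; linarith)) hk0
  have hR1 := (abs_le.1 (h (z + k) (by linarith))).2
  have hR2 := (abs_le.1 (h z (by linarith))).1
  have hR3 := (abs_le.1 (h (z - k) (by linarith))).2
  have hsq1 : C * (z + k) ^ 2 ≤ C * (4 * z ^ 2) := by gcongr; nlinarith
  have hsq2 : C * (z - k) ^ 2 ≤ C * (4 * z ^ 2) := by gcongr; nlinarith
  rw [← abs_of_nonneg hk0, ← abs_mul, abs_of_nonneg hk0, abs_le]
  constructor <;> linarith

theorem abs_partialSum_sub_log_sq_le (hw : ∀ n, 0 ≤ w n) {C : ℝ} (hC : 0 ≤ C)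
    (h : ∀ z : ℝ, 3 ≤ z → |rieszSum w z - rieszSum (fun n ↦ Real.log n ^ 2) z| ≤ C * z ^ 2)
    (hz : 8 ≤ z) :
    |partialSum w z - partialSum (fun n ↦ Real.log n ^ 2) z| ≤ (8 + 5 * C) * (z * Real.log z) := by
  have hlog2 : 2 ≤ Real.log z := by
    have hlog8 : Real.log 8 = 3 * Real.log 2 := by
      rw [show (8 : ℝ) = 2 ^ 3 by norm_num, Real.log_pow]
      norm_num
    linarith [Real.log_le_log (by norm_num) hz, Real.log_two_gt_d9]
  have hlogz : Real.log z ≤ z := (Real.log_le_sub_one_of_pos (by linarith)).trans (by linarith)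
  obtain ⟨k, hkL⟩ : ∃ k, k * Real.log z = z := ⟨z / Real.log z, div_mul_cancel₀ z (by linarith)⟩
  have hk1 : 1 ≤ k := by nlinarith
  have hkz : k ≤ z / 2 := by nlinarith
  refine le_of_mul_le_mul_left ?_ (zero_lt_one.trans_le hk1)
  calc k * |partialSum w z - partialSum (fun n ↦ Real.log n ^ 2) z|
      ≤ 5 * C * z ^ 2 + k * ((k + 1) * (2 * Real.log z) ^ 2) :=
        mul_abs_partialSum_sub_log_sq_le hw hC h (by linarith) (by linarith) hkz
    _ ≤ 5 * C * z ^ 2 + k * ((k + k) * (2 * Real.log z) ^ 2) := by gcongr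
    _ = 5 * C * (k * Real.log z * z) + 8 * k * (k * Real.log z * Real.log z) := by
        rw [hkL]
        linear_combination (8 * k * Real.log z) * hkL
    _ = k * ((8 + 5 * C) * (z * Real.log z)) := by
        rw [hkL]
        linear_combination (-5 * C * z) * hkL

end Tauberian

section SplitPrimes

open scoped LSeries.notation ArithmeticFunction.vonMangoldt

variable {m : ℕ} (ψ : MulChar (ZMod m) ℤ) {z M : ℝ} {W : ℕ → ℝ}

/-- The von Mangoldt-type coefficients of the negative logarithmic derivative of `ζ(s) L(s, ψ)`,
the Dedekind zeta function of the quadratic field attached to `ψ`. -/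
noncomputable def quadraticWeight (n : ℕ) : ℝ := Λ n * (1 + (ψ (n : ZMod m) : ℝ))

/-- The primes up to `N` that split in the quadratic field attached to `ψ`. -/
def splitPrimes (N : ℕ) : Finset ℕ :=
  {p ∈ Nat.primesLE N | ψ (p : ZMod m) = 1}

variable {ψ}

lemma abs_le_one_of_isQuadratic (hψ : ψ.IsQuadratic) (n : ℕ) : |(ψ (n : ZMod m) : ℝ)| ≤ 1 := by
  rcases hψ n with h | h | h <;> simp [h]

lemma quadraticWeight_nonneg (hψ : ψ.IsQuadratic) (n : ℕ) : 0 ≤ quadraticWeight ψ n :=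
  mul_nonneg ArithmeticFunction.vonMangoldt_nonneg
    (by linarith [(abs_le.1 (abs_le_one_of_isQuadratic hψ n)).1])

lemma quadraticWeight_le (hψ : ψ.IsQuadratic) (n : ℕ) : quadraticWeight ψ n ≤ 2 * Λ n := by
  rw [quadraticWeight, mul_comm 2]
  exact mul_le_mul_of_nonneg_left (by linarith [(abs_le.1 (abs_le_one_of_isQuadratic hψ n)).2])
    ArithmeticFunction.vonMangoldt_nonneg

lemma logMul_twist_add_logMul_eq (n : ℕ) :
    (LSeries.logMul^[2] (↗(ψ.ringHomComp (Int.castRingHom ℂ)) * ↗Λ)) n +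
      (LSeries.logMul^[2] (↗Λ - 1)) n =
      ((quadraticWeight ψ n * Real.log n ^ 2 - Real.log n ^ 2 : ℝ) : ℂ) := by
  simp only [Function.iterate_succ, Function.iterate_zero, Function.comp_apply, LSeries.logMul, id,
    quadraticWeight, Pi.sub_apply, Pi.mul_apply, Pi.one_apply, MulChar.ringHomComp_apply,
    eq_intCast]
  push_cast
  rw [← Complex.natCast_log]
  ring

theorem exists_abs_rieszSum_quadraticWeight_sub_le [NeZero m] (hψ : ψ ≠ 1) :
    ∃ C > 0, ∀ z : ℝ, 3 ≤ z →
      |rieszSum (fun n ↦ quadraticWeight ψ n * Real.log n ^ 2) z -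
        rieszSum (fun n ↦ Real.log n ^ 2) z| ≤ C * z ^ 2 := by
  set χ : DirichletCharacter ℂ m := ψ.ringHomComp (Int.castRingHom ℂ) with hχ
  have hχ1 : χ ≠ 1 := (MulChar.ringHomComp_ne_one_iff Int.cast_injective).2 hψ
  have hone {s : ℂ} (hs : 1 < s.re) : LSeriesSummable 1 s := LSeriesSummable_one_iff.2 hs
  obtain ⟨C₁, hC₁, hL₁⟩ :=
    exists_norm_LSeries_logMul_twist_vonMangoldt_le χ hχ1 2 (one_half_pos (α := ℝ))
  obtain ⟨C₂, hC₂, hL₂⟩ :=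
    exists_norm_LSeries_logMul_vonMangoldt_sub_one_le 2 (one_half_pos (α := ℝ))
  obtain ⟨B₁, hB₁, hR₁⟩ := exists_norm_sum_mul_one_sub_div_le
    (fun s hs ↦ (LSeries_logMul_iterate (fun s ↦ χ.LSeriesSummable_twist_vonMangoldt) 2 hs).1)
    one_half_pos.le one_half_lt_one hC₁.le hL₁
  obtain ⟨B₂, hB₂, hR₂⟩ := exists_norm_sum_mul_one_sub_div_le
    (fun s hs ↦ (LSeries_logMul_iterate (fun s hs ↦
      (ArithmeticFunction.LSeriesSummable_vonMangoldt hs).sub (hone hs)) 2 hs).1)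
    one_half_pos.le one_half_lt_one hC₂.le hL₂
  refine ⟨B₁ + B₂, by positivity, fun z hz ↦ ?_⟩
  have hz0 : 0 < z := by linarith
  have hadd : |(rieszSum (fun n ↦ quadraticWeight ψ n * Real.log n ^ 2) z -
      rieszSum (fun n ↦ Real.log n ^ 2) z) / z| ≤ (B₁ + B₂) * z := by
    rw [← Real.norm_eq_abs, ← Complex.norm_real, rieszSum, rieszSum, ← Finset.sum_sub_distrib,
      Finset.sum_div, Complex.ofReal_sum]
    calc _ = ‖∑ n ∈ Finset.Icc 1 ⌊z⌋₊, ((LSeries.logMul^[2] (↗χ * ↗Λ)) n * ((1 - n / z : ℝ) : ℂ) +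
          (LSeries.logMul^[2] (↗Λ - 1)) n * ((1 - n / z : ℝ) : ℂ))‖ := by
            congr 1
            refine Finset.sum_congr rfl fun n _ ↦ ?_
            rw [← add_mul, hχ, logMul_twist_add_logMul_eq, ← Complex.ofReal_mul]
            congr 1
            field_simp
      _ ≤ B₁ * z + B₂ * z := by
            rw [Finset.sum_add_distrib]
            exact (norm_add_le _ _).trans (add_le_add (hR₁ z hz) (hR₂ z hz))
      _ = (B₁ + B₂) * z := by ring
  rw [abs_div, abs_of_pos hz0, div_le_iff₀ hz0] at hadd
  linarith

theorem exists_abs_partialSum_quadraticWeight_sub_le [NeZero m] (hψ : ψ ≠ 1)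
    (hquad : ψ.IsQuadratic) :
    ∃ C > 0, ∀ z : ℝ, 8 ≤ z →
      |partialSum (fun n ↦ quadraticWeight ψ n * Real.log n ^ 2) z -
        partialSum (fun n ↦ Real.log n ^ 2) z| ≤ C * (z * Real.log z) := by
  obtain ⟨C, hC, hR⟩ := exists_abs_rieszSum_quadraticWeight_sub_le hψ
  exact ⟨8 + 5 * C, by positivity, fun z hz ↦ abs_partialSum_sub_log_sq_le
    (fun n ↦ mul_nonneg (quadraticWeight_nonneg hquad n) (sq_nonneg _)) hC.le hR hz⟩

lemma log_le_two_mul_sqrt (hz : 0 ≤ z) : Real.log z ≤ 2 * √z := by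
  have := Real.log_le_rpow_div hz one_half_pos
  rw [← Real.sqrt_eq_rpow] at this
  linarith

lemma abs_log_pow_mul_sum_sub_le {s : Finset ℕ} (hs : ∀ n ∈ s, 1 ≤ n ∧ (n : ℝ) ≤ z)
    (hW : ∀ n ∈ s, |W n| ≤ M) (k : ℕ) :
    |Real.log z ^ k * ∑ n ∈ s, W n - ∑ n ∈ s, W n * Real.log n ^ k| ≤
      k * Real.log z ^ (k - 1) * (M * ∑ n ∈ s, (Real.log z - Real.log n)) := by
  rw [Finset.mul_sum, ← Finset.sum_sub_distrib, Finset.mul_sum, Finset.mul_sum]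
  refine (Finset.abs_sum_le_sum_abs _ _).trans (Finset.sum_le_sum fun n hn ↦ ?_)
  obtain ⟨hn1, hnz⟩ := hs n hn
  have hlog : 0 ≤ Real.log n := Real.log_natCast_nonneg n
  have hlogz : Real.log n ≤ Real.log z := Real.log_le_log (by exact_mod_cast hn1) hnz
  have hpow : |Real.log z ^ k - Real.log n ^ k| ≤
      (Real.log z - Real.log n) * k * Real.log z ^ (k - 1) := by
    have := abs_pow_sub_pow_le (Real.log z) (Real.log n) k
    rwa [abs_of_nonneg (sub_nonneg.2 hlogz), abs_of_nonneg hlog,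
      abs_of_nonneg (hlog.trans hlogz), max_eq_left hlogz] at this
  calc |Real.log z ^ k * W n - W n * Real.log n ^ k|
      = |W n| * |Real.log z ^ k - Real.log n ^ k| := by rw [← abs_mul]; ring_nf
    _ ≤ M * ((Real.log z - Real.log n) * k * Real.log z ^ (k - 1)) :=
        mul_le_mul (hW n hn) hpow (abs_nonneg _) ((abs_nonneg _).trans (hW n hn))
    _ = _ := by ring

lemma sum_log_sub_log_le (hz : 1 ≤ z) :
    ∑ n ∈ Finset.Icc 1 ⌊z⌋₊, (Real.log z - Real.log n) ≤ z := by
  set N := ⌊z⌋₊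
  have hN0 : N ≠ 0 := (Nat.floor_pos.2 hz).ne'
  have hNpos : (0 : ℝ) < N := by positivity
  have hsum : ∑ n ∈ Finset.Icc 1 N, Real.log n = Real.log N.factorial := by
    rw [← Finset.prod_Ico_id_eq_factorial, Finset.Ico_add_one_right_eq_Icc, Nat.cast_prod,
      Real.log_prod fun n hn ↦ Nat.cast_ne_zero.2 (by grind)]
  have hstirling := Stirling.le_log_factorial_stirling hN0
  have hlogN : 0 ≤ Real.log N := Real.log_natCast_nonneg N
  have hpi : 0 ≤ Real.log (2 * Real.pi) := Real.log_nonneg (by linarith [Real.pi_gt_three])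
  have hratio : N * (Real.log z - Real.log N) ≤ z - N := by
    rw [← Real.log_div (by linarith) hNpos.ne']
    calc N * Real.log (z / N) ≤ N * (z / N - 1) :=
          mul_le_mul_of_nonneg_left (Real.log_le_sub_one_of_pos (by positivity)) hNpos.le
      _ = z - N := by field_simp
  rw [Finset.sum_sub_distrib, hsum, Finset.sum_const, Nat.card_Icc, Nat.add_sub_cancel,
    nsmul_eq_mul]
  linarith

lemma card_primesLE_floor_le (hz : 0 ≤ z) : ((Nat.primesLE ⌊z⌋₊).card : ℝ) ≤ z := by
  refine le_trans ?_ (Nat.floor_le hz)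
  rw [Nat.primesLE_eq_filter_Icc_one]
  exact_mod_cast (Finset.card_filter_le _ _).trans (by simp)

lemma sum_primesLE_log_sub_log_eq (hz : 1 < z) :
    ∑ p ∈ Nat.primesLE ⌊z⌋₊, (Real.log z - Real.log p) =
      (Nat.primeCounting ⌊z⌋₊ - Chebyshev.theta z / Real.log z) * Real.log z := by
  rw [sub_mul, div_mul_cancel₀ _ (Real.log_pos hz).ne', Chebyshev.theta_eq_sum_primesLE,
    Finset.sum_sub_distrib, Finset.sum_const, nsmul_eq_mul, Nat.primesLE_card_eq_primeCounting]

lemma exists_sum_primesLE_log_sub_log_le : ∃ C > 0, ∀ z : ℝ, 1 < z →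
    ∑ p ∈ Nat.primesLE ⌊z⌋₊, (Real.log z - Real.log p) ≤ C * (z / Real.log z) := by
  obtain ⟨C, hC, hbig⟩ := Chebyshev.primeCounting_sub_theta_div_log_isBigO.exists_pos
  obtain ⟨K, hK⟩ := eventually_atTop.1 hbig.bound
  refine ⟨C + Real.log K ^ 2, by positivity, fun z hz ↦ ?_⟩
  have hlog : 0 < Real.log z := Real.log_pos hz
  rcases le_total K z with hKz | hzK
  · have hz' := (le_abs_self _).trans (hK z hKz)
    rw [sum_primesLE_log_sub_log_eq hz]
    calc _ ≤ C * ‖z / Real.log z ^ 2‖ * Real.log z := mul_le_mul_of_nonneg_right hz' hlog.le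
      _ = C * (z / Real.log z) := by
        rw [Real.norm_of_nonneg (by positivity)]
        field_simp
      _ ≤ _ := by gcongr; exact le_add_of_nonneg_right (sq_nonneg _)
  · calc ∑ p ∈ Nat.primesLE ⌊z⌋₊, (Real.log z - Real.log p)
        ≤ ∑ _p ∈ Nat.primesLE ⌊z⌋₊, Real.log z :=
          Finset.sum_le_sum fun p _ ↦ sub_le_self _ (Real.log_natCast_nonneg p)
      _ ≤ z * Real.log z := by
          rw [Finset.sum_const, nsmul_eq_mul]
          gcongr
          exact card_primesLE_floor_le (by linarith)
      _ = Real.log z ^ 2 * (z / Real.log z) := by field_simp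
      _ ≤ _ := by
          gcongr
          nlinarith [Real.log_le_log (by linarith) hzK]

lemma mem_splitPrimes_floor {z : ℝ} {p : ℕ} :
    p ∈ splitPrimes ψ ⌊z⌋₊ ↔ p ≤ z ∧ p.Prime ∧ ψ (p : ZMod m) = 1 := by
  rw [splitPrimes, Finset.mem_filter, Nat.mem_primesLE, and_assoc]
  exact and_congr_left fun hp ↦ Nat.le_floor_iff' hp.1.ne_zero

lemma dvd_of_prime_of_apply_eq_zero {p : ℕ} (hp : p.Prime) (h : ψ (p : ZMod m) = 0) : p ∣ m := by
  by_contra hdvd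
  have hunit : IsUnit (p : ZMod m) := (ZMod.isUnit_iff_coprime p m).2
    ((Nat.Prime.coprime_iff_not_dvd hp).2 hdvd)
  exact (hunit.map ψ).ne_zero h

lemma abs_quadraticWeight_sub_le (hψ : ψ.IsQuadratic) (n : ℕ) :
    |quadraticWeight ψ n - if n.Prime ∧ ψ (n : ZMod m) = 1 then 2 * Real.log n else 0| ≤
      2 * (if n.Prime then 0 else Λ n) + if n.Prime ∧ n ∣ m then Real.log n else 0 := by
  have hlog : 0 ≤ Real.log n := Real.log_natCast_nonneg n
  by_cases hn : n.Prime
  · rw [quadraticWeight, ArithmeticFunction.vonMangoldt_apply_prime hn]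
    rcases hψ n with h | h | h
    · simp [hn, h, dvd_of_prime_of_apply_eq_zero hn h, abs_of_nonneg hlog]
    · simp only [hn, h, true_and, if_true, Int.cast_one]
      rw [show Real.log n * (1 + 1) - 2 * Real.log n = 0 by ring, abs_zero]
      split_ifs <;> linarith
    · simp only [hn, h, true_and, if_true, Int.cast_neg, Int.cast_one]
      norm_num
      split_ifs <;> linarith
  · simpa [hn, abs_of_nonneg (quadraticWeight_nonneg hψ n)] using quadraticWeight_le hψ n

lemma exists_sum_abs_quadraticWeight_sub_le [NeZero m] (hψ : ψ.IsQuadratic) :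
    ∃ C > 0, ∀ z : ℝ, 1 ≤ z → ∑ n ∈ Finset.Icc 1 ⌊z⌋₊,
      |quadraticWeight ψ n - if n.Prime ∧ ψ (n : ZMod m) = 1 then 2 * Real.log n else 0| ≤
        C * √z := by
  obtain ⟨C, hC⟩ := Chebyshev.psi_sub_theta_le_mul_sqrt
  set R := ∑ p ∈ m.primeFactors, Real.log p
  have hR0 : 0 ≤ R := Finset.sum_nonneg fun p _ ↦ Real.log_natCast_nonneg p
  refine ⟨2 * |C| + R + 1, by positivity, fun z hz ↦ ?_⟩
  have hsqrt : 1 ≤ √z := Real.one_le_sqrt.2 hz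
  have hpowers : ∑ n ∈ Finset.Icc 1 ⌊z⌋₊, (if n.Prime then 0 else Λ n) ≤ |C| * √z := by
    simp only [← ite_not (p := Nat.Prime _), ← Finset.sum_filter]
    refine ((Chebyshev.psi_sub_theta_eq_sum_not_prime z).ge.trans (hC z)).trans ?_
    gcongr
    exact le_abs_self C
  have hramified :
      ∑ n ∈ Finset.Icc 1 ⌊z⌋₊, (if n.Prime ∧ n ∣ m then Real.log n else 0) ≤ R := by
    rw [← Finset.sum_filter]
    refine Finset.sum_le_sum_of_subset_of_nonneg (fun n hn ↦ ?_)
      fun n _ _ ↦ Real.log_natCast_nonneg n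
    exact Nat.mem_primeFactors.2 ⟨(Finset.mem_filter.1 hn).2.1, (Finset.mem_filter.1 hn).2.2,
      NeZero.ne m⟩
  refine (Finset.sum_le_sum fun n _ ↦ abs_quadraticWeight_sub_le hψ n).trans ?_
  rw [Finset.sum_add_distrib, ← Finset.mul_sum]
  nlinarith

lemma sum_ite_split_eq (W : ℕ → ℝ) (k N : ℕ) :
    ∑ n ∈ Finset.Icc 1 N,
      W n * Real.log n ^ k * (if n.Prime ∧ ψ (n : ZMod m) = 1 then 2 * Real.log n else 0) =
      2 * ∑ p ∈ splitPrimes ψ N, W p * Real.log p ^ (k + 1) := by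
  rw [splitPrimes, Nat.primesLE_eq_filter_Icc_one, Finset.filter_filter, Finset.mul_sum,
    Finset.sum_filter]
  refine Finset.sum_congr rfl fun n _ ↦ ?_
  split_ifs <;> ring

lemma exists_abs_sum_mul_quadraticWeight_sub_le [NeZero m] (hψ : ψ.IsQuadratic) :
    ∃ C > 0, ∀ (z M : ℝ) (W : ℕ → ℝ), 1 ≤ z → (∀ n ∈ Finset.Icc 1 ⌊z⌋₊, |W n| ≤ M) →
      |∑ n ∈ Finset.Icc 1 ⌊z⌋₊, W n * Real.log n ^ 2 * quadraticWeight ψ n -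
        2 * ∑ p ∈ splitPrimes ψ ⌊z⌋₊, W p * Real.log p ^ 3| ≤ C * (M * z * Real.log z) := by
  obtain ⟨C, hC, hsum⟩ := exists_sum_abs_quadraticWeight_sub_le hψ
  refine ⟨2 * C, by positivity, fun z M W hz hW ↦ ?_⟩
  have hM : 0 ≤ M := (abs_nonneg _).trans
    (hW 1 (Finset.mem_Icc.2 ⟨le_rfl, (Nat.one_le_floor_iff z).2 hz⟩))
  have hlogz : 0 ≤ Real.log z := Real.log_nonneg hz
  rw [← sum_ite_split_eq, ← Finset.sum_sub_distrib]
  calc _ ≤ ∑ n ∈ Finset.Icc 1 ⌊z⌋₊, M * Real.log z ^ 2 * |quadraticWeight ψ n -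
          if n.Prime ∧ ψ (n : ZMod m) = 1 then 2 * Real.log n else 0| := by
        refine (Finset.abs_sum_le_sum_abs _ _).trans (Finset.sum_le_sum fun n hn ↦ ?_)
        have hn' := Finset.mem_Icc.1 hn
        rw [← mul_sub, abs_mul, abs_mul, abs_of_nonneg (sq_nonneg (Real.log n))]
        gcongr
        · exact hW n hn
        · exact_mod_cast hn'.1
        · exact (Nat.le_floor_iff (by linarith)).1 hn'.2
    _ ≤ M * Real.log z ^ 2 * (C * √z) := by
        rw [← Finset.mul_sum]
        exact mul_le_mul_of_nonneg_left (hsum z hz) (by positivity)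
    _ = C * M * Real.log z * √z * Real.log z := by ring
    _ ≤ C * M * Real.log z * √z * (2 * √z) := by
        gcongr
        exact log_le_two_mul_sqrt (by linarith)
    _ = 2 * C * (M * z * Real.log z) := by
        linear_combination (2 * C * M * Real.log z) * Real.mul_self_sqrt (by linarith : 0 ≤ z)

lemma one_le_and_le_of_mem_Icc_floor {n : ℕ} (hn : n ∈ Finset.Icc 1 ⌊z⌋₊) :
    1 ≤ n ∧ (n : ℝ) ≤ z :=
  ⟨(Finset.mem_Icc.1 hn).1, (Nat.le_floor_iff' (by grind)).1 (Finset.mem_Icc.1 hn).2⟩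

lemma primesLE_subset_Icc (N : ℕ) : Nat.primesLE N ⊆ Finset.Icc 1 N := by
  rw [Nat.primesLE_eq_filter_Icc_one]
  exact Finset.filter_subset _ _

lemma splitPrimes_subset_primesLE (N : ℕ) : splitPrimes ψ N ⊆ Nat.primesLE N :=
  Finset.filter_subset _ _

lemma abs_log_sq_mul_sum_sub_le (hz : 1 ≤ z) (hM : 0 ≤ M)
    (hW : ∀ n ∈ Finset.Icc 1 ⌊z⌋₊, |W n| ≤ M) :
    |Real.log z ^ 2 * ∑ n ∈ Finset.Icc 1 ⌊z⌋₊, W n -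
      ∑ n ∈ Finset.Icc 1 ⌊z⌋₊, W n * Real.log n ^ 2| ≤ 2 * (M * z * Real.log z) := by
  refine (abs_log_pow_mul_sum_sub_le (fun n ↦ one_le_and_le_of_mem_Icc_floor) hW 2).trans ?_
  have hsum := mul_le_mul_of_nonneg_left (sum_log_sub_log_le hz)
    (mul_nonneg (mul_nonneg zero_le_two (Real.log_nonneg hz)) hM)
  simp only [Nat.cast_ofNat, Nat.reduceSub, pow_one]
  linarith

lemma exists_abs_log_cube_mul_sum_splitPrimes_sub_le (ψ : MulChar (ZMod m) ℤ) :
    ∃ C > 0, ∀ (z M : ℝ) (W : ℕ → ℝ), 1 < z → 0 ≤ M → (∀ n ∈ Finset.Icc 1 ⌊z⌋₊, |W n| ≤ M) →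
      |Real.log z ^ 3 * ∑ p ∈ splitPrimes ψ ⌊z⌋₊, W p -
        ∑ p ∈ splitPrimes ψ ⌊z⌋₊, W p * Real.log p ^ 3| ≤ C * (M * z * Real.log z) := by
  obtain ⟨C, hC, hprimes⟩ := exists_sum_primesLE_log_sub_log_le
  refine ⟨3 * C, by positivity, fun z M W hz hM hW ↦ ?_⟩
  have hlog : 0 < Real.log z := Real.log_pos hz
  have hIcc {p : ℕ} (hp : p ∈ splitPrimes ψ ⌊z⌋₊) : p ∈ Finset.Icc 1 ⌊z⌋₊ :=
    primesLE_subset_Icc _ (splitPrimes_subset_primesLE _ hp)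
  refine (abs_log_pow_mul_sum_sub_le (fun n hn ↦ one_le_and_le_of_mem_Icc_floor (hIcc hn))
    (fun n hn ↦ hW n (hIcc hn)) 3).trans ?_
  calc _ ≤ 3 * Real.log z ^ 2 * (M * (C * (z / Real.log z))) := by
        simp only [Nat.cast_ofNat, Nat.reduceSub]
        gcongr
        refine le_trans (Finset.sum_le_sum_of_subset_of_nonneg (splitPrimes_subset_primesLE _)
          fun n hn _ ↦ ?_) (hprimes z hz)
        obtain ⟨hn1, hnz⟩ := one_le_and_le_of_mem_Icc_floor (primesLE_subset_Icc _ hn)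
        exact sub_nonneg.2 (Real.log_le_log (by exact_mod_cast hn1) hnz)
    _ = _ := by field_simp

lemma exists_abs_sum_splitPrimes_sub_le_of_weighted [NeZero m] (hψ : ψ.IsQuadratic) :
    ∃ C > 0, ∀ (z M A : ℝ) (W : ℕ → ℝ), 1 < z → (∀ n ∈ Finset.Icc 1 ⌊z⌋₊, |W n| ≤ M) →
      |∑ n ∈ Finset.Icc 1 ⌊z⌋₊, W n * Real.log n ^ 2 * quadraticWeight ψ n -
        ∑ n ∈ Finset.Icc 1 ⌊z⌋₊, W n * Real.log n ^ 2| ≤ A * (M * z * Real.log z) →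
      |∑ p ∈ splitPrimes ψ ⌊z⌋₊, W p - (∑ n ∈ Finset.Icc 1 ⌊z⌋₊, W n) / (2 * Real.log z)| ≤
        (C + A) * (M * z / (2 * Real.log z ^ 2)) := by
  obtain ⟨C₁, hC₁, hweight⟩ := exists_abs_sum_mul_quadraticWeight_sub_le hψ
  obtain ⟨C₂, hC₂, hsplit⟩ := exists_abs_log_cube_mul_sum_splitPrimes_sub_le ψ
  refine ⟨C₁ + 2 * C₂ + 2, by positivity, fun z M A W hz hW hA ↦ ?_⟩
  have hM : 0 ≤ M := (abs_nonneg _).trans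
    (hW 1 (Finset.mem_Icc.2 ⟨le_rfl, (Nat.one_le_floor_iff z).2 hz.le⟩))
  have hlog : 0 < Real.log z := Real.log_pos hz
  have hall := abs_le.1 (abs_log_sq_mul_sum_sub_le hz.le hM hW)
  have hsplit := abs_le.1 (hsplit z M W hz hM hW)
  have hweight := abs_le.1 (hweight z M W hz.le hW)
  rw [abs_le] at hA
  set S := ∑ n ∈ Finset.Icc 1 ⌊z⌋₊, W n
  set T := ∑ p ∈ splitPrimes ψ ⌊z⌋₊, W p
  have htotal : |2 * Real.log z ^ 3 * T - Real.log z ^ 2 * S| ≤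
      (C₁ + 2 * C₂ + 2 + A) * (M * z * Real.log z) :=
    abs_le.2 ⟨by linarith, by linarith⟩
  have hquot : T - S / (2 * Real.log z) =
      (2 * Real.log z ^ 3 * T - Real.log z ^ 2 * S) / (2 * Real.log z ^ 3) := by field_simp
  rw [hquot, abs_div, abs_of_pos (by positivity : 0 < 2 * Real.log z ^ 3),
    div_le_iff₀ (by positivity)]
  refine htotal.trans_eq ?_
  field_simp

lemma abs_sum_splitPrimes_sub_le_of_le (hz : 1 < z) (hz8 : z ≤ 8)
    (hW : ∀ n ∈ Finset.Icc 1 ⌊z⌋₊, |W n| ≤ M) :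
    |∑ p ∈ splitPrimes ψ ⌊z⌋₊, W p - (∑ n ∈ Finset.Icc 1 ⌊z⌋₊, W n) / (2 * Real.log z)| ≤
      12 * (M * z / Real.log z ^ 2) := by
  have hM : 0 ≤ M := (abs_nonneg _).trans
    (hW 1 (Finset.mem_Icc.2 ⟨le_rfl, (Nat.one_le_floor_iff z).2 hz.le⟩))
  have hlog : 0 < Real.log z := Real.log_pos hz
  have hlog3 : Real.log z ≤ 3 := by
    have hlog8 : Real.log 8 = 3 * Real.log 2 := by
      rw [show (8 : ℝ) = 2 ^ 3 by norm_num, Real.log_pow]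
      norm_num
    linarith [Real.log_le_log (by linarith) hz8, Real.log_two_lt_d9]
  have hsum : ∀ s ⊆ Finset.Icc 1 ⌊z⌋₊, |∑ n ∈ s, W n| ≤ M * z := by
    intro s hs
    calc |∑ n ∈ s, W n| ≤ ∑ n ∈ Finset.Icc 1 ⌊z⌋₊, |W n| :=
          (Finset.abs_sum_le_sum_abs _ _).trans
            (Finset.sum_le_sum_of_subset_of_nonneg hs fun _ _ _ ↦ abs_nonneg _)
      _ ≤ ∑ _n ∈ Finset.Icc 1 ⌊z⌋₊, M := Finset.sum_le_sum hW
      _ = ⌊z⌋₊ * M := by simp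
      _ ≤ M * z := by
          rw [mul_comm]
          exact mul_le_mul_of_nonneg_left (Nat.floor_le (by linarith)) hM
  have hsplit := hsum _ ((splitPrimes_subset_primesLE (ψ := ψ) _).trans (primesLE_subset_Icc _))
  refine (abs_sub _ _).trans ?_
  rw [abs_div, abs_of_pos (by positivity : 0 < 2 * Real.log z)]
  calc _ ≤ M * z + M * z / (2 * Real.log z) := by
        gcongr
        exact hsum _ subset_rfl
    _ = (Real.log z ^ 2 + Real.log z / 2) * (M * z / Real.log z ^ 2) := by field_simp
    _ ≤ _ := by
        gcongr
        nlinarith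

theorem exists_abs_sum_splitPrimes_sub_le [NeZero m] (hψ : ψ.IsQuadratic) {A : ℝ} (hA : 0 ≤ A) :
    ∃ C > 0, ∀ (z M : ℝ) (W : ℕ → ℝ), 1 < z → (∀ n ∈ Finset.Icc 1 ⌊z⌋₊, |W n| ≤ M) →
      (8 ≤ z → |∑ n ∈ Finset.Icc 1 ⌊z⌋₊, W n * Real.log n ^ 2 * quadraticWeight ψ n -
        ∑ n ∈ Finset.Icc 1 ⌊z⌋₊, W n * Real.log n ^ 2| ≤ A * (M * z * Real.log z)) →
      |∑ p ∈ splitPrimes ψ ⌊z⌋₊, W p - (∑ n ∈ Finset.Icc 1 ⌊z⌋₊, W n) / (2 * Real.log z)| ≤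
        C * (M * z / Real.log z ^ 2) := by
  obtain ⟨C, hC, hweighted⟩ := exists_abs_sum_splitPrimes_sub_le_of_weighted hψ
  refine ⟨C + A + 12, by positivity, fun z M W hz hW hsum ↦ ?_⟩
  have hM : 0 ≤ M := (abs_nonneg _).trans
    (hW 1 (Finset.mem_Icc.2 ⟨le_rfl, (Nat.one_le_floor_iff z).2 hz.le⟩))
  have hlog : 0 < Real.log z := Real.log_pos hz
  rcases le_total 8 z with h8 | h8
  · refine (hweighted z M A W hz hW (hsum h8)).trans ?_
    refine mul_le_mul (by linarith) ?_ (by positivity) (by positivity)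
    gcongr
    linarith [sq_nonneg (Real.log z)]
  · refine (abs_sum_splitPrimes_sub_le_of_le hz h8 hW).trans ?_
    gcongr
    linarith

theorem exists_abs_card_splitPrimes_sub_le [NeZero m] (hψ : ψ ≠ 1) (hquad : ψ.IsQuadratic) :
    ∃ C > 0, ∀ z : ℝ, 1 < z →
      |(splitPrimes ψ ⌊z⌋₊).card - z / (2 * Real.log z)| ≤ C * (z / Real.log z ^ 2) := by
  obtain ⟨A, hA, hpartial⟩ := exists_abs_partialSum_quadraticWeight_sub_le hψ hquad
  obtain ⟨C, hC, htransfer⟩ := exists_abs_sum_splitPrimes_sub_le hquad hA.le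
  refine ⟨C + 1, by positivity, fun z hz ↦ ?_⟩
  have hlog : 0 < Real.log z := Real.log_pos hz
  have hlogz : Real.log z ≤ z := Real.log_le_self (by linarith)
  have hcount : |((splitPrimes ψ ⌊z⌋₊).card : ℝ) - ⌊z⌋₊ / (2 * Real.log z)| ≤
      C * (z / Real.log z ^ 2) := by
    simpa using htransfer z 1 (fun _ ↦ 1) hz (by simp) fun h8 ↦ by
      simpa [partialSum, mul_comm] using hpartial z h8
  have hfloor : |(⌊z⌋₊ : ℝ) / (2 * Real.log z) - z / (2 * Real.log z)| ≤ z / Real.log z ^ 2 := by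
    rw [← sub_div, abs_div, abs_of_pos (by positivity : 0 < 2 * Real.log z), abs_sub_comm,
      abs_of_nonneg (sub_nonneg.2 (Nat.floor_le (by linarith)))]
    calc (z - ⌊z⌋₊) / (2 * Real.log z) ≤ 1 / (1 * Real.log z) := by
          gcongr
          · linarith [Nat.lt_floor_add_one z]
          · norm_num
      _ = Real.log z / Real.log z ^ 2 := by field_simp
      _ ≤ z / Real.log z ^ 2 := by gcongr
  refine (abs_sub_le _ _ _).trans ((add_le_add hcount hfloor).trans_eq ?_)
  ring

lemma abs_sum_sub_natCast_sub_le (hz : 0 ≤ z) :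
    |∑ n ∈ Finset.Icc 1 ⌊z⌋₊, (z - n) - z ^ 2 / 2| ≤ z := by
  have hsum : ∑ n ∈ Finset.Icc 1 ⌊z⌋₊, (n : ℝ) = ⌊z⌋₊ * (⌊z⌋₊ + 1) / 2 := by
    induction ⌊z⌋₊ with
    | zero => simp
    | succ N ih =>
      rw [Finset.sum_Icc_succ_top (by lia), ih]
      push_cast
      ring
  have hfloor := Nat.floor_le hz
  have hlt := Nat.lt_floor_add_one z
  rw [Finset.sum_sub_distrib, hsum, Finset.sum_const, Nat.card_Icc, Nat.add_sub_cancel,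
    nsmul_eq_mul, abs_le]
  constructor <;> nlinarith

theorem exists_abs_sum_splitPrimes_sub_natCast_sub_le [NeZero m] (hψ : ψ ≠ 1)
    (hquad : ψ.IsQuadratic) :
    ∃ C > 0, ∀ z : ℝ, 1 < z →
      |∑ p ∈ splitPrimes ψ ⌊z⌋₊, (z - p) - z ^ 2 / (4 * Real.log z)| ≤
        C * (z ^ 2 / Real.log z ^ 2) := by
  obtain ⟨A, hA, hriesz⟩ := exists_abs_rieszSum_quadraticWeight_sub_le hψ
  obtain ⟨C, hC, htransfer⟩ := exists_abs_sum_splitPrimes_sub_le hquad hA.le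
  refine ⟨C + 1, by positivity, fun z hz ↦ ?_⟩
  have hlog : 0 < Real.log z := Real.log_pos hz
  have hlogz : Real.log z ≤ z := Real.log_le_self (by linarith)
  have hsplit : |∑ p ∈ splitPrimes ψ ⌊z⌋₊, (z - p) -
      (∑ n ∈ Finset.Icc 1 ⌊z⌋₊, (z - n)) / (2 * Real.log z)| ≤ C * (z * z / Real.log z ^ 2) := by
    refine htransfer z z (fun n ↦ z - n) hz (fun n hn ↦ ?_) fun h8 ↦ ?_
    · have := (one_le_and_le_of_mem_Icc_floor hn).2
      rw [abs_of_nonneg (by linarith)]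
      linarith [n.cast_nonneg (α := ℝ)]
    · have hlog1 : 1 ≤ Real.log z := (Real.le_log_iff_exp_le (by linarith)).2
        (by linarith [Real.exp_one_lt_three])
      calc _ = |rieszSum (fun n ↦ quadraticWeight ψ n * Real.log n ^ 2) z -
            rieszSum (fun n ↦ Real.log n ^ 2) z| := by
              simp only [rieszSum, mul_comm, mul_left_comm]
        _ ≤ A * z ^ 2 := hriesz z (by linarith)
        _ ≤ A * (z * z * Real.log z) := by
            gcongr
            nlinarith
  have hall : |(∑ n ∈ Finset.Icc 1 ⌊z⌋₊, (z - n)) / (2 * Real.log z) - z ^ 2 / (4 * Real.log z)| ≤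
      z ^ 2 / Real.log z ^ 2 := by
    rw [show z ^ 2 / (4 * Real.log z) = z ^ 2 / 2 / (2 * Real.log z) by ring, ← sub_div, abs_div,
      abs_of_pos (by positivity : 0 < 2 * Real.log z)]
    calc _ ≤ z / (1 * Real.log z) := by
          gcongr
          · exact abs_sum_sub_natCast_sub_le (by linarith)
          · norm_num
      _ = z * Real.log z / Real.log z ^ 2 := by field_simp
      _ ≤ z ^ 2 / Real.log z ^ 2 := by
          rw [sq z]
          gcongr
  refine (abs_sub_le _ _ _).trans ((add_le_add hsplit hall).trans_eq ?_)
  ring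

theorem exists_abs_sum_splitPrimes_natCast_sub_le [NeZero m] (hψ : ψ ≠ 1)
    (hquad : ψ.IsQuadratic) :
    ∃ C > 0, ∀ z : ℝ, 1 < z →
      |∑ p ∈ splitPrimes ψ ⌊z⌋₊, (p : ℝ) - z ^ 2 / (4 * Real.log z)| ≤
        C * (z ^ 2 / Real.log z ^ 2) := by
  obtain ⟨C₁, hC₁, hcard⟩ := exists_abs_card_splitPrimes_sub_le hψ hquad
  obtain ⟨C₂, hC₂, hsum⟩ := exists_abs_sum_splitPrimes_sub_natCast_sub_le hψ hquad
  refine ⟨C₁ + C₂, by positivity, fun z hz ↦ ?_⟩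
  have hcard := mul_le_mul_of_nonneg_left (hcard z hz) (by linarith : 0 ≤ z)
  rw [← abs_of_pos (by linarith : 0 < z), ← abs_mul, abs_of_pos (by linarith : 0 < z)] at hcard
  calc _ = |z * ((splitPrimes ψ ⌊z⌋₊).card - z / (2 * Real.log z)) -
        (∑ p ∈ splitPrimes ψ ⌊z⌋₊, (z - p) - z ^ 2 / (4 * Real.log z))| := by
          rw [Finset.sum_sub_distrib, Finset.sum_const, nsmul_eq_mul]
          ring_nf
    _ ≤ z * (C₁ * (z / Real.log z ^ 2)) + C₂ * (z ^ 2 / Real.log z ^ 2) :=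
        (abs_sub _ _).trans (add_le_add hcard (hsum z hz))
    _ = _ := by ring

end SplitPrimes

section Representations

variable {D c d n p : ℤ}

/-- The representations of `n` by the binary quadratic form `x² + Dy²`. -/
def formReps (D n : ℤ) : Set (ℤ × ℤ) := {z | z.1 ^ 2 + D * z.2 ^ 2 = n}

/-- The number of representations of `n` by the binary quadratic form `x² + Dy²`; this is the
junk value `0` when there are infinitely many. -/
noncomputable def repCount (D n : ℤ) : ℕ := (formReps D n).ncard

/-- Multiplication by `c + d√-D`, in the basis `1, √-D`. -/
def mulNormElement (D c d : ℤ) (z : ℤ × ℤ) : ℤ × ℤ := (c * z.1 - D * d * z.2, c * z.2 + d * z.1)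

lemma finite_formReps (hD : 0 < D) (n : ℤ) : (formReps D n).Finite := by
  refine (Set.finite_Icc ((-n, -n) : ℤ × ℤ) (n, n)).subset fun z (hz : _ = n) ↦ ?_
  have hsq (t : ℤ) : |t| ≤ t ^ 2 := sq_abs t ▸ Int.le_self_sq |t|
  have h₂ : z.2 ^ 2 ≤ D * z.2 ^ 2 := le_mul_of_one_le_left (sq_nonneg _) hD
  have h₁ := abs_le.1 ((hsq z.1).trans (by linarith [sq_nonneg z.2] : z.1 ^ 2 ≤ n))
  have h₃ := abs_le.1 ((hsq z.2).trans (by linarith [sq_nonneg z.1] : z.2 ^ 2 ≤ n))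
  exact ⟨⟨h₁.1, h₃.1⟩, h₁.2, h₃.2⟩

lemma repCount_one (hD : 1 < D) : repCount D 1 = 2 := by
  have hreps : formReps D 1 = {(1, 0), (-1, 0)} := by
    ext ⟨x, y⟩
    simp only [formReps, Set.mem_ofPred_eq, Set.mem_insert_iff, Set.mem_singleton_iff,
      Prod.mk.injEq]
    constructor
    · intro h
      obtain rfl : y = 0 := by
        by_contra hy
        have : 0 < y ^ 2 := by positivity
        nlinarith [sq_nonneg x]
      simpa using h
    · rintro (⟨rfl, rfl⟩ | ⟨rfl, rfl⟩) <;> norm_num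
  rw [repCount, hreps, Set.ncard_pair (by decide)]

lemma repCount_two_mul (n : ℤ) : repCount 2 (2 * n) = repCount 2 n := by
  have himage : formReps 2 (2 * n) = (fun z : ℤ × ℤ ↦ (2 * z.2, z.1)) '' formReps 2 n := by
    ext ⟨x, y⟩
    simp only [formReps, Set.mem_ofPred_eq, Set.mem_image, Prod.mk.injEq, Prod.exists]
    constructor
    · intro h
      obtain ⟨k, rfl⟩ : 2 ∣ x :=
        Int.prime_two.dvd_of_dvd_pow (n := 2) ⟨n - y ^ 2, by linarith⟩
      exact ⟨y, k, by linarith, rfl, rfl⟩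
    · rintro ⟨a, b, h, rfl, rfl⟩
      linear_combination 2 * h
  rw [repCount, himage, Set.ncard_image_of_injective, repCount]
  rintro ⟨a, b⟩ ⟨a', b'⟩ h
  simpa [and_comm] using h

lemma ncard_formReps_dvd_of_not_dvd (hp : p ≠ 0) (hn : ¬ p ∣ n) :
    {z ∈ formReps D (p * n) | p ∣ z.1 ∧ p ∣ z.2}.ncard = 0 := by
  have hempty : {z ∈ formReps D (p * n) | p ∣ z.1 ∧ p ∣ z.2} = ∅ := by
    rw [Set.eq_empty_iff_forall_notMem]
    rintro ⟨_, _⟩ ⟨h, ⟨a, rfl⟩, ⟨b, rfl⟩⟩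
    have h : (p * a) ^ 2 + D * (p * b) ^ 2 = p * n := h
    exact hn ⟨a ^ 2 + D * b ^ 2, mul_left_cancel₀ hp (by linarith)⟩
  rw [hempty, Set.ncard_empty]

lemma ncard_formReps_dvd_mul_mul (hp : p ≠ 0) :
    {z ∈ formReps D (p * (p * n)) | p ∣ z.1 ∧ p ∣ z.2}.ncard = repCount D n := by
  have himage : {z ∈ formReps D (p * (p * n)) | p ∣ z.1 ∧ p ∣ z.2} =
      (fun z : ℤ × ℤ ↦ (p * z.1, p * z.2)) '' formReps D n := by
    ext ⟨x, y⟩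
    simp only [formReps, Set.mem_ofPred_eq, Set.mem_image, Prod.mk.injEq, Prod.exists]
    constructor
    · rintro ⟨h, ⟨a, rfl⟩, ⟨b, rfl⟩⟩
      exact ⟨a, b, mul_left_cancel₀ hp (mul_left_cancel₀ hp (by linarith)), rfl, rfl⟩
    · rintro ⟨a, b, h, rfl, rfl⟩
      exact ⟨by rw [← h]; ring, ⟨a, rfl⟩, ⟨b, rfl⟩⟩
  rw [himage, Set.ncard_image_of_injective, repCount]
  rintro ⟨a, b⟩ ⟨a', b'⟩ h
  simpa [hp] using h

lemma not_dvd_of_sq_add_mul_sq_eq (hp : Prime p) (hpD : ¬ p ∣ D)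
    (hcd : c ^ 2 + D * d ^ 2 = p) : ¬ p ∣ c ∧ ¬ p ∣ d := by
  have hiff : p ∣ c ↔ p ∣ d := by
    have hdvd : p ∣ c ^ 2 + D * d ^ 2 := dvd_of_eq hcd.symm
    constructor
    · intro hc
      have := (dvd_add_right (dvd_pow hc two_ne_zero)).1 hdvd
      exact hp.dvd_of_dvd_pow ((hp.dvd_or_dvd this).resolve_left hpD)
    · intro hd
      exact hp.dvd_of_dvd_pow
        ((dvd_add_left ((dvd_pow hd two_ne_zero).mul_left D)).1 hdvd)
  have hnot : ¬ (p ∣ c ∧ p ∣ d) := by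
    rintro ⟨⟨u, rfl⟩, ⟨v, rfl⟩⟩
    have hunit : p * (u ^ 2 + D * v ^ 2) = 1 := mul_left_cancel₀ hp.ne_zero (by linarith)
    exact hp.not_isUnit (IsUnit.of_mul_eq_one _ hunit)
  tauto

lemma mulNormElement_injective (hp : p ≠ 0) (hcd : c ^ 2 + D * d ^ 2 = p) :
    Function.Injective (mulNormElement D c d) := by
  rintro ⟨a, b⟩ ⟨a', b'⟩ h
  simp only [mulNormElement, Prod.mk.injEq] at h
  obtain ⟨h₁, h₂⟩ := h
  ext
  · exact mul_left_cancel₀ hp (by rw [← hcd]; linear_combination c * h₁ + D * d * h₂)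
  · exact mul_left_cancel₀ hp (by rw [← hcd]; linear_combination c * h₂ - d * h₁)

lemma image_mulNormElement_formReps (hp : Prime p) (hcd : c ^ 2 + D * d ^ 2 = p) :
    mulNormElement D c d '' formReps D n =
      {z ∈ formReps D (p * n) | p ∣ c * z.2 - d * z.1} := by
  ext ⟨x, y⟩
  simp only [formReps, mulNormElement, Set.mem_ofPred_eq, Set.mem_image, Prod.mk.injEq,
    Prod.exists]
  constructor
  · rintro ⟨a, b, hab, rfl, rfl⟩
    exact ⟨by rw [← hab, ← hcd]; ring, b, by rw [← hcd]; ring⟩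
  · rintro ⟨hxy, t, ht⟩
    have hsq : (c * x + D * d * y) ^ 2 = p * (p * (n - D * t ^ 2)) := by
      linear_combination (x ^ 2 + D * y ^ 2) * hcd + p * hxy -
        D * (c * y - d * x + p * t) * ht
    obtain ⟨u, hu⟩ := hp.dvd_of_dvd_pow (Dvd.intro _ hsq.symm)
    have hx : c * u - D * d * t = x := mul_left_cancel₀ hp.ne_zero (by
      linear_combination -c * hu + D * d * ht + x * hcd)
    have hy : c * t + d * u = y := mul_left_cancel₀ hp.ne_zero (by
      linear_combination -c * ht - d * hu + y * hcd)
    refine ⟨u, t, mul_left_cancel₀ hp.ne_zero ?_, hx, hy⟩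
    rw [← hxy, ← hx, ← hy, ← hcd]
    ring

lemma formReps_subset_union (hp : Prime p) (hcd : c ^ 2 + D * d ^ 2 = p) :
    formReps D (p * n) ⊆
      {z ∈ formReps D (p * n) | p ∣ c * z.2 - d * z.1} ∪
        {z ∈ formReps D (p * n) | p ∣ c * z.2 - -d * z.1} := by
  intro z (hz : z.1 ^ 2 + D * z.2 ^ 2 = p * n)
  have hdvd : p ∣ (c * z.2 - d * z.1) * (c * z.2 - -d * z.1) :=
    ⟨z.2 ^ 2 - d ^ 2 * n, by linear_combination z.2 ^ 2 * hcd - d ^ 2 * hz⟩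
  exact (hp.dvd_or_dvd hdvd).imp (fun h ↦ ⟨hz, h⟩) fun h ↦ ⟨hz, h⟩

lemma dvd_mul_sub_mul_and_neg_iff (hp : Prime p) (hpD : ¬ p ∣ 2 * D)
    (hcd : c ^ 2 + D * d ^ 2 = p) (z : ℤ × ℤ) :
    p ∣ c * z.2 - d * z.1 ∧ p ∣ c * z.2 - -d * z.1 ↔ p ∣ z.1 ∧ p ∣ z.2 := by
  have hp₂ : ¬ p ∣ 2 := fun h ↦ hpD (h.mul_right D)
  obtain ⟨hc, hd⟩ := not_dvd_of_sq_add_mul_sq_eq hp (fun h ↦ hpD (h.mul_left 2)) hcd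
  have hcancel {e t : ℤ} (he : ¬ p ∣ e) (h : p ∣ 2 * (e * t)) : p ∣ t :=
    (hp.dvd_or_dvd ((hp.dvd_or_dvd h).resolve_left hp₂)).resolve_left he
  constructor
  · rintro ⟨h₁, h₂⟩
    exact ⟨hcancel hd ((dvd_sub h₂ h₁).trans (dvd_of_eq (by ring))),
      hcancel hc ((dvd_add h₂ h₁).trans (dvd_of_eq (by ring)))⟩
  · rintro ⟨h₁, h₂⟩
    exact ⟨dvd_sub (h₂.mul_left c) (h₁.mul_left d), dvd_sub (h₂.mul_left c) (h₁.mul_left (-d))⟩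

-- Every representation of `p * n` is divisible by `c + d√-D` or by its conjugate, and it is
-- divisible by both exactly when it is divisible by `p`.
lemma repCount_mul_add_ncard (hD : 0 < D) (hp : Prime p) (hpD : ¬ p ∣ 2 * D)
    (hcd : c ^ 2 + D * d ^ 2 = p) (n : ℤ) :
    repCount D (p * n) + {z ∈ formReps D (p * n) | p ∣ z.1 ∧ p ∣ z.2}.ncard =
      2 * repCount D n := by
  have hcd' : c ^ 2 + D * (-d) ^ 2 = p := by rwa [neg_sq]
  set A := {z ∈ formReps D (p * n) | p ∣ c * z.2 - d * z.1} with hA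
  set B := {z ∈ formReps D (p * n) | p ∣ c * z.2 - -d * z.1} with hB
  have hcardA : A.ncard = repCount D n := by
    rw [hA, ← image_mulNormElement_formReps hp hcd,
      Set.ncard_image_of_injective _ (mulNormElement_injective hp.ne_zero hcd), repCount]
  have hcardB : B.ncard = repCount D n := by
    rw [hB, ← image_mulNormElement_formReps hp hcd',
      Set.ncard_image_of_injective _ (mulNormElement_injective hp.ne_zero hcd'), repCount]
  have hunion : A ∪ B = formReps D (p * n) :=
    (Set.union_subset (Set.sep_subset _ _) (Set.sep_subset _ _)).antisymm
      (formReps_subset_union hp hcd)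
  have hinter : A ∩ B = {z ∈ formReps D (p * n) | p ∣ z.1 ∧ p ∣ z.2} := by
    rw [hA, hB, ← Set.sep_and]
    exact Set.sep_ext_iff.2 fun z _ ↦ dvd_mul_sub_mul_and_neg_iff hp hpD hcd z
  have hfin := finite_formReps hD (p * n)
  have hcard := Set.ncard_union_add_ncard_inter A B
    (hfin.subset (Set.sep_subset _ _)) (hfin.subset (Set.sep_subset _ _))
  rw [hunion, hinter, hcardA, hcardB, ← two_mul] at hcard
  exact hcard

lemma repCount_pow_mul_of_norm (hD : 0 < D) (hp : Prime p) (hpD : ¬ p ∣ 2 * D)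
    (hcd : c ^ 2 + D * d ^ 2 = p) (hn : ¬ p ∣ n) (k : ℕ) :
    repCount D (p ^ k * n) = (k + 1) * repCount D n := by
  induction k using Nat.twoStepInduction with
  | zero => simp
  | one =>
    have h := repCount_mul_add_ncard hD hp hpD hcd n
    rw [ncard_formReps_dvd_of_not_dvd hp.ne_zero hn] at h
    simpa using h
  | more k ih₀ ih₁ =>
    have h := repCount_mul_add_ncard hD hp hpD hcd (p * (p ^ k * n))
    have hpow₁ : p * (p ^ k * n) = p ^ (k + 1) * n := by ring
    have hpow₂ : p * (p ^ (k + 1) * n) = p ^ (k + 2) * n := by ring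
    rw [ncard_formReps_dvd_mul_mul hp.ne_zero, hpow₁, hpow₂, ih₀, ih₁] at h
    linarith

lemma repCount_pow_mul_of_inert (hp : p ≠ 0)
    (hinert : ∀ a b : ℤ, p ∣ a ^ 2 + D * b ^ 2 → p ∣ a ∧ p ∣ b) (hn : ¬ p ∣ n) (k : ℕ) :
    repCount D (p ^ k * n) = if Odd k then 0 else repCount D n := by
  have hsep (l : ℤ) : {z ∈ formReps D (p * l) | p ∣ z.1 ∧ p ∣ z.2} = formReps D (p * l) :=
    Set.sep_eq_self_iff_mem_true.2 fun z hz ↦ hinert _ _ ⟨l, hz⟩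
  induction k using Nat.twoStepInduction with
  | zero => simp
  | one =>
    rw [pow_one, repCount, ← hsep, ncard_formReps_dvd_of_not_dvd hp hn]
    simp
  | more k ih _ =>
    rw [pow_add, sq, mul_comm (p ^ k), mul_assoc, mul_assoc, repCount, ← hsep,
      ncard_formReps_dvd_mul_mul hp, ih]
    simp [Nat.odd_add]

lemma dvd_and_dvd_of_not_isSquare {p : ℕ} [Fact p.Prime]
    (hsq : ¬ IsSquare (-D : ZMod p)) {a b : ℤ} (hab : (p : ℤ) ∣ a ^ 2 + D * b ^ 2) :
    (p : ℤ) ∣ a ∧ (p : ℤ) ∣ b := by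
  have hb : (p : ℤ) ∣ b := by
    by_contra hb
    have hb₀ : (b : ZMod p) ≠ 0 := by rwa [Ne, ZMod.intCast_zmod_eq_zero_iff_dvd]
    have hzero := (ZMod.intCast_zmod_eq_zero_iff_dvd _ _).2 hab
    push_cast at hzero
    refine hsq ⟨a / b, ?_⟩
    field_simp
    linear_combination -hzero
  have hp : Prime (p : ℤ) := Nat.prime_iff_prime_int.1 Fact.out
  exact ⟨hp.dvd_of_dvd_pow ((dvd_add_left ((dvd_pow hb two_ne_zero).mul_left D)).1 hab), hb⟩

-- Thue's lemma: by the pigeonhole principle `s` is a quotient of two integers below `√p`.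
lemma exists_sq_le_dvd_sq_add_mul_sq {p : ℕ} [hp : Fact p.Prime]
    (hsq : IsSquare (-D : ZMod p)) :
    ∃ a b : ℤ, (a ≠ 0 ∨ b ≠ 0) ∧ a ^ 2 < p ∧ b ^ 2 < p ∧ (p : ℤ) ∣ a ^ 2 + D * b ^ 2 := by
  obtain ⟨s, hs⟩ := hsq
  set k := Nat.sqrt p
  have hk : (k : ℤ) * k < p := by
    refine mod_cast (Nat.sqrt_le p).lt_of_ne fun h ↦ ?_
    exact (Nat.prime_iff.1 hp.out).irreducible.not_isSquare ⟨k, h.symm⟩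
  obtain ⟨u, hu, v, hv, huv, heq⟩ := Finset.exists_ne_map_eq_of_card_lt_of_maps_to
    (s := Finset.range (k + 1) ×ˢ Finset.range (k + 1)) (t := (Finset.univ : Finset (ZMod p)))
    (f := fun x ↦ (x.1 : ZMod p) - s * x.2)
    (by simpa [ZMod.card] using Nat.lt_succ_sqrt p) (fun _ _ ↦ Finset.mem_univ _)
  simp only [Finset.mem_product, Finset.mem_range] at hu hv
  have hlt (i j : ℕ) (hi : i < k + 1) (hj : j < k + 1) : ((i : ℤ) - j) ^ 2 < p :=
    (sq_le_sq' (by omega) (by omega : (i : ℤ) - j ≤ k)).trans_lt (by rwa [sq])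
  refine ⟨(u.1 : ℤ) - v.1, (u.2 : ℤ) - v.2, ?_, hlt _ _ hu.1 hv.1, hlt _ _ hu.2 hv.2, ?_⟩
  · by_contra! h
    exact huv (Prod.ext (by omega) (by omega))
  · rw [← ZMod.intCast_zmod_eq_zero_iff_dvd]
    push_cast
    have hratio : (u.1 : ZMod p) - v.1 = s * (u.2 - v.2) := by linear_combination heq
    rw [hratio]
    linear_combination -((u.2 : ZMod p) - v.2) ^ 2 * hs

lemma exists_sq_add_two_mul_sq_eq {p : ℕ} [hp : Fact p.Prime]
    (hsq : IsSquare (-2 : ZMod p)) : ∃ c d : ℤ, c ^ 2 + 2 * d ^ 2 = p := by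
  obtain ⟨a, b, hne, ha, hb, m, hm⟩ :=
    exists_sq_le_dvd_sq_add_mul_sq (D := 2) (by exact_mod_cast hsq)
  have hpos : 0 < a ^ 2 + 2 * b ^ 2 := by
    rcases hne with h | h <;> positivity
  have hp₀ : (0 : ℤ) < p := mod_cast hp.out.pos
  have hm₀ : 0 < m := pos_of_mul_pos_right (hm ▸ hpos) hp₀.le
  have hm₃ : m < 3 := lt_of_mul_lt_mul_left (by linarith) hp₀.le
  obtain rfl | rfl : m = 1 ∨ m = 2 := by omega
  · exact ⟨a, b, by linarith⟩
  · obtain ⟨k, rfl⟩ : 2 ∣ a := Int.prime_two.dvd_of_dvd_pow (n := 2) ⟨p - b ^ 2, by linarith⟩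
    exact ⟨b, k, by linarith⟩

end Representations

section LocalFactors

open ZMod Finset

variable {n p : ℕ}

/-- The factor contributed by the exact power `p ^ k` of a prime to the number of ideals of
norm `n` in `ℤ[√-2]`. -/
def localFactor (p k : ℕ) : ℕ :=
  if χ₈' p = 1 then k + 1 else if χ₈' p = -1 ∧ Odd k then 0 else 1

lemma localFactor_zero (p : ℕ) : localFactor p 0 = 1 := by simp [localFactor]

lemma isSquare_neg_two_iff [hp : Fact p.Prime] (hp₂ : p ≠ 2) :
    IsSquare (-2 : ZMod p) ↔ χ₈' p = 1 := by
  have hodd := hp.out.eq_two_or_odd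
  rw [exists_sq_eq_neg_two_iff hp₂, χ₈'_nat_eq_if_mod_eight]
  split_ifs <;> simp_all

lemma repCount_two_pow_mul (m : ℤ) (k : ℕ) : repCount 2 (2 ^ k * m) = repCount 2 m := by
  induction k with
  | zero => simp
  | succ k ih => rw [pow_succ', mul_assoc, repCount_two_mul, ih]

lemma repCount_pow_mul (hp : p.Prime) {m : ℤ} (hm : ¬ (p : ℤ) ∣ m) (k : ℕ) :
    repCount 2 (p ^ k * m) = localFactor p k * repCount 2 m := by
  have := Fact.mk hp
  have hpi : Prime (p : ℤ) := Nat.prime_iff_prime_int.1 hp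
  rcases eq_or_ne p 2 with rfl | hp₂
  · have hlocal : localFactor 2 k = 1 := rfl
    simpa [hlocal] using repCount_two_pow_mul m k
  have hiff := isSquare_neg_two_iff hp₂
  by_cases hsq : IsSquare (-2 : ZMod p)
  · obtain ⟨c, d, hcd⟩ := exists_sq_add_two_mul_sq_eq hsq
    have hpD : ¬ (p : ℤ) ∣ 2 * 2 := fun h ↦
      hp₂ ((Nat.prime_dvd_prime_iff_eq hp Nat.prime_two).1
        (hp.dvd_of_dvd_pow (n := 2) (mod_cast h)))
    rw [repCount_pow_mul_of_norm two_pos hpi hpD hcd hm, localFactor, if_pos (hiff.1 hsq)]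
  · have hneg : χ₈' p = -1 := by
      have hne := mt hiff.2 hsq
      rw [χ₈'_nat_eq_if_mod_eight] at hne ⊢
      have hodd := hp.eq_two_or_odd
      split_ifs at hne ⊢ <;> omega
    rw [repCount_pow_mul_of_inert hpi.ne_zero
      (fun a b hab ↦ dvd_and_dvd_of_not_isSquare (by exact_mod_cast hsq) hab) hm]
    by_cases hk : Odd k <;> simp [localFactor, hneg, hk]

lemma repCount_eq_prod (hn : n ≠ 0) : repCount 2 n = 2 * n.factorization.prod localFactor := by
  induction n using Nat.recOnPrimePow with
  | zero => contradiction
  | one => simp [repCount_one]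
  | prime_pow_mul a p k hp ha _ ih =>
    have hcoprime : Nat.Coprime (p ^ k) a := ((hp.coprime_iff_not_dvd).2 ha).pow_left k
    rw [Nat.factorization_mul_of_coprime hcoprime,
      Finsupp.prod_add_index_of_disjoint hcoprime.disjoint_primeFactors,
      hp.factorization_pow, Finsupp.prod_single_index (localFactor_zero p)]
    push_cast
    rw [repCount_pow_mul hp (mod_cast ha), ih (right_ne_zero_of_mul hn)]
    ring

lemma fForm_eq_prod (hn : n ≠ 0) : fForm n = n.factorization.prod localFactor := by
  have hcard : Nat.card {z : ℤ × ℤ // z.1 ^ 2 + 2 * z.2 ^ 2 = (n : ℤ)} = repCount 2 n := rfl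
  rw [fForm, if_neg hn, hcard, repCount_eq_prod hn, Nat.mul_div_cancel_left _ two_pos]

lemma fForm_prod_pow {ι : Type*} {I : Finset ι} {q : ι → ℕ} (a : ι → ℕ)
    (hinj : Set.InjOn q I) (hq : ∀ i ∈ I, (q i).Prime) (hsplit : ∀ i ∈ I, χ₈' (q i) = 1) :
    fForm (∏ i ∈ I, q i ^ a i) = ∏ i ∈ I, (a i + 1) := by
  classical
  have hpow : ∀ i ∈ I, q i ^ a i ≠ 0 := fun i hi ↦ pow_ne_zero _ (hq i hi).ne_zero
  have hfac (p : ℕ) :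
      (∏ i ∈ I, q i ^ a i).factorization p = ∑ i ∈ I, if q i = p then a i else 0 := by
    rw [Nat.factorization_prod hpow, Finsupp.finsetSum_apply]
    exact sum_congr rfl fun i hi ↦ by rw [(hq i hi).factorization_pow, Finsupp.single_apply]
  have hsupport : (∏ i ∈ I, q i ^ a i).factorization.support ⊆ I.image q := by
    intro p hp
    rw [Finsupp.mem_support_iff, hfac] at hp
    obtain ⟨i, hi, hne⟩ := exists_ne_zero_of_sum_ne_zero hp
    exact mem_image.2 ⟨i, hi, (ite_ne_right_iff.1 hne).1⟩
  rw [fForm_eq_prod (prod_ne_zero_iff.2 hpow),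
    Finsupp.prod_of_support_subset _ hsupport _ fun p _ ↦ localFactor_zero p, prod_image hinj]
  refine prod_congr rfl fun i hi ↦ ?_
  have hsum : ∑ j ∈ I, (if q j = q i then a j else 0) = a i := by
    rw [sum_eq_single_of_mem i hi fun j hj hji ↦ if_neg fun h ↦ hji (hinj hj hi h), if_pos rfl]
  rw [hfac, hsum, localFactor, if_pos (hsplit i hi)]

lemma fForm_eq_prod_of_ne_zero (hn : n ≠ 0) (hf : fForm n ≠ 0) :
    fForm n = ∏ p ∈ n.primeFactors with χ₈' (p : ℕ) = 1, (n.factorization p + 1) := by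
  rw [fForm_eq_prod hn, Finsupp.prod, Nat.support_factorization] at *
  rw [prod_filter]
  refine prod_congr rfl fun p hp ↦ ?_
  have hne := prod_ne_zero_iff.1 hf p hp
  unfold localFactor at *
  split_ifs at * <;> simp_all

end LocalFactors

section LogStep

open Finset

/-- The increments `log (l + 2) - log (l + 1)` of the logarithm along the positive integers,
indexed from `0`. -/
noncomputable def logStep (l : ℕ) : ℝ := Real.log (1 + 1 / ((l : ℝ) + 1))

/-- The constant `∑ₗ log (1 + 1 / l) ^ 2`, the sum being over `l ≥ 1`. -/
noncomputable def logStepSqSum : ℝ := ∑' l, logStep l ^ 2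

lemma logStep_pos (l : ℕ) : 0 < logStep l :=
  Real.log_pos (lt_add_of_pos_right 1 (by positivity))

lemma logStep_le_one_div (l : ℕ) : logStep l ≤ 1 / ((l : ℝ) + 1) := by
  have h := Real.log_le_sub_one_of_pos (x := 1 + 1 / ((l : ℝ) + 1)) (by positivity)
  rwa [add_sub_cancel_left] at h

lemma logStep_le_one (l : ℕ) : logStep l ≤ 1 :=
  (logStep_le_one_div l).trans (div_le_self zero_le_one (by simp))

lemma sum_range_logStep (e : ℕ) : ∑ l ∈ range e, logStep l = Real.log (e + 1) := by
  induction e with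
  | zero => simp
  | succ k ih =>
    rw [sum_range_succ, ih, logStep, ← Real.log_mul (by positivity) (by positivity)]
    congr 1
    push_cast
    field_simp

lemma summable_logStep_mul_sqrt : Summable fun l ↦ logStep l * √(logStep l) := by
  have hp : Summable fun l : ℕ ↦ 1 / ((l : ℝ) + 1) ^ (3 / 2 : ℝ) := by
    simpa using (summable_nat_add_iff 1).2
      (Real.summable_one_div_nat_rpow.2 (by norm_num : (1 : ℝ) < 3 / 2))
  refine hp.of_nonneg_of_le
    (fun l ↦ mul_nonneg (logStep_pos l).le (Real.sqrt_nonneg _)) fun l ↦ ?_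
  calc logStep l * √(logStep l) ≤ 1 / ((l : ℝ) + 1) * √(1 / ((l : ℝ) + 1)) := by
        gcongr <;> exact logStep_le_one_div l
    _ = 1 / ((l : ℝ) + 1) ^ (3 / 2 : ℝ) := by
        rw [show (3 / 2 : ℝ) = 1 + 1 / 2 by norm_num, Real.rpow_add (by positivity), Real.rpow_one,
          ← Real.sqrt_eq_rpow, Real.sqrt_div zero_le_one, Real.sqrt_one]
        field_simp

lemma summable_logStep_sq : Summable fun l ↦ logStep l ^ 2 := by
  refine summable_logStep_mul_sqrt.of_nonneg_of_le (fun l ↦ sq_nonneg _) fun l ↦ ?_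
  rw [sq]
  have hpos := (logStep_pos l).le
  gcongr
  exact Real.le_sqrt_of_sq_le (pow_le_of_le_one hpos (logStep_le_one l) two_ne_zero)

lemma logStepSqSum_pos : 0 < logStepSqSum :=
  summable_logStep_sq.tsum_pos (fun _ ↦ sq_nonneg _) 0 (pow_pos (logStep_pos 0) 2)

lemma cBEFS_div_sqrt_two : cBEFS / √2 = 2 * √logStepSqSum := by
  have hc : cBEFS = √(8 * logStepSqSum) := rfl
  rw [hc, ← Real.sqrt_div' _ zero_le_two, show 8 * logStepSqSum / 2 = 2 ^ 2 * logStepSqSum by ring,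
    Real.sqrt_mul (by norm_num), Real.sqrt_sq zero_le_two]

end LogStep

section WeightedPrimeSums

open Finset

variable {y w u C : ℝ}

lemma sqrt_mul_log_sq_le (hw : 0 < w) (hw₁ : w ≤ 1) : √w * Real.log w ^ 2 ≤ 16 := by
  have hlog := (Real.abs_log_mul_self_rpow_lt w (1 / 4) hw hw₁ (by norm_num)).le
  have hsq := pow_le_pow_left₀ (abs_nonneg _) hlog 2
  rw [sq_abs, mul_pow, ← Real.rpow_mul_natCast hw.le] at hsq
  rw [Real.sqrt_eq_rpow, mul_comm]
  norm_num at hsq ⊢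
  exact hsq

lemma sqrt_mul_neg_log_le (hw : 0 < w) (hw₁ : w ≤ 1) : √w * -Real.log w ≤ 4 := by
  have hlog := (Real.abs_log_mul_self_rpow_lt w (1 / 2) hw hw₁ (by norm_num)).le
  rw [← Real.sqrt_eq_rpow] at hlog
  linarith [neg_abs_le (Real.log w * √w)]

lemma half_le_log (hu : 2 ≤ u) : 1 / 2 ≤ Real.log u := by
  linarith [Real.log_le_log two_pos hu, Real.log_two_gt_d9]

lemma log_eq_log_mul_sub_log (hw : 0 < w) (hyw : 2 ≤ y * w) :
    Real.log y = Real.log (y * w) - Real.log w := by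
  rw [Real.log_mul (left_ne_zero_of_mul (by linarith : y * w ≠ 0)) hw.ne', add_sub_cancel_right]

lemma sqrt_div_log_mul_le (hw : 0 < w) (hw₁ : w ≤ 1) (hyw : 2 ≤ y * w) :
    √w / Real.log (y * w) ≤ √w / Real.log y + 36 / Real.log y ^ 2 := by
  have ha := half_le_log hyw
  have ht := neg_nonneg.2 (Real.log_nonpos hw.le hw₁)
  have h₁ := sqrt_mul_neg_log_le hw hw₁
  have h₂ := sqrt_mul_log_sq_le hw hw₁
  rw [log_eq_log_mul_sub_log hw hyw, sub_eq_add_neg]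
  rw [← neg_sq] at h₂
  set a := Real.log (y * w)
  set t := -Real.log w
  have ha₀ : 0 < a := by linarith
  have hta : t / a ≤ 2 * t := by
    rw [div_le_iff₀ ha₀]
    nlinarith
  calc √w / a = √w / (a + t) + (√w * t + √w * t * (t / a)) / (a + t) ^ 2 := by field_simp
    _ ≤ √w / (a + t) + (√w * t + √w * t * (2 * t)) / (a + t) ^ 2 := by gcongr
    _ ≤ √w / (a + t) + 36 / (a + t) ^ 2 := by
        gcongr
        linarith

lemma sqrt_div_log_mul_sq_le (hw : 0 < w) (hw₁ : w ≤ 1) (hyw : 2 ≤ y * w) :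
    √w / Real.log (y * w) ^ 2 ≤ 81 / Real.log y ^ 2 := by
  have ha := half_le_log hyw
  have ht := neg_nonneg.2 (Real.log_nonpos hw.le hw₁)
  have h₁ := sqrt_mul_neg_log_le hw hw₁
  have h₂ := sqrt_mul_log_sq_le hw hw₁
  rw [log_eq_log_mul_sub_log hw hyw, sub_eq_add_neg]
  rw [← neg_sq] at h₂
  set a := Real.log (y * w)
  set t := -Real.log w
  have ha₀ : 0 < a := by linarith
  have hta : t / a ≤ 2 * t := by
    rw [div_le_iff₀ ha₀]
    nlinarith
  calc √w / a ^ 2 = √w * (1 + t / a) ^ 2 / (a + t) ^ 2 := by field_simp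
    _ ≤ √w * (1 + 2 * t) ^ 2 / (a + t) ^ 2 := by gcongr
    _ ≤ 81 / (a + t) ^ 2 := by
        gcongr
        linarith [Real.sqrt_le_one.2 hw₁]

lemma log_mul_le_log (hw : 0 < w) (hw₁ : w ≤ 1) (hyw : 2 ≤ y * w) :
    Real.log (y * w) ≤ Real.log y := by
  linarith [log_eq_log_mul_sub_log hw hyw, Real.log_nonpos hw.le hw₁]

lemma sq_div_log_mul_add_le (hC : 0 ≤ C) (hw : 0 < w) (hw₁ : w ≤ 1) (hyw : 2 ≤ y * w) :
    (y * w) ^ 2 / (4 * Real.log (y * w)) + C * ((y * w) ^ 2 / Real.log (y * w) ^ 2) ≤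
      y ^ 2 / (4 * Real.log y) * w ^ 2 +
        (9 + 81 * C) * (y ^ 2 / Real.log y ^ 2) * (w * √w) := by
  have h₁ := sqrt_div_log_mul_le hw hw₁ hyw
  have h₂ := sqrt_div_log_mul_sq_le hw hw₁ hyw
  have hsq : w = √w * √w := (Real.mul_self_sqrt hw.le).symm
  set s := √w
  set a := Real.log (y * w)
  set b := Real.log y
  calc (y * w) ^ 2 / (4 * a) + C * ((y * w) ^ 2 / a ^ 2)
      = y ^ 2 * w * s / 4 * (s / a) + C * (y ^ 2 * w * s * (s / a ^ 2)) := by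
        rw [hsq]
        ring
    _ ≤ y ^ 2 * w * s / 4 * (s / b + 36 / b ^ 2) + C * (y ^ 2 * w * s * (81 / b ^ 2)) := by
        gcongr
    _ = y ^ 2 / (4 * b) * w ^ 2 + (9 + 81 * C) * (y ^ 2 / b ^ 2) * (w * s) := by
        rw [hsq]
        ring

lemma sum_le_of_le_logStep {B : ℝ} (hB : 0 ≤ B) (hy : 1 < y) {F : ℕ → ℝ}
    (hF : ∀ l, F l ≤ y ^ 2 / (4 * Real.log y) * logStep l ^ 2 +
      B * (y ^ 2 / Real.log y ^ 2) * (logStep l * √(logStep l))) (N : ℕ) :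
    ∑ l ∈ range N, F l ≤ y ^ 2 * logStepSqSum / (4 * Real.log y) +
      B * (∑' l, logStep l * √(logStep l)) * (y ^ 2 / Real.log y ^ 2) := by
  have hlog := Real.log_pos hy
  have hsq := summable_logStep_sq.sum_le_tsum (range N) fun _ _ ↦ sq_nonneg _
  have hsqrt := summable_logStep_mul_sqrt.sum_le_tsum (range N) fun l _ ↦
    mul_nonneg (logStep_pos l).le (Real.sqrt_nonneg _)
  calc ∑ l ∈ range N, F l
      ≤ ∑ l ∈ range N, (y ^ 2 / (4 * Real.log y) * logStep l ^ 2 +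
          B * (y ^ 2 / Real.log y ^ 2) * (logStep l * √(logStep l))) :=
        sum_le_sum fun l _ ↦ hF l
    _ = y ^ 2 / (4 * Real.log y) * ∑ l ∈ range N, logStep l ^ 2 +
          B * (y ^ 2 / Real.log y ^ 2) * ∑ l ∈ range N, logStep l * √(logStep l) := by
        rw [sum_add_distrib, mul_sum, mul_sum]
    _ ≤ y ^ 2 / (4 * Real.log y) * logStepSqSum +
          B * (y ^ 2 / Real.log y ^ 2) * ∑' l, logStep l * √(logStep l) := by
        gcongr
        exact hsq
    _ = _ := by ring

lemma tsum_logStep_mul_sqrt_pos : 0 < ∑' l, logStep l * √(logStep l) :=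
  summable_logStep_mul_sqrt.tsum_pos
    (fun l ↦ mul_nonneg (logStep_pos l).le (Real.sqrt_nonneg _)) 0
    (mul_pos (logStep_pos 0) (Real.sqrt_pos.2 (logStep_pos 0)))

lemma add_one_sq_div_log_add_le (hC : 0 ≤ C) (hu : 2 ≤ u) :
    (u + 1) ^ 2 / (4 * Real.log (u + 1)) + C * ((u + 1) ^ 2 / Real.log (u + 1) ^ 2) ≤
      u ^ 2 / (4 * Real.log u) + (3 * C + 1) * (u ^ 2 / Real.log u ^ 2) := by
  have hlog : 0 < Real.log u := Real.log_pos (by linarith)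
  have hmono : Real.log u ≤ Real.log (u + 1) := Real.log_le_log (by linarith) (by linarith)
  have hle : Real.log u ≤ u := Real.log_le_self (by linarith)
  calc (u + 1) ^ 2 / (4 * Real.log (u + 1)) + C * ((u + 1) ^ 2 / Real.log (u + 1) ^ 2)
      ≤ (u ^ 2 + 4 * u) / (4 * Real.log u) + C * (3 * u ^ 2 / Real.log u ^ 2) := by
        gcongr <;> nlinarith
    _ = u ^ 2 / (4 * Real.log u) + 3 * C * (u ^ 2 / Real.log u ^ 2) +
          u * Real.log u / Real.log u ^ 2 := by
        field_simp
        ring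
    _ ≤ u ^ 2 / (4 * Real.log u) + 3 * C * (u ^ 2 / Real.log u ^ 2) + u * u / Real.log u ^ 2 := by
        gcongr
    _ = _ := by ring

variable {m : ℕ} {ψ : MulChar (ZMod m) ℤ} {z : ℝ}

lemma splitPrimes_floor_eq_empty_of_lt_two (hz : z < 2) : splitPrimes ψ ⌊z⌋₊ = ∅ := by
  refine eq_empty_of_forall_notMem fun p hp ↦ ?_
  obtain ⟨hpz, hprime, -⟩ := mem_splitPrimes_floor.1 hp
  have hp₂ : (2 : ℝ) ≤ p := mod_cast hprime.two_le
  linarith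

lemma splitPrimes_floor_eq_empty_of_lt_three (hψ₂ : ψ 2 ≠ 1) (hz : z < 3) :
    splitPrimes ψ ⌊z⌋₊ = ∅ := by
  refine eq_empty_of_forall_notMem fun p hp ↦ ?_
  obtain ⟨hpz, hprime, hψp⟩ := mem_splitPrimes_floor.1 hp
  have hp₂ : p ≠ 2 := by
    rintro rfl
    exact hψ₂ (mod_cast hψp)
  have hp₃ : (3 : ℝ) ≤ p := mod_cast hprime.two_le.lt_of_ne hp₂.symm
  linarith

section

variable [NeZero m]

lemma exists_sum_sum_splitPrimes_natCast_le (hψ : ψ ≠ 1) (hquad : ψ.IsQuadratic) :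
    ∃ C > 0, ∀ y : ℝ, 1 < y → ∀ N : ℕ,
      ∑ l ∈ range N, ∑ q ∈ splitPrimes ψ ⌊y * logStep l⌋₊, (q : ℝ) ≤
        y ^ 2 * logStepSqSum / (4 * Real.log y) + C * (y ^ 2 / Real.log y ^ 2) := by
  obtain ⟨C, hC, hsum⟩ := exists_abs_sum_splitPrimes_natCast_sub_le hψ hquad
  have hpos := tsum_logStep_mul_sqrt_pos
  refine ⟨(9 + 81 * C) * ∑' l, logStep l * √(logStep l), by positivity, fun y hy N ↦ ?_⟩
  refine sum_le_of_le_logStep (by positivity) hy (fun l ↦ ?_) N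
  have hlog := Real.log_pos hy
  have hl := logStep_pos l
  rcases lt_or_ge (y * logStep l) 2 with hsmall | hlarge
  · rw [splitPrimes_floor_eq_empty_of_lt_two hsmall, sum_empty]
    positivity
  · have h := (abs_le.1 (hsum (y * logStep l) (by linarith))).2
    linarith [sq_div_log_mul_add_le hC.le hl (logStep_le_one l) hlarge]

lemma exists_sum_sum_splitPrimes_sub_natCast_le (hψ : ψ ≠ 1) (hquad : ψ.IsQuadratic)
    (hψ₂ : ψ 2 ≠ 1) :
    ∃ C > 0, ∀ y : ℝ, 1 < y → ∀ N : ℕ,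
      ∑ l ∈ range N, ∑ q ∈ splitPrimes ψ ⌊y * logStep l + 1⌋₊, (y * logStep l + 1 - q) ≤
        y ^ 2 * logStepSqSum / (4 * Real.log y) + C * (y ^ 2 / Real.log y ^ 2) := by
  obtain ⟨C, hC, hsum⟩ := exists_abs_sum_splitPrimes_sub_natCast_sub_le hψ hquad
  have hpos := tsum_logStep_mul_sqrt_pos
  refine ⟨(9 + 81 * (3 * C + 1)) * ∑' l, logStep l * √(logStep l), by positivity,
    fun y hy N ↦ ?_⟩
  refine sum_le_of_le_logStep (by positivity) hy (fun l ↦ ?_) N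
  have hlog := Real.log_pos hy
  have hl := logStep_pos l
  rcases lt_or_ge (y * logStep l) 2 with hsmall | hlarge
  · rw [splitPrimes_floor_eq_empty_of_lt_three hψ₂ (by linarith), sum_empty]
    positivity
  · have h := (abs_le.1 (hsum (y * logStep l + 1) (by linarith))).2
    linarith [add_one_sq_div_log_add_le hC.le hlarge,
      sq_div_log_mul_add_le (by positivity : 0 ≤ 3 * C + 1) hl (logStep_le_one l) hlarge]

end

lemma mul_sq_le_of_mul_lt_two (hy : 1 < y) (hw : 0 < w) (hyw : y * w < 2) :
    y / (2 * Real.log y) * w ^ 2 ≤ 2 * (y / Real.log y ^ 2) * (w * √w) := by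
  have hlog := Real.log_pos hy
  have hsqrt : √w * √y ≤ 2 := by
    rw [← Real.sqrt_mul hw.le]
    exact Real.sqrt_le_iff.2 ⟨by norm_num, by linarith⟩
  have hbound : √w * Real.log y ≤ 4 := by
    nlinarith [log_le_two_mul_sqrt (zero_lt_one.trans hy).le, Real.sqrt_nonneg w]
  calc y / (2 * Real.log y) * w ^ 2 = y / (2 * Real.log y) * (w * (√w * √w)) := by
        rw [Real.mul_self_sqrt hw.le, sq]
    _ = √w * Real.log y / 2 * (y / Real.log y ^ 2) * (w * √w) := by
        field_simp
    _ ≤ 4 / 2 * (y / Real.log y ^ 2) * (w * √w) := by gcongr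
    _ = _ := by norm_num

lemma mul_sq_sub_le_of_two_le_mul (hC : 0 ≤ C) (hw : 0 < w) (hw₁ : w ≤ 1) (hyw : 2 ≤ y * w) :
    y / (2 * Real.log y) * w ^ 2 - 81 * C * (y / Real.log y ^ 2) * (w * √w) ≤
      w * (y * w / (2 * Real.log (y * w)) - C * (y * w / Real.log (y * w) ^ 2)) := by
  have hlog := Real.log_pos (by linarith : 1 < y * w)
  have hlog_le := log_mul_le_log hw hw₁ hyw
  have hy := pos_of_mul_pos_left (by linarith : 0 < y * w) hw.le
  calc y / (2 * Real.log y) * w ^ 2 - 81 * C * (y / Real.log y ^ 2) * (w * √w)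
      = y / (2 * Real.log y) * w ^ 2 - C * y * w * √w * (81 / Real.log y ^ 2) := by ring
    _ ≤ y / (2 * Real.log (y * w)) * w ^ 2 - C * y * w * √w * (√w / Real.log (y * w) ^ 2) := by
        gcongr ?_ - _ * ?_
        · gcongr
        · exact sqrt_div_log_mul_sq_le hw hw₁ hyw
    _ = y / (2 * Real.log (y * w)) * w ^ 2 - C * y * w * (√w * √w / Real.log (y * w) ^ 2) := by
        ring
    _ = _ := by
        rw [Real.mul_self_sqrt hw.le]
        ring

lemma exists_le_sum_logStep_mul_card_splitPrimes [NeZero m] (hψ : ψ ≠ 1)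
    (hquad : ψ.IsQuadratic) :
    ∃ C > 0, ∀ y : ℝ, 1 < y → ∀ N : ℕ,
      y / (2 * Real.log y) * (∑ l ∈ range N, logStep l ^ 2) - C * (y / Real.log y ^ 2) ≤
        ∑ l ∈ range N, logStep l * (splitPrimes ψ ⌊y * logStep l⌋₊).card := by
  obtain ⟨C, hC, hcard⟩ := exists_abs_card_splitPrimes_sub_le hψ hquad
  have hpos := tsum_logStep_mul_sqrt_pos
  refine ⟨(81 * C + 2) * ∑' l, logStep l * √(logStep l), by positivity, fun y hy N ↦ ?_⟩
  have hlog := Real.log_pos hy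
  have hterm (l : ℕ) : y / (2 * Real.log y) * logStep l ^ 2 -
      (81 * C + 2) * (y / Real.log y ^ 2) * (logStep l * √(logStep l)) ≤
        logStep l * (splitPrimes ψ ⌊y * logStep l⌋₊).card := by
    have hl := logStep_pos l
    have hC_nonneg : 0 ≤ 81 * C * (y / Real.log y ^ 2) * (logStep l * √(logStep l)) := by
      positivity
    have htwo_nonneg : 0 ≤ 2 * (y / Real.log y ^ 2) * (logStep l * √(logStep l)) := by positivity
    rcases lt_or_ge (y * logStep l) 2 with hsmall | hlarge
    · have hcard_nonneg : 0 ≤ logStep l * (splitPrimes ψ ⌊y * logStep l⌋₊).card := by positivity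
      linarith [mul_sq_le_of_mul_lt_two hy hl hsmall]
    · have h := (abs_le.1 (hcard (y * logStep l) (by linarith))).1
      have hmul := mul_le_mul_of_nonneg_left (neg_le_sub_iff_le_add'.1 h) hl.le
      linarith [mul_sq_sub_le_of_two_le_mul hC.le hl (logStep_le_one l) hlarge]
  have hsqrt := summable_logStep_mul_sqrt.sum_le_tsum (range N) fun l _ ↦
    mul_nonneg (logStep_pos l).le (Real.sqrt_nonneg _)
  calc y / (2 * Real.log y) * (∑ l ∈ range N, logStep l ^ 2) -
        (81 * C + 2) * (∑' l, logStep l * √(logStep l)) * (y / Real.log y ^ 2)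
      ≤ y / (2 * Real.log y) * (∑ l ∈ range N, logStep l ^ 2) -
        (81 * C + 2) * (∑ l ∈ range N, logStep l * √(logStep l)) * (y / Real.log y ^ 2) := by
        gcongr
    _ = ∑ l ∈ range N, (y / (2 * Real.log y) * logStep l ^ 2 -
          (81 * C + 2) * (y / Real.log y ^ 2) * (logStep l * √(logStep l))) := by
        rw [sum_sub_distrib, ← mul_sum, ← mul_sum]
        ring
    _ ≤ _ := sum_le_sum fun l _ ↦ hterm l

end WeightedPrimeSums

section Factorization

open Finset

variable {k n : ℕ} {A B : Finset ℕ} {P : ℝ}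

lemma prod_pow_factorization_le (hk : k ≠ 0) (hA : ∀ q ∈ A, q.Prime) :
    ∏ q ∈ A, q ^ k.factorization q ≤ k := by
  refine Nat.le_of_dvd (Nat.pos_of_ne_zero hk) (prod_dvd_of_isRelPrime ?_ fun q _ ↦
    Nat.ordProj_dvd k q)
  intro p hp q hq hpq
  exact Nat.coprime_iff_isRelPrime.1
    (Nat.Coprime.pow _ _ ((Nat.coprime_primes (hA p hp) (hA q hq)).2 hpq))

lemma sum_factorization_mul_log_le (hk : k ≠ 0) (hA : ∀ q ∈ A, q.Prime) :
    ∑ q ∈ A, (k.factorization q : ℝ) * Real.log q ≤ Real.log k := by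
  have hpos (q : ℕ) (hq : q ∈ A) : (0 : ℝ) < (q : ℝ) ^ k.factorization q :=
    pow_pos (Nat.cast_pos.2 (hA q hq).pos) _
  calc ∑ q ∈ A, (k.factorization q : ℝ) * Real.log q
      = Real.log (∏ q ∈ A, (q : ℝ) ^ k.factorization q) := by
        rw [Real.log_prod fun q hq ↦ (hpos q hq).ne']
        simp only [Real.log_pow]
    _ ≤ Real.log k :=
        Real.log_le_log (prod_pos hpos) (mod_cast prod_pow_factorization_le hk hA)

lemma one_le_log_of_prime_of_ne_two {q : ℕ} (hq : q.Prime) (hq₂ : q ≠ 2) : 1 ≤ Real.log q := by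
  have hq₃ : (3 : ℝ) ≤ q := mod_cast hq.two_le.lt_of_ne hq₂.symm
  rw [Real.le_log_iff_exp_le (by linarith)]
  linarith [Real.exp_one_lt_d9]

lemma sum_factorization_le_log (hk : k ≠ 0) (hA : ∀ q ∈ A, q.Prime) (hA₂ : 2 ∉ A) :
    ∑ q ∈ A, (k.factorization q : ℝ) ≤ Real.log k := by
  refine (sum_le_sum fun q hq ↦ ?_).trans (sum_factorization_mul_log_le hk hA)
  exact le_mul_of_one_le_right (Nat.cast_nonneg _)
    (one_le_log_of_prime_of_ne_two (hA q hq) (ne_of_mem_of_not_mem hq hA₂))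

lemma one_add_sum_le_prod_one_add {ι : Type*} {s : Finset ι} {a : ι → ℝ}
    (ha : ∀ i ∈ s, 0 ≤ a i) : 1 + ∑ i ∈ s, a i ≤ ∏ i ∈ s, (1 + a i) := by
  classical
  induction s using Finset.induction_on with
  | empty => simp
  | insert i s hi ih =>
    rw [sum_insert hi, prod_insert hi]
    have hs : ∀ j ∈ s, 0 ≤ a j := fun j hj ↦ ha j (mem_insert_of_mem hj)
    nlinarith [ih hs, ha i (mem_insert_self i s), sum_nonneg hs]

lemma sum_factorization_succ_mul_sub_one_le (k : ℕ) (hA : ∀ q ∈ A, q.Prime) :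
    ∑ q ∈ A, ((k + 1).factorization q : ℝ) * ((q : ℝ) - 1) ≤ k := by
  have hq (q : ℕ) (hqA : q ∈ A) : (0 : ℝ) ≤ q - 1 :=
    sub_nonneg.2 (mod_cast (hA q hqA).one_le)
  have hnonneg (q : ℕ) (hqA : q ∈ A) : 0 ≤ ((k + 1).factorization q : ℝ) * ((q : ℝ) - 1) :=
    mul_nonneg (Nat.cast_nonneg _) (hq q hqA)
  suffices 1 + ∑ q ∈ A, ((k + 1).factorization q : ℝ) * ((q : ℝ) - 1) ≤ k + 1 by linarith
  calc 1 + ∑ q ∈ A, ((k + 1).factorization q : ℝ) * ((q : ℝ) - 1)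
      ≤ ∏ q ∈ A, (1 + ((k + 1).factorization q : ℝ) * ((q : ℝ) - 1)) :=
        one_add_sum_le_prod_one_add hnonneg
    _ ≤ ∏ q ∈ A, (q : ℝ) ^ (k + 1).factorization q := by
        refine prod_le_prod (fun q hqA ↦ by linarith [hnonneg q hqA]) fun q hqA ↦ ?_
        simpa using one_add_mul_le_pow (by linarith [hq q hqA] : (-2 : ℝ) ≤ q - 1) _
    _ ≤ k + 1 := mod_cast prod_pow_factorization_le k.succ_ne_zero hA

/-- The exponent of `q` in the factorization of `∏ p ∈ B, (vₚ(n) + 1)`. When `B` consists of the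
split primes dividing `n`, that product is the number of representations of `n`. -/
def prodSuccExponent (n : ℕ) (B : Finset ℕ) (q : ℕ) : ℕ :=
  ∑ p ∈ B, (n.factorization p + 1).factorization q

lemma factorization_prod_factorization_add_one (n : ℕ) (B : Finset ℕ) (q : ℕ) :
    (∏ p ∈ B, (n.factorization p + 1)).factorization q = prodSuccExponent n B q := by
  rw [Nat.factorization_prod fun p _ ↦ Nat.succ_ne_zero _, Finsupp.finsetSum_apply,
    prodSuccExponent]

lemma sum_prodSuccExponent_le (hn : n ≠ 0) (hA : ∀ q ∈ A, q.Prime) (hA₂ : 2 ∉ A)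
    (hB : ∀ p ∈ B, p.Prime) (hB₂ : 2 ∉ B) :
    ∑ q ∈ A, (prodSuccExponent n B q : ℝ) ≤ B.card * Real.log (Real.log n + 1) := by
  calc ∑ q ∈ A, (prodSuccExponent n B q : ℝ)
      = ∑ p ∈ B, ∑ q ∈ A, ((n.factorization p + 1).factorization q : ℝ) := by
        simp only [prodSuccExponent, Nat.cast_sum]
        exact sum_comm
    _ ≤ ∑ p ∈ B, Real.log (n.factorization p + 1) :=
        sum_le_sum fun p _ ↦ mod_cast sum_factorization_le_log (Nat.succ_ne_zero _) hA hA₂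
    _ ≤ ∑ p ∈ B, Real.log (Real.log n + 1) := by
        refine sum_le_sum fun p hp ↦ Real.log_le_log (by positivity) ?_
        have h := sum_factorization_le_log (A := {p}) hn (by simpa using hB p hp)
          (by simpa using (ne_of_mem_of_not_mem hp hB₂).symm)
        simpa using h
    _ = B.card * Real.log (Real.log n + 1) := by rw [sum_const, nsmul_eq_mul]

lemma sum_prodSuccExponent_mul_sub_one_le (hn : n ≠ 0) (hA : ∀ q ∈ A, q.Prime)
    (hB : ∀ p ∈ B, p.Prime) (hP : 1 < P) (hBP : ∀ p ∈ B, P ≤ p) :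
    ∑ q ∈ A, (prodSuccExponent n B q : ℝ) * ((q : ℝ) - 1) ≤ Real.log n / Real.log P := by
  rw [le_div_iff₀ (Real.log_pos hP)]
  have hlog := (Real.log_pos hP).le
  calc (∑ q ∈ A, (prodSuccExponent n B q : ℝ) * ((q : ℝ) - 1)) * Real.log P
      = (∑ p ∈ B, ∑ q ∈ A, ((n.factorization p + 1).factorization q : ℝ) * ((q : ℝ) - 1)) *
          Real.log P := by
        simp only [prodSuccExponent, Nat.cast_sum, sum_mul]
        rw [sum_comm]
    _ ≤ (∑ p ∈ B, (n.factorization p : ℝ)) * Real.log P := by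
        gcongr
        exact sum_factorization_succ_mul_sub_one_le _ hA
    _ ≤ ∑ p ∈ B, (n.factorization p : ℝ) * Real.log p := by
        rw [sum_mul]
        gcongr with p hp
        exact hBP p hp
    _ ≤ Real.log n := sum_factorization_mul_log_le hn hB

end Factorization

section UpperBound

open Finset

variable {m : ℕ} {ψ : MulChar (ZMod m) ℤ} {y P : ℝ} {A : Finset ℕ}

lemma log_natCast_add_one_le (hy : 0 < y) (x : ℝ) (e : ℕ) :
    Real.log (e + 1) ≤ 1 / y * (e * (x - 1)) +
      1 / y * ∑ l ∈ range e, max (y * logStep l + 1 - x) 0 := by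
  calc Real.log (e + 1) = 1 / y * ∑ l ∈ range e, y * logStep l := by
        rw [← mul_sum, sum_range_logStep]
        field_simp
    _ ≤ 1 / y * ∑ l ∈ range e, ((x - 1) + max (y * logStep l + 1 - x) 0) := by
        gcongr with l
        linarith [le_max_left (y * logStep l + 1 - x) 0]
    _ = _ := by
        rw [sum_add_distrib, sum_const, card_range, nsmul_eq_mul, mul_add]

lemma sum_max_sub_natCast_le (z : ℝ) (hA : ∀ q ∈ A, q.Prime)
    (hAψ : ∀ q ∈ A, ψ (q : ZMod m) = 1) :
    ∑ q ∈ A, max (z - q) 0 ≤ ∑ q ∈ splitPrimes ψ ⌊z⌋₊, (z - q) := by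
  calc ∑ q ∈ A, max (z - q) 0 = ∑ q ∈ A with (q : ℕ) ≤ z, (z - q) := by
        rw [sum_filter]
        refine sum_congr rfl fun q _ ↦ ?_
        split_ifs with h
        · exact max_eq_left (by linarith)
        · exact max_eq_right (by linarith)
    _ ≤ ∑ q ∈ splitPrimes ψ ⌊z⌋₊, (z - q) := by
        refine sum_le_sum_of_subset_of_nonneg (fun q hq ↦ ?_) fun q hq _ ↦ ?_
        · obtain ⟨hqA, hqz⟩ := mem_filter.1 hq
          exact mem_splitPrimes_floor.2 ⟨hqz, hA q hqA, hAψ q hqA⟩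
        · exact sub_nonneg.2 (mem_splitPrimes_floor.1 hq).1

-- Linear programming duality: `1 / y` is the multiplier of the constraint on `∑ e q * (q - 1)`.
lemma exists_sum_log_add_one_le (hy : 0 < y) (hA : ∀ q ∈ A, q.Prime)
    (hAψ : ∀ q ∈ A, ψ (q : ZMod m) = 1) (e : ℕ → ℕ) :
    ∃ N : ℕ, ∑ q ∈ A, Real.log (e q + 1) ≤ 1 / y * ∑ q ∈ A, (e q : ℝ) * ((q : ℝ) - 1) +
      1 / y * ∑ l ∈ range N, ∑ q ∈ splitPrimes ψ ⌊y * logStep l + 1⌋₊,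
        (y * logStep l + 1 - q) := by
  refine ⟨∑ q ∈ A, e q, ?_⟩
  set N := ∑ q ∈ A, e q
  calc ∑ q ∈ A, Real.log (e q + 1)
      ≤ ∑ q ∈ A, (1 / y * (e q * ((q : ℝ) - 1)) +
          1 / y * ∑ l ∈ range N, max (y * logStep l + 1 - q) 0) := by
        refine sum_le_sum fun q hq ↦ (log_natCast_add_one_le hy q (e q)).trans ?_
        gcongr
        exact single_le_sum (fun _ _ ↦ Nat.zero_le _) hq
    _ = 1 / y * ∑ q ∈ A, (e q : ℝ) * ((q : ℝ) - 1) +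
          1 / y * ∑ l ∈ range N, ∑ q ∈ A, max (y * logStep l + 1 - q) 0 := by
        rw [sum_add_distrib, ← mul_sum, ← mul_sum, sum_comm]
    _ ≤ _ := by
        gcongr with l
        exact sum_max_sub_natCast_le _ hA hAψ

lemma log_add_add_one_le {a b : ℝ} (ha : 0 ≤ a) (hb : 0 ≤ b) :
    Real.log (a + b + 1) ≤ a + Real.log (b + 1) := by
  calc Real.log (a + b + 1) ≤ Real.log ((a + 1) * (b + 1)) :=
        Real.log_le_log (by positivity) (by nlinarith [mul_nonneg ha hb])
    _ = Real.log (a + 1) + Real.log (b + 1) := Real.log_mul (by positivity) (by positivity)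
    _ ≤ a + Real.log (b + 1) := by
        gcongr
        linarith [Real.log_le_sub_one_of_pos (by positivity : 0 < a + 1)]

lemma card_filter_lt_le {B : Finset ℕ} (hB : ∀ p ∈ B, 0 < p) (hP : 0 ≤ P) :
    ((B.filter fun p : ℕ ↦ (p : ℝ) < P).card : ℝ) ≤ P := by
  have hsub : (B.filter fun p : ℕ ↦ (p : ℝ) < P) ⊆ Icc 1 ⌊P⌋₊ := fun p hp ↦ by
    obtain ⟨hpB, hpP⟩ := mem_filter.1 hp
    exact mem_Icc.2 ⟨hB p hpB, Nat.le_floor hpP.le⟩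
  refine le_trans ?_ (Nat.floor_le hP)
  simpa using card_le_card hsub

lemma sum_log_prodSuccExponent_add_one_le {n : ℕ} {B : Finset ℕ} (hn : n ≠ 0) (hP : 1 < P)
    (hA : ∀ q ∈ A, q.Prime) (hA₂ : 2 ∉ A) (hB : ∀ p ∈ B, p.Prime) (hB₂ : 2 ∉ B) :
    ∃ e : ℕ → ℕ, ∑ q ∈ A, (e q : ℝ) * ((q : ℝ) - 1) ≤ Real.log n / Real.log P ∧
      ∑ q ∈ A, Real.log (prodSuccExponent n B q + 1) ≤
        P * Real.log (Real.log n + 1) + ∑ q ∈ A, Real.log (e q + 1) := by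
  set Bsmall := B.filter fun p : ℕ ↦ (p : ℝ) < P
  set Blarge := B.filter fun p : ℕ ↦ ¬ (p : ℝ) < P
  have hsplit (q : ℕ) :
      prodSuccExponent n B q = prodSuccExponent n Bsmall q + prodSuccExponent n Blarge q :=
    (sum_filter_add_sum_filter_not B _ _).symm
  refine ⟨prodSuccExponent n Blarge,
    sum_prodSuccExponent_mul_sub_one_le hn hA (fun p hp ↦ hB p (mem_filter.1 hp).1) hP
      fun p hp ↦ not_lt.1 (mem_filter.1 hp).2, ?_⟩
  have hlog : 0 ≤ Real.log (Real.log n + 1) :=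
    Real.log_nonneg (by linarith [Real.log_natCast_nonneg n])
  calc ∑ q ∈ A, Real.log (prodSuccExponent n B q + 1)
      ≤ ∑ q ∈ A, ((prodSuccExponent n Bsmall q : ℝ) +
          Real.log (prodSuccExponent n Blarge q + 1)) := by
        refine sum_le_sum fun q _ ↦ ?_
        rw [hsplit, Nat.cast_add]
        exact log_add_add_one_le (Nat.cast_nonneg _) (Nat.cast_nonneg _)
    _ = ∑ q ∈ A, (prodSuccExponent n Bsmall q : ℝ) +
          ∑ q ∈ A, Real.log (prodSuccExponent n Blarge q + 1) := sum_add_distrib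
    _ ≤ Bsmall.card * Real.log (Real.log n + 1) +
          ∑ q ∈ A, Real.log (prodSuccExponent n Blarge q + 1) := by
        gcongr
        exact sum_prodSuccExponent_le hn hA hA₂ (fun p hp ↦ hB p (mem_filter.1 hp).1)
          fun h ↦ hB₂ (mem_filter.1 h).1
    _ ≤ _ := by
        gcongr
        exact card_filter_lt_le (fun p hp ↦ (hB p hp).pos) (by linarith)

lemma χ₈'_ne_one : ZMod.χ₈' ≠ 1 := fun h ↦
  (by decide : ZMod.χ₈' (-1) ≠ 1) (h ▸ MulChar.one_apply isUnit_one.neg)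

lemma not_two_mem_of_forall_χ₈' (hA : ∀ q ∈ A, ZMod.χ₈' (q : ℕ) = 1) : 2 ∉ A := fun h ↦
  (by decide : ZMod.χ₈' (2 : ℕ) ≠ 1) (hA 2 h)

lemma fForm_zero : fForm 0 = 1 := if_pos rfl

lemma log_fForm_fForm_eq_sum {n : ℕ} (hn : n ≠ 0) (hf : fForm n ≠ 0)
    (hff : fForm (fForm n) ≠ 0) :
    Real.log (fForm (fForm n)) = ∑ q ∈ (fForm n).primeFactors with ZMod.χ₈' (q : ℕ) = 1,
      Real.log (prodSuccExponent n {p ∈ n.primeFactors | ZMod.χ₈' (p : ℕ) = 1} q + 1) := by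
  rw [fForm_eq_prod_of_ne_zero hf hff, Nat.cast_prod, Real.log_prod fun q _ ↦ by positivity]
  refine sum_congr rfl fun q _ ↦ ?_
  rw [← factorization_prod_factorization_add_one, ← fForm_eq_prod_of_ne_zero hn hf,
    Nat.cast_add_one]

lemma exists_log_fForm_fForm_le : ∃ C > 0, ∀ (n : ℕ) (y P : ℝ), n ≠ 0 → 1 < y → 1 < P →
    Real.log (fForm (fForm n)) ≤
      P * Real.log (Real.log n + 1) + 1 / y * (Real.log n / Real.log P) +
        (y * logStepSqSum / (4 * Real.log y) + C * (y / Real.log y ^ 2)) := by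
  obtain ⟨C, hC, hprimes⟩ := exists_sum_sum_splitPrimes_sub_natCast_le χ₈'_ne_one
    ZMod.isQuadratic_χ₈' (by decide)
  refine ⟨C, hC, fun n y P hn hy hP ↦ ?_⟩
  by_cases hzero : fForm n = 0 ∨ fForm (fForm n) = 0
  · have hlog : Real.log (fForm (fForm n)) = 0 := by
      rcases hzero with h | h <;> simp [h, fForm_zero]
    have := Real.log_pos hy
    have := Real.log_pos hP
    have := logStepSqSum_pos
    have hn_log := Real.log_natCast_nonneg n
    have := Real.log_nonneg (by linarith : 1 ≤ Real.log n + 1)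
    rw [hlog]
    positivity
  obtain ⟨hf, hff⟩ := not_or.1 hzero
  have hprime (k q : ℕ) (hq : q ∈ k.primeFactors.filter fun q : ℕ ↦ ZMod.χ₈' q = 1) : q.Prime :=
    Nat.prime_of_mem_primeFactors (mem_filter.1 hq).1
  have hsplit (k q : ℕ) (hq : q ∈ k.primeFactors.filter fun q : ℕ ↦ ZMod.χ₈' q = 1) :
      ZMod.χ₈' (q : ℕ) = 1 := (mem_filter.1 hq).2
  rw [log_fForm_fForm_eq_sum hn hf hff]
  obtain ⟨e, he, hlog⟩ := sum_log_prodSuccExponent_add_one_le hn hP (hprime (fForm n))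
    (not_two_mem_of_forall_χ₈' (hsplit _)) (hprime n) (not_two_mem_of_forall_χ₈' (hsplit _))
  obtain ⟨N, hdual⟩ := exists_sum_log_add_one_le (zero_lt_one.trans hy) (hprime (fForm n))
    (hsplit _) e
  calc _ ≤ _ := hlog
    _ ≤ _ := add_le_add_right hdual _
    _ ≤ P * Real.log (Real.log n + 1) + (1 / y * (Real.log n / Real.log P) +
          1 / y * (y ^ 2 * logStepSqSum / (4 * Real.log y) + C * (y ^ 2 / Real.log y ^ 2))) := by
        gcongr
        exact hprimes y hy N
    _ = _ := by
        field_simp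
        ring

end UpperBound

section IteratedLog

lemma tendsto_log_log : Tendsto (fun y : ℝ ↦ Real.log (Real.log y)) atTop atTop :=
  Real.tendsto_log_atTop.comp Real.tendsto_log_atTop

lemma tendsto_log_log_div_log :
    Tendsto (fun y : ℝ ↦ Real.log (Real.log y) / Real.log y) atTop (nhds 0) :=
  Real.isLittleO_log_id_atTop.tendsto_div_nhds_zero.comp Real.tendsto_log_atTop

end IteratedLog

section LowerBound

open Finset

/-- The exponent of the prime `q` that maximises the Lagrangian `log (e + 1) - e * q / y` over
natural numbers `e`. -/
noncomputable def optExponent (y : ℝ) (q : ℕ) : ℕ := ⌊1 / (Real.exp (q / y) - 1)⌋₊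

variable {m : ℕ} {ψ : MulChar (ZMod m) ℤ} {y : ℝ} {q : ℕ}

lemma lt_optExponent_iff (hy : 0 < y) (hq : 0 < q) (l : ℕ) :
    l < optExponent y q ↔ q ≤ y * logStep l := by
  have hexp : 0 < Real.exp (q / y) - 1 := sub_pos.2 (Real.one_lt_exp_iff.2 (by positivity))
  rw [optExponent, ← Nat.succ_le_iff, Nat.le_floor_iff' (Nat.succ_ne_zero l), le_div_iff₀ hexp,
    ← div_le_iff₀' hy, logStep, Real.le_log_iff_exp_le (by positivity), Nat.cast_succ,
    ← le_div_iff₀' (by positivity), sub_le_iff_le_add']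

lemma optExponent_le (hy : 0 < y) (hq : 0 < q) : (optExponent y q : ℝ) ≤ y * (1 / q) := by
  have hexp := Real.add_one_le_exp ((q : ℝ) / y)
  have hqy : 0 < (q : ℝ) / y := by positivity
  calc (optExponent y q : ℝ) ≤ 1 / (Real.exp (q / y) - 1) :=
        Nat.floor_le (div_nonneg zero_le_one (by linarith))
    _ ≤ 1 / ((q : ℝ) / y) := by
        gcongr
        linarith
    _ = y * (1 / q) := by field_simp

lemma sum_optExponent_le (hy : 1 ≤ y) :
    ∑ q ∈ splitPrimes ψ ⌊y⌋₊, (optExponent y q : ℝ) ≤ y * (1 + Real.log y) := by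
  calc ∑ q ∈ splitPrimes ψ ⌊y⌋₊, (optExponent y q : ℝ)
      ≤ ∑ q ∈ splitPrimes ψ ⌊y⌋₊, y * (1 / (q : ℝ)) :=
        sum_le_sum fun q hq ↦
          optExponent_le (by linarith) (mem_splitPrimes_floor.1 hq).2.1.pos
    _ ≤ ∑ q ∈ Icc 1 ⌊y⌋₊, y * (1 / (q : ℝ)) :=
        sum_le_sum_of_subset_of_nonneg ((splitPrimes_subset_primesLE _).trans
          (primesLE_subset_Icc _)) fun q _ _ ↦ by positivity
    _ = y * harmonic ⌊y⌋₊ := by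
        rw [harmonic_eq_sum_Icc, ← mul_sum]
        push_cast
        simp only [one_div]
    _ ≤ y * (1 + Real.log y) := by
        gcongr
        exact harmonic_floor_le_one_add_log y hy

lemma splitPrimes_floor_mul_logStep (hy : 0 < y) (l : ℕ) :
    splitPrimes ψ ⌊y * logStep l⌋₊ = {q ∈ splitPrimes ψ ⌊y⌋₊ | l < optExponent y q} := by
  ext q
  rw [mem_filter, mem_splitPrimes_floor, mem_splitPrimes_floor]
  constructor
  · rintro ⟨hqy, hq, hψ⟩
    exact ⟨⟨hqy.trans (mul_le_of_le_one_right hy.le (logStep_le_one l)), hq, hψ⟩,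
      (lt_optExponent_iff hy hq.pos l).2 hqy⟩
  · rintro ⟨⟨-, hq, hψ⟩, hl⟩
    exact ⟨(lt_optExponent_iff hy hq.pos l).1 hl, hq, hψ⟩

lemma sum_range_sum_splitPrimes (hy : 0 < y) {N : ℕ} (g : ℕ → ℕ → ℝ)
    (hN : ∀ q ∈ splitPrimes ψ ⌊y⌋₊, optExponent y q ≤ N) :
    ∑ l ∈ range N, ∑ q ∈ splitPrimes ψ ⌊y * logStep l⌋₊, g l q =
      ∑ q ∈ splitPrimes ψ ⌊y⌋₊, ∑ l ∈ range (optExponent y q), g l q := by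
  refine sum_comm' fun l q ↦ ?_
  rw [splitPrimes_floor_mul_logStep hy, mem_filter, mem_range, mem_range]
  exact ⟨fun h ↦ ⟨h.2.2, h.2.1⟩, fun h ↦ ⟨h.1.trans_le (hN q h.2), h.2, h.1⟩⟩

lemma sum_range_sum_splitPrimes_natCast (hy : 0 < y) :
    ∑ l ∈ range (∑ q ∈ splitPrimes ψ ⌊y⌋₊, optExponent y q),
        ∑ q ∈ splitPrimes ψ ⌊y * logStep l⌋₊, (q : ℝ) =
      ∑ q ∈ splitPrimes ψ ⌊y⌋₊, (optExponent y q : ℝ) * q := by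
  rw [sum_range_sum_splitPrimes hy (fun _ q ↦ (q : ℝ)) fun q hq ↦
    single_le_sum (f := optExponent y) (fun _ _ ↦ Nat.zero_le _) hq]
  simp only [sum_const, card_range, nsmul_eq_mul]

lemma sum_logStep_mul_card_splitPrimes_le (hy : 0 < y) (N : ℕ) :
    ∑ l ∈ range N, logStep l * (splitPrimes ψ ⌊y * logStep l⌋₊).card ≤
      ∑ q ∈ splitPrimes ψ ⌊y⌋₊, Real.log (optExponent y q + 1) := by
  set M := N + ∑ q ∈ splitPrimes ψ ⌊y⌋₊, optExponent y q
  have hM (q : ℕ) (hq : q ∈ splitPrimes ψ ⌊y⌋₊) : optExponent y q ≤ M :=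
    (single_le_sum (f := optExponent y) (fun _ _ ↦ Nat.zero_le _) hq).trans (Nat.le_add_left _ _)
  calc ∑ l ∈ range N, logStep l * (splitPrimes ψ ⌊y * logStep l⌋₊).card
      ≤ ∑ l ∈ range M, logStep l * (splitPrimes ψ ⌊y * logStep l⌋₊).card :=
        sum_le_sum_of_subset_of_nonneg (range_subset_range.2 (Nat.le_add_right _ _)) fun l _ _ ↦
          mul_nonneg (logStep_pos l).le (Nat.cast_nonneg _)
    _ = ∑ l ∈ range M, ∑ _ ∈ splitPrimes ψ ⌊y * logStep l⌋₊, logStep l := by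
        simp only [sum_const, nsmul_eq_mul, mul_comm]
    _ = ∑ q ∈ splitPrimes ψ ⌊y⌋₊, Real.log (optExponent y q + 1) := by
        rw [sum_range_sum_splitPrimes hy (fun l _ ↦ logStep l) hM]
        simp only [sum_range_logStep]

lemma exists_le_sum_log_optExponent_add_one [NeZero m] (hψ : ψ ≠ 1) (hquad : ψ.IsQuadratic) :
    ∃ C > 0, ∀ y : ℝ, 1 < y →
      y * logStepSqSum / (2 * Real.log y) - C * (y / Real.log y ^ 2) ≤
        ∑ q ∈ splitPrimes ψ ⌊y⌋₊, Real.log (optExponent y q + 1) := by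
  obtain ⟨C, hC, hsum⟩ := exists_le_sum_logStep_mul_card_splitPrimes hψ hquad
  refine ⟨C, hC, fun y hy ↦ ?_⟩
  rw [mul_div_right_comm]
  exact le_of_tendsto'
    ((summable_logStep_sq.hasSum.tendsto_sum_nat.const_mul (y / (2 * Real.log y))).sub_const _)
    fun N ↦ (hsum y hy N).trans (sum_logStep_mul_card_splitPrimes_le (zero_lt_one.trans hy) N)

lemma log_mul_log_pow_three (hy : 1 < y) :
    Real.log (y * Real.log y ^ 3) = Real.log y + 3 * Real.log (Real.log y) := by
  have hlog := Real.log_pos hy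
  rw [Real.log_mul (by positivity) (by positivity), Real.log_pow]
  norm_num

lemma eventually_sum_optExponent_le_card [NeZero m] (hψ : ψ ≠ 1) (hquad : ψ.IsQuadratic) :
    ∀ᶠ y : ℝ in atTop, ∑ q ∈ splitPrimes ψ ⌊y⌋₊, optExponent y q ≤
      (splitPrimes ψ ⌊y * Real.log y ^ 3⌋₊).card := by
  obtain ⟨C, hC, hcard⟩ := exists_abs_card_splitPrimes_sub_le hψ hquad
  filter_upwards [eventually_gt_atTop 1, Real.tendsto_log_atTop.eventually_ge_atTop (4 * C + 8),
    tendsto_log_log_div_log.eventually_le_const (by norm_num : (0 : ℝ) < 1 / 3)] with y hy hK hδ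
  have hcardP := (abs_le.1 (hcard (y * Real.log y ^ 3) (one_lt_mul_of_lt_of_le hy
    (one_le_pow₀ (by linarith))))).1
  rw [log_mul_log_pow_three hy] at hcardP
  set b := Real.log y
  have hb : 8 ≤ b := by linarith
  have hlogb : 0 ≤ Real.log b := Real.log_nonneg (by linarith)
  have hlogb_le : 3 * Real.log b ≤ b := by
    rw [div_le_iff₀ (by linarith)] at hδ
    linarith
  rw [← Nat.cast_le (α := ℝ), Nat.cast_sum]
  calc ∑ q ∈ splitPrimes ψ ⌊y⌋₊, (optExponent y q : ℝ) ≤ y * (1 + b) := sum_optExponent_le hy.le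
    _ ≤ y * (b * (b / 4 - C)) := by
        gcongr
        nlinarith
    _ = y * b ^ 3 / (2 * (b + b)) - C * (y * b ^ 3 / b ^ 2) := by
        field_simp
        ring
    _ ≤ y * b ^ 3 / (2 * (b + 3 * Real.log b)) - C * (y * b ^ 3 / (b + 3 * Real.log b) ^ 2) := by
        gcongr
        linarith
    _ ≤ (splitPrimes ψ ⌊y * b ^ 3⌋₊).card := by linarith

-- Each factor `q` of the prescribed value costs one prime `p ∈ T`, which enters `n` with
-- exponent `q - 1`.
lemma exists_fForm_eq_prod_pow {S T : Finset ℕ} (e : ℕ → ℕ) {R : ℝ} (hS : ∀ q ∈ S, 0 < q)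
    (hT : ∀ p ∈ T, p ≤ R ∧ p.Prime ∧ ZMod.χ₈' (p : ℕ) = 1) (hcard : ∑ q ∈ S, e q ≤ T.card) :
    ∃ n : ℕ, n ≠ 0 ∧ fForm n = ∏ q ∈ S, q ^ e q ∧
      Real.log n ≤ Real.log R * ∑ q ∈ S, (e q : ℝ) * q := by
  set I := S.sigma fun q ↦ range (e q)
  have hIT : (I : Set (Σ _ : ℕ, ℕ)).encard ≤ (T : Set ℕ).encard := by
    rw [Set.encard_coe_eq_coe_finsetCard, Set.encard_coe_eq_coe_finsetCard, card_sigma]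
    simpa using mod_cast hcard
  obtain ⟨p, hpT, hinj⟩ := I.finite_toSet.exists_injOn_of_encard_le hIT
  have hp (i) (hi : i ∈ I) : p i ≤ R ∧ (p i).Prime ∧ ZMod.χ₈' (p i : ℕ) = 1 := hT _ (hpT hi)
  refine ⟨∏ i ∈ I, p i ^ (i.1 - 1),
    prod_ne_zero_iff.2 fun i hi ↦ pow_ne_zero _ (hp i hi).2.1.ne_zero, ?_, ?_⟩
  · rw [fForm_prod_pow _ hinj (fun i hi ↦ (hp i hi).2.1) fun i hi ↦ (hp i hi).2.2]
    calc ∏ i ∈ I, (i.1 - 1 + 1) = ∏ i ∈ I, i.1 :=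
          prod_congr rfl fun i hi ↦ Nat.sub_add_cancel (hS _ (mem_sigma.1 hi).1)
      _ = ∏ q ∈ S, q ^ e q := by
          rw [prod_sigma]
          simp only [prod_const, card_range]
  · push_cast
    rw [Real.log_prod fun i hi ↦ pow_ne_zero _ (Nat.cast_ne_zero.2 (hp i hi).2.1.ne_zero)]
    calc ∑ i ∈ I, Real.log ((p i : ℝ) ^ (i.1 - 1)) ≤ ∑ i ∈ I, Real.log R * i.1 := by
          refine sum_le_sum fun i hi ↦ ?_
          obtain ⟨hpR, hprime, -⟩ := hp i hi
          rw [Real.log_pow, mul_comm]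
          have hpos : (0 : ℝ) < p i := mod_cast hprime.pos
          have hone : (1 : ℝ) ≤ p i := mod_cast hprime.one_le
          have hlogR := Real.log_nonneg (hone.trans hpR)
          gcongr
          exact Nat.sub_le _ _
      _ = Real.log R * ∑ q ∈ S, (e q : ℝ) * q := by
          rw [← mul_sum, sum_sigma]
          simp only [sum_const, card_range, nsmul_eq_mul]

lemma exists_eventually_le_log_fForm_fForm : ∃ C > 0, ∀ᶠ y : ℝ in atTop,
    ∃ n : ℕ, n ≠ 0 ∧
      Real.log n ≤ (Real.log y + 3 * Real.log (Real.log y)) *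
        (y ^ 2 * logStepSqSum / (4 * Real.log y) + C * (y ^ 2 / Real.log y ^ 2)) ∧
      y * logStepSqSum / (2 * Real.log y) - C * (y / Real.log y ^ 2) ≤
        Real.log (fForm (fForm n)) := by
  obtain ⟨C₁, hC₁, hupper⟩ :=
    exists_sum_sum_splitPrimes_natCast_le χ₈'_ne_one ZMod.isQuadratic_χ₈'
  obtain ⟨C₂, hC₂, hlower⟩ :=
    exists_le_sum_log_optExponent_add_one χ₈'_ne_one ZMod.isQuadratic_χ₈'
  refine ⟨C₁ + C₂, by positivity, ?_⟩
  filter_upwards [eventually_sum_optExponent_le_card χ₈'_ne_one ZMod.isQuadratic_χ₈',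
    eventually_gt_atTop 1, tendsto_log_log.eventually_ge_atTop 0] with y hcard hy hloglog
  have hy₀ := zero_lt_one.trans hy
  have hlog := Real.log_pos hy
  obtain ⟨n, hn, hfn, hlogn⟩ := exists_fForm_eq_prod_pow (optExponent y)
    (fun q hq ↦ (mem_splitPrimes_floor.1 hq).2.1.pos) (fun p ↦ mem_splitPrimes_floor.1)
    hcard
  rw [log_mul_log_pow_three hy] at hlogn
  refine ⟨n, hn, ?_, ?_⟩
  · refine hlogn.trans (mul_le_mul_of_nonneg_left ?_ (by linarith))
    rw [← sum_range_sum_splitPrimes_natCast hy₀]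
    have hC₂_nonneg : 0 ≤ C₂ * (y ^ 2 / Real.log y ^ 2) := by positivity
    linarith [hupper y hy (∑ q ∈ splitPrimes ZMod.χ₈' ⌊y⌋₊, optExponent y q)]
  · rw [hfn, fForm_prod_pow (q := fun q ↦ q) _ Function.injective_id.injOn
      (fun q hq ↦ (mem_splitPrimes_floor.1 hq).2.1) fun q hq ↦ (mem_splitPrimes_floor.1 hq).2.2]
    push_cast
    rw [Real.log_prod fun q _ ↦ by positivity]
    have hC₁_nonneg : 0 ≤ C₁ * (y / Real.log y ^ 2) := by positivity
    linarith [hlower y hy]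

end LowerBound

section Optimization

variable {C S Y y d : ℝ}

lemma log_add_one_le_three_mul_log {X : ℝ} (hS : 0 < S) (hX : 0 ≤ X) (hXY : X ≤ Y ^ 2 * S / 4)
    (hY : 1 ≤ Y) (hSY : Real.log (S / 4 + 1) ≤ Real.log Y) :
    Real.log (X + 1) ≤ 3 * Real.log Y := by
  calc Real.log (X + 1) ≤ Real.log (Y ^ 2 * (S / 4 + 1)) :=
        Real.log_le_log (by positivity) (by nlinarith)
    _ = 2 * Real.log Y + Real.log (S / 4 + 1) := by
        rw [Real.log_mul (by positivity) (by positivity), Real.log_pow, Nat.cast_ofNat]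
    _ ≤ 3 * Real.log Y := by linarith

lemma one_div_sub_three_mul_le {b t : ℝ} (hb : 0 < b) (ht : 0 ≤ t) (htb : 6 * t ≤ b) :
    1 / (b - 3 * t) ≤ 1 / b + 6 * t / b ^ 2 := by
  rw [div_add_div _ _ hb.ne' (by positivity), div_le_div_iff₀ (by linarith) (by positivity)]
  nlinarith [mul_nonneg (mul_nonneg hb.le ht) (sub_nonneg.2 htb)]

lemma one_div_mul_div_log_sub_le {X : ℝ} (hY : 0 < Y) (hS : 0 ≤ S) (hXY : X ≤ Y ^ 2 * S / 4)
    {b t : ℝ} (hb : 0 < b) (ht : 0 ≤ t) (htb : 6 * t ≤ b) :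
    1 / Y * (X / (b - 3 * t)) ≤ Y * S / (4 * b) + 3 / 2 * S * (Y * t / b ^ 2) := by
  have hden : 0 < b - 3 * t := by linarith
  calc 1 / Y * (X / (b - 3 * t)) ≤ 1 / Y * (Y ^ 2 * S / 4 / (b - 3 * t)) := by gcongr
    _ = Y * S / 4 * (1 / (b - 3 * t)) := by field_simp
    _ ≤ Y * S / 4 * (1 / b + 6 * t / b ^ 2) := by
        gcongr
        exact one_div_sub_three_mul_le hb ht htb
    _ = _ := by
        field_simp
        ring

lemma exists_eventually_log_fForm_fForm_le : ∃ C > 0, ∀ᶠ Y : ℝ in atTop, ∀ n : ℕ, n ≠ 0 →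
    Real.log n ≤ Y ^ 2 * logStepSqSum / 4 →
      Real.log (fForm (fForm n)) ≤ Y * logStepSqSum / (2 * Real.log Y) +
        C * (Y * Real.log (Real.log Y) / Real.log Y ^ 2) := by
  obtain ⟨C, hC, hupper⟩ := exists_log_fForm_fForm_le
  have hS := logStepSqSum_pos
  refine ⟨3 + 3 / 2 * logStepSqSum + C, by positivity, ?_⟩
  filter_upwards [eventually_gt_atTop 1, tendsto_log_log.eventually_ge_atTop 1,
    Real.tendsto_log_atTop.eventually_ge_atTop (Real.log (logStepSqSum / 4 + 1)),
    tendsto_log_log_div_log.eventually_le_const (by norm_num : (0 : ℝ) < 1 / 6)]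
    with Y hY hloglog hSY hδ n hn hlogn
  have hb := Real.log_pos hY
  rw [div_le_iff₀ hb] at hδ
  have hlogP : Real.log (Y / Real.log Y ^ 3) = Real.log Y - 3 * Real.log (Real.log Y) := by
    rw [Real.log_div (by positivity) (by positivity), Real.log_pow, Nat.cast_ofNat]
  have hP : 1 < Y / Real.log Y ^ 3 :=
    (Real.log_pos_iff (by positivity)).1 (by rw [hlogP]; linarith)
  have hmain := hupper n Y (Y / Real.log Y ^ 3) hn hY hP
  rw [hlogP] at hmain
  have hlarge := one_div_mul_div_log_sub_le (zero_lt_one.trans hY) hS.le hlogn hb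
    (zero_le_one.trans hloglog) (by linarith)
  have hlogn_add := log_add_one_le_three_mul_log hS (Real.log_natCast_nonneg n) hlogn hY.le hSY
  set b := Real.log Y
  have hone : Y / b ^ 2 ≤ Y * Real.log b / b ^ 2 := by
    gcongr
    exact le_mul_of_one_le_right (by positivity) hloglog
  have hsmall : Y / b ^ 3 * Real.log (Real.log n + 1) ≤ 3 * (Y * Real.log b / b ^ 2) := by
    calc Y / b ^ 3 * Real.log (Real.log n + 1) ≤ Y / b ^ 3 * (3 * b) := by gcongr
      _ = 3 * (Y / b ^ 2) := by field_simp
      _ ≤ _ := by gcongr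
  calc Real.log (fForm (fForm n))
      ≤ 3 * (Y * Real.log b / b ^ 2) +
          (Y * logStepSqSum / (4 * b) + 3 / 2 * logStepSqSum * (Y * Real.log b / b ^ 2)) +
          (Y * logStepSqSum / (4 * b) + C * (Y * Real.log b / b ^ 2)) :=
        hmain.trans (by gcongr)
    _ = _ := by
        field_simp
        ring

lemma log_add_three_mul_log_log_mul_le {δ : ℝ} (hC : 0 ≤ C) (hS : 0 < S) (hd : 0 < d) (hδ₀ : 0 ≤ δ)
    (hδ₁ : δ ≤ 1) (hlog : Real.log d / d ≤ 2 * δ) (hone : 1 / d ≤ 2 * δ) :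
    (d + 3 * Real.log d) * (y ^ 2 * S / (4 * d) + C * (y ^ 2 / d ^ 2)) ≤
      y ^ 2 * S / 4 * (1 + (6 + 7 * (8 * C / S)) * δ) := by
  calc (d + 3 * Real.log d) * (y ^ 2 * S / (4 * d) + C * (y ^ 2 / d ^ 2))
      = y ^ 2 * S / 4 * ((1 + 3 * (Real.log d / d)) * (1 + 4 * C / S * (1 / d))) := by
        field_simp
    _ ≤ y ^ 2 * S / 4 * ((1 + 3 * (2 * δ)) * (1 + 4 * C / S * (2 * δ))) := by gcongr
    _ = y ^ 2 * S / 4 * (1 + 6 * δ + 8 * C / S * δ + 6 * (8 * C / S) * δ * δ) := by ring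
    _ ≤ y ^ 2 * S / 4 * (1 + 6 * δ + 8 * C / S * δ + 6 * (8 * C / S) * δ * 1) := by gcongr
    _ = _ := by ring

lemma half_log_le_log_of_half_le (hY : 0 < Y) (hlog : 2 ≤ Real.log Y) (hy : Y / 2 ≤ y) :
    Real.log Y / 2 ≤ Real.log y := by
  have h := Real.log_le_log (by positivity) hy
  rw [Real.log_div hY.ne' two_ne_zero] at h
  linarith [Real.log_two_lt_d9]

lemma sub_mul_one_add_le_one {a : ℝ} (ha : a ≤ 1 / 2) : (1 - a) ^ 2 * (1 + 2 * a) ≤ 1 := by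
  nlinarith [sq_nonneg a, mul_nonneg (sq_nonneg a) (sub_nonneg.2 ha)]

lemma main_sub_le_div_log {κ : ℝ} (hS : 0 ≤ S) (hy₀ : 0 ≤ y) (hlogY : 0 < Real.log Y)
    (hlogy : 0 < Real.log y) (hlog_le : Real.log y ≤ Real.log Y)
    (hy : y = Y * (1 - κ * (Real.log (Real.log Y) / Real.log Y))) :
    Y * S / (2 * Real.log Y) - κ * S / 2 * (Y * Real.log (Real.log Y) / Real.log Y ^ 2) ≤
      y * S / (2 * Real.log y) := by
  calc _ = y * S / (2 * Real.log Y) := by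
        rw [hy]
        field_simp
    _ ≤ _ := by gcongr

lemma div_log_sq_le (hY : 0 ≤ Y) (hyY : y ≤ Y) (hlogY : 0 < Real.log Y)
    (hloglog : 1 ≤ Real.log (Real.log Y)) (hhalf : Real.log Y / 2 ≤ Real.log y) :
    y / Real.log y ^ 2 ≤ 4 * (Y * Real.log (Real.log Y) / Real.log Y ^ 2) := by
  calc y / Real.log y ^ 2 ≤ Y / (Real.log Y / 2) ^ 2 := by gcongr
    _ = 4 * (Y * 1 / Real.log Y ^ 2) := by
        field_simp
        ring
    _ ≤ _ := by gcongr

lemma tendsto_mul_one_sub_log_log_div_log (κ : ℝ) :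
    Tendsto (fun Y : ℝ ↦ Y * (1 - κ * (Real.log (Real.log Y) / Real.log Y))) atTop atTop := by
  have hfactor : Tendsto (fun Y : ℝ ↦ 1 - κ * (Real.log (Real.log Y) / Real.log Y)) atTop
      (nhds 1) := by
    simpa using (tendsto_log_log_div_log.const_mul κ).const_sub 1
  exact tendsto_id.atTop_mul_pos one_pos hfactor

lemma log_add_three_mul_log_log_mul_le_sq {κ : ℝ} (hC : 0 ≤ C) (hS : 0 < S) (hY : 0 < Y)
    (hlogY : 2 ≤ Real.log Y) (hloglog : 1 ≤ Real.log (Real.log Y))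
    (hδ₁ : Real.log (Real.log Y) / Real.log Y ≤ 1)
    (ha : κ * (Real.log (Real.log Y) / Real.log Y) ≤ 1 / 2) (hκ : 2 * κ = 6 + 7 * (8 * C / S))
    (hy : y = Y * (1 - κ * (Real.log (Real.log Y) / Real.log Y)))
    (hhalf : Real.log Y / 2 ≤ Real.log y) (hlog_le : Real.log y ≤ Real.log Y) :
    (Real.log y + 3 * Real.log (Real.log y)) *
        (y ^ 2 * S / (4 * Real.log y) + C * (y ^ 2 / Real.log y ^ 2)) ≤ Y ^ 2 * S / 4 := by
  set b := Real.log Y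
  set d := Real.log y
  have hb : 0 < b := by linarith
  have hd : 0 < d := by linarith
  have hlog : Real.log d / d ≤ 2 * (Real.log b / b) := by
    calc Real.log d / d ≤ Real.log b / (b / 2) := by gcongr
      _ = 2 * (Real.log b / b) := by field_simp
  have hone : 1 / d ≤ 2 * (Real.log b / b) := by
    calc 1 / d ≤ Real.log b / (b / 2) := by gcongr
      _ = 2 * (Real.log b / b) := by field_simp
  calc _ ≤ y ^ 2 * S / 4 * (1 + (6 + 7 * (8 * C / S)) * (Real.log b / b)) :=
        log_add_three_mul_log_log_mul_le hC hS hd (div_nonneg (by linarith) hb.le) hδ₁ hlog hone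
    _ = Y ^ 2 * S / 4 * ((1 - κ * (Real.log b / b)) ^ 2 * (1 + 2 * (κ * (Real.log b / b)))) := by
        rw [hy, ← hκ]
        ring
    _ ≤ Y ^ 2 * S / 4 * 1 := by
        gcongr
        exact sub_mul_one_add_le_one ha
    _ = Y ^ 2 * S / 4 := mul_one _

lemma exists_eventually_le_log_fForm_fForm_scaled : ∃ C > 0, ∀ᶠ Y : ℝ in atTop, ∃ n : ℕ, n ≠ 0 ∧
    Real.log n ≤ Y ^ 2 * logStepSqSum / 4 ∧
      Y * logStepSqSum / (2 * Real.log Y) -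
        C * (Y * Real.log (Real.log Y) / Real.log Y ^ 2) ≤ Real.log (fForm (fForm n)) := by
  obtain ⟨C, hC, hlower⟩ := exists_eventually_le_log_fForm_fForm
  have hS := logStepSqSum_pos
  obtain ⟨κ, hκ⟩ : ∃ κ : ℝ, 2 * κ = 6 + 7 * (8 * C / logStepSqSum) :=
    ⟨_, mul_div_cancel₀ _ two_ne_zero⟩
  have hκ₀ : 0 < κ := by
    have : 0 < 8 * C / logStepSqSum := by positivity
    linarith
  have ha_lim : Tendsto (fun Y : ℝ ↦ κ * (Real.log (Real.log Y) / Real.log Y)) atTop (nhds 0) := by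
    simpa using tendsto_log_log_div_log.const_mul κ
  refine ⟨κ * logStepSqSum / 2 + 4 * C, by positivity, ?_⟩
  filter_upwards [eventually_gt_atTop 0, Real.tendsto_log_atTop.eventually_ge_atTop 2,
    tendsto_log_log.eventually_ge_atTop 1, tendsto_log_log_div_log.eventually_le_const one_pos,
    ha_lim.eventually_le_const one_half_pos,
    (tendsto_mul_one_sub_log_log_div_log κ).eventually hlower]
    with Y hY hlogY hloglog hδ₁ ha ⟨n, hn, hlogn, hvalue⟩
  have ha₀ : 0 ≤ κ * (Real.log (Real.log Y) / Real.log Y) := by positivity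
  obtain ⟨y, hy⟩ : ∃ y, y = Y * (1 - κ * (Real.log (Real.log Y) / Real.log Y)) := ⟨_, rfl⟩
  rw [← hy] at hlogn hvalue
  have hy_half : Y / 2 ≤ y := by rw [hy]; nlinarith
  have hyY : y ≤ Y := by rw [hy]; nlinarith
  have hhalf := half_log_le_log_of_half_le hY hlogY hy_half
  have hlog_le : Real.log y ≤ Real.log Y := Real.log_le_log (by linarith) hyY
  refine ⟨n, hn, hlogn.trans ?_, le_trans ?_ hvalue⟩
  · exact log_add_three_mul_log_log_mul_le_sq hC.le hS hY hlogY hloglog hδ₁ ha hκ hy hhalf hlog_le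
  · have hmain := main_sub_le_div_log hS.le (by linarith) (by linarith) (by linarith) hlog_le hy
    have herror := mul_le_mul_of_nonneg_left
      (div_log_sq_le hY.le hyY (by linarith) hloglog hhalf) hC.le
    linarith

end Optimization

section Scale

/-- The parameter `Y` of the optimization for integers `n` with `log n ≤ X`: the solution of
`Y² · logStepSqSum / 4 = X`. -/
noncomputable def scale (X : ℝ) : ℝ := 2 / √logStepSqSum * √X

/-- The quantity `(√X / log X) · (log₂ X / log X)`, which for `X = log x` is the order of magnitude
of the error in the theorem. -/
noncomputable def errorTerm (X : ℝ) : ℝ := √X / Real.log X * (Real.log (Real.log X) / Real.log X)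

variable {X : ℝ}

lemma sqrt_logStepSqSum_pos : 0 < √logStepSqSum := Real.sqrt_pos.2 logStepSqSum_pos

lemma scale_sq_mul (hX : 0 ≤ X) : scale X ^ 2 * logStepSqSum / 4 = X := by
  have hS := logStepSqSum_pos
  rw [scale, mul_pow, div_pow, Real.sq_sqrt hS.le, Real.sq_sqrt hX]
  field_simp
  ring

lemma tendsto_scale : Tendsto scale atTop atTop :=
  Real.tendsto_sqrt_atTop.const_mul_atTop (div_pos two_pos sqrt_logStepSqSum_pos)

lemma log_scale (hX : 0 < X) :
    Real.log (scale X) = Real.log (2 / √logStepSqSum) + Real.log X / 2 := by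
  have hr := sqrt_logStepSqSum_pos
  rw [scale, Real.log_mul (by positivity) (Real.sqrt_pos.2 hX).ne', Real.log_sqrt hX.le]

lemma eventually_log_scale_mem_Icc :
    ∀ᶠ X : ℝ in atTop, Real.log (scale X) ∈ Set.Icc (Real.log X / 4) (Real.log X) := by
  filter_upwards [eventually_gt_atTop 0,
    Real.tendsto_log_atTop.eventually_ge_atTop (4 * |Real.log (2 / √logStepSqSum)|)] with X hX hlog
  rw [log_scale hX]
  have habs := abs_nonneg (Real.log (2 / √logStepSqSum))
  constructor <;>
    linarith [neg_abs_le (Real.log (2 / √logStepSqSum)), le_abs_self (Real.log (2 / √logStepSqSum))]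

lemma scale_mul_div_log_sub (hX : 0 < X) (hlogX : Real.log X ≠ 0)
    (hlog_scale : Real.log (scale X) ≠ 0) :
    scale X * logStepSqSum / (2 * Real.log (scale X)) -
        √X / Real.log X * (2 * √logStepSqSum) =
      -(2 * Real.log (2 / √logStepSqSum) * √logStepSqSum) * √X /
        (Real.log (scale X) * Real.log X) := by
  have hr := sqrt_logStepSqSum_pos
  have hc : Real.log (2 / √logStepSqSum) = Real.log (scale X) - Real.log X / 2 := by
    rw [log_scale hX]
    ring
  have hscale : scale X * logStepSqSum = 2 * √logStepSqSum * √X := by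
    rw [scale]
    nth_rewrite 2 [← Real.mul_self_sqrt logStepSqSum_pos.le]
    field_simp
  rw [hc, hscale]
  field_simp
  ring

lemma exists_eventually_abs_main_term_sub_le : ∃ C > 0, ∀ᶠ X : ℝ in atTop,
    |scale X * logStepSqSum / (2 * Real.log (scale X)) - √X / Real.log X * (cBEFS / √2)| ≤
      C * errorTerm X := by
  set c := |2 * Real.log (2 / √logStepSqSum) * √logStepSqSum|
  refine ⟨4 * c + 1, by positivity, ?_⟩
  filter_upwards [eventually_gt_atTop 1, tendsto_log_log.eventually_ge_atTop 1,
    eventually_log_scale_mem_Icc] with X hX hloglog hscale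
  have hlogX := Real.log_pos hX
  have hlog_scale : 0 < Real.log (scale X) := by linarith [hscale.1]
  rw [cBEFS_div_sqrt_two,
    scale_mul_div_log_sub (zero_lt_one.trans hX) hlogX.ne' hlog_scale.ne', abs_div, abs_mul,
    abs_neg, abs_of_nonneg (Real.sqrt_nonneg X), abs_of_pos (mul_pos hlog_scale hlogX)]
  calc c * √X / (Real.log (scale X) * Real.log X)
      ≤ c * √X / (Real.log X / 4 * Real.log X) := by
        gcongr
        exact hscale.1
    _ = 4 * c * (√X / Real.log X * (1 / Real.log X)) := by field_simp
    _ ≤ (4 * c + 1) * (√X / Real.log X * (Real.log (Real.log X) / Real.log X)) := by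
        gcongr
        linarith

lemma exists_eventually_error_term_le : ∃ C > 0, ∀ᶠ X : ℝ in atTop,
    scale X * Real.log (Real.log (scale X)) / Real.log (scale X) ^ 2 ≤
      C * errorTerm X := by
  have hr := sqrt_logStepSqSum_pos
  refine ⟨32 / √logStepSqSum, by positivity, ?_⟩
  filter_upwards [eventually_gt_atTop 1, tendsto_log_log.eventually_ge_atTop 0,
    eventually_log_scale_mem_Icc] with X hX hloglog hscale
  have hlogX := Real.log_pos hX
  have hlog_scale : 0 < Real.log (scale X) := by linarith [hscale.1]
  have hscale_pos : 0 < scale X := by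
    unfold scale
    positivity
  calc scale X * Real.log (Real.log (scale X)) / Real.log (scale X) ^ 2
      ≤ scale X * Real.log (Real.log X) / (Real.log X / 4) ^ 2 := by
        gcongr scale X * Real.log ?_ / ?_ ^ 2
        exacts [hscale.2, hscale.1]
    _ = _ := by
        rw [scale, errorTerm]
        field_simp
        ring

lemma exists_eventually_forall_log_fForm_fForm_le : ∃ C > 0, ∀ᶠ X : ℝ in atTop, ∀ n : ℕ, n ≠ 0 →
    Real.log n ≤ X →
      Real.log (fForm (fForm n)) ≤ √X / Real.log X * (cBEFS / √2) + C * errorTerm X := by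
  obtain ⟨C, hC, hupper⟩ := exists_eventually_log_fForm_fForm_le
  obtain ⟨M, hM, hmain⟩ := exists_eventually_abs_main_term_sub_le
  obtain ⟨E, hE, herror⟩ := exists_eventually_error_term_le
  refine ⟨M + C * E, by positivity, ?_⟩
  filter_upwards [eventually_ge_atTop 0, tendsto_scale.eventually hupper, hmain, herror]
    with X hX hupper hmain herror n hn hlogn
  have hvalue := hupper n hn (by rwa [scale_sq_mul hX])
  linarith [(abs_le.1 hmain).2, mul_le_mul_of_nonneg_left herror hC.le]

lemma exists_eventually_exists_le_log_fForm_fForm : ∃ C > 0, ∀ᶠ X : ℝ in atTop, ∃ n : ℕ, n ≠ 0 ∧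
    Real.log n ≤ X ∧
      √X / Real.log X * (cBEFS / √2) - C * errorTerm X ≤ Real.log (fForm (fForm n)) := by
  obtain ⟨C, hC, hlower⟩ := exists_eventually_le_log_fForm_fForm_scaled
  obtain ⟨M, hM, hmain⟩ := exists_eventually_abs_main_term_sub_le
  obtain ⟨E, hE, herror⟩ := exists_eventually_error_term_le
  refine ⟨M + C * E, by positivity, ?_⟩
  filter_upwards [eventually_ge_atTop 0, tendsto_scale.eventually hlower, hmain, herror]
    with X hX ⟨n, hn, hlogn, hvalue⟩ hmain herror
  refine ⟨n, hn, by rwa [scale_sq_mul hX] at hlogn, ?_⟩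
  linarith [(abs_le.1 hmain).1, mul_le_mul_of_nonneg_left herror hC.le]

lemma eventually_errorTerm_nonneg : ∀ᶠ X : ℝ in atTop, 0 ≤ errorTerm X := by
  filter_upwards [eventually_ge_atTop 1, tendsto_log_log.eventually_ge_atTop 0] with X hX hloglog
  have hlogX := Real.log_nonneg hX
  exact mul_nonneg (div_nonneg (Real.sqrt_nonneg X) hlogX) (div_nonneg hloglog hlogX)

end Scale

section Maximum

lemma abs_biSup_sub_le {ι : Type*} {s : Finset ι} {f : ι → ℝ} {a ε : ℝ} (hf : ∀ n, 0 ≤ f n)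
    (hupper : ∀ n ∈ s, f n ≤ a + ε) (hlower : ∃ n ∈ s, a - ε ≤ f n) :
    |(⨆ n ∈ s, f n) - a| ≤ ε := by
  obtain ⟨m, hm, hlower⟩ := hlower
  have hbound_nonneg : 0 ≤ a + ε := (hf m).trans (hupper m hm)
  have hinner (n : ι) : ⨆ _ : n ∈ s, f n ≤ a + ε :=
    Real.iSup_le (fun hn ↦ hupper n hn) hbound_nonneg
  have hle : ⨆ n ∈ s, f n ≤ a + ε := Real.iSup_le hinner hbound_nonneg
  have hge : f m ≤ ⨆ n ∈ s, f n := by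
    simpa only [ciSup_pos hm] using
      le_ciSup (f := fun n ↦ ⨆ _ : n ∈ s, f n) ⟨a + ε, Set.forall_mem_range.2 hinner⟩ m
  rw [abs_le]
  constructor <;> linarith

lemma abs_biSup_Icc_sub_le {f : ℕ → ℝ} {a ε : ℝ} {x : ℕ} (hx : x ≠ 0) (hf : ∀ n, 0 ≤ f n)
    (hupper : ∀ n : ℕ, n ≠ 0 → Real.log n ≤ Real.log x → f n ≤ a + ε)
    (hlower : ∃ n : ℕ, n ≠ 0 ∧ Real.log n ≤ Real.log x ∧ a - ε ≤ f n) :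
    |(⨆ n ∈ Finset.Icc 1 x, f n) - a| ≤ ε := by
  have hmem (n : ℕ) : n ∈ Finset.Icc 1 x ↔ n ≠ 0 ∧ Real.log n ≤ Real.log x := by
    rw [Finset.mem_Icc, Nat.one_le_iff_ne_zero]
    refine and_congr_right fun hn ↦ ?_
    rw [Real.log_le_log_iff (by positivity) (by positivity), Nat.cast_le]
  obtain ⟨m, hm, hlogm, hvalue⟩ := hlower
  exact abs_biSup_sub_le hf (fun n hn ↦ hupper n ((hmem n).1 hn).1 ((hmem n).1 hn).2)
    ⟨m, (hmem m).2 ⟨hm, hlogm⟩, hvalue⟩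

end Maximum

end IteratedForm

/-- `max_{n ≤ x} log f(f(n)) = (√(log x)/log₂ x)·(c/√2 + O(log₃ x/log₂ x))` as `x → ∞`,
for `f(n) = (1/2)·#{(x,y) ∈ ℤ² : x² + 2y² = n}` (and `f(0) = 1`). -/
theorem maxOrder_iterated_form_x2_plus_2y2 :
    ∃ C : ℝ, 0 < C ∧ ∀ᶠ x : ℕ in atTop,
      |(⨆ n ∈ Finset.Icc 1 x, Real.log (fForm (fForm n))) -
          Real.sqrt (Real.log x) / Real.log (Real.log x) * (cBEFS / Real.sqrt 2)| ≤
        C * (Real.sqrt (Real.log x) / Real.log (Real.log x)) *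
          (Real.log (Real.log (Real.log x)) / Real.log (Real.log x)) := by
  obtain ⟨A, hA, hupper⟩ := IteratedForm.exists_eventually_forall_log_fForm_fForm_le
  obtain ⟨B, hB, hlower⟩ := IteratedForm.exists_eventually_exists_le_log_fForm_fForm
  have hlog : Tendsto (fun x : ℕ ↦ Real.log x) atTop atTop :=
    Real.tendsto_log_atTop.comp tendsto_natCast_atTop_atTop
  refine ⟨A + B, add_pos hA hB, ?_⟩
  filter_upwards [eventually_ne_atTop 0, hlog.eventually hupper, hlog.eventually hlower,
    hlog.eventually IteratedForm.eventually_errorTerm_nonneg]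
    with x hx hupper ⟨m, hm, hlogm, hvalue⟩ herror
  rw [mul_assoc, ← IteratedForm.errorTerm]
  have hA_error := mul_nonneg hA.le herror
  have hB_error := mul_nonneg hB.le herror
  refine IteratedForm.abs_biSup_Icc_sub_le hx (fun n ↦ Real.log_natCast_nonneg _)
    (fun n hn hlogn ↦ ?_) ⟨m, hm, hlogm, ?_⟩
  · linarith [hupper n hn hlogn]
  · linarith
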